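/- arXiv:1810.01303 — 3 statements merged into one kernel-verified Lean document; each statement's English description precedes it below -/
import Mathlib

section
/- There exist constants C > 0 and K > 0 depending only on k such that the following holds for every prime power q ≥ 2, every subset S of {1,…,k} with S and S^c nonempty, and every d ∈ ℤ^k for which there exists σ ∈ S_k with σ({1,…,|S|}) = S, d_{σ(i)} ≥ i−1 for 1 ≤ i ≤ |S|, and d_{σ(i)} ≤ i−1 for |S| < i ≤ k: |c_S(d)| ≤ C · (2 + k(k−1)/2 + Σ_{i∈S} d_i − Σ_{i∉S} d_i)^K · min( q^{(−max_{i∈S} d_i + min_{i∉S} d_i − 1)/2}, q^{(−Σ_{i∈S} d_i + binom(|S|,2))/2}, q^{(Σ_{i∉S} d_i + binom(|S|,2) − binom(k,2))/2}, q^{−|Σ_{i∈S} d_i + Σ_{i∉S} d_i − binom(k,2)|/2} ), where binom(a,2) = a(a−1)/2. -/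
open Polynomial

noncomputable section

/-- `N_S(d)`: the number of `k`-tuples of monic polynomials over `F_q` with
`deg f_i = d_i` for `i ∈ S`, `deg f_i = -d_i` for `i ∉ S`, such that
`T^a ∏_{i∈S} f_i = T^b ∏_{i∉S} f_i` for some naturals `a, b`. -/
def NS (F : Type) [Field F] {k : ℕ} (S : Finset (Fin k)) (d : Fin k → ℤ) : ℕ :=
  Set.ncard {f : Fin k → Polynomial F |
    (∀ i, (f i).Monic) ∧
    (∀ i ∈ S, ((f i).natDegree : ℤ) = d i) ∧
    (∀ i ∉ S, ((f i).natDegree : ℤ) = -d i) ∧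
    ∃ a b : ℕ, Polynomial.X ^ a * ∏ i ∈ S, f i = Polynomial.X ^ b * ∏ i ∈ Sᶜ, f i}

/-- `w(d) = q^{-(∑_{i∈S} d_i - ∑_{i∉S} d_i)/2} N_S(d)`, the coefficient of
`∏ q^{α_i d_i}` in the diagonal sum. -/
def wS (F : Type) [Field F] [Fintype F] {k : ℕ} (S : Finset (Fin k)) (d : Fin k → ℤ) : ℝ :=
  (Fintype.card F : ℝ) ^ ((-((((∑ i ∈ S, d i) - ∑ i ∈ Sᶜ, d i : ℤ)) : ℝ)) / 2) * NS F S d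

/-- `c_S(d)`: the coefficient of `∏ q^{α_i d_i}` in `M_S`, i.e. in the Vandermonde
determinant times the diagonal sum. -/
def cS (F : Type) [Field F] [Fintype F] {k : ℕ} (S : Finset (Fin k)) (d : Fin k → ℤ) : ℝ :=
  (-1 : ℝ) ^ (k * (k - 1) / 2) *
    ∑ σ : Equiv.Perm (Fin k), ((Equiv.Perm.sign σ : ℤ) : ℝ) *
      wS F S (fun i => d i - ((σ i : ℕ) : ℤ))

/-- `v_J` for `J ⊆ S × Sᶜ`. -/
def vJ {k : ℕ} (S : Finset (Fin k)) (J : Finset (Fin k × Fin k)) (i : Fin k) : ℤ :=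
  if i ∈ S then ((J.filter fun p => p.1 = i).card : ℤ)
  else -(((J.filter fun p => p.2 = i).card : ℤ))

/-- `b(d) = ∑_{J ⊆ S×Sᶜ} (-1)^{|J|} w(d - v_J)`, the coefficient of `∏ q^{α_i d_i}`
in `∏_{i∈S, i'∈Sᶜ} (1 - q^{α_i - α_{i'}})` times the diagonal sum. -/
def bS (F : Type) [Field F] [Fintype F] {k : ℕ} (S : Finset (Fin k)) (d : Fin k → ℤ) : ℝ :=
  ∑ J ∈ (S ×ˢ Sᶜ).powerset, (-1 : ℝ) ^ J.card * wS F S (fun i => d i - vJ S J i)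

/-! The Vandermonde determinant in the `x i` is the product of the factors `1 - x i / x j`
with `i ∈ S`, `j ∉ S` and of an alternating sum of monomials `x ^ σ`, so `cS d` is an alternating
sum of coefficients `bS (d - σ)` of the diagonal sum multiplied by these factors. The diagonal sum
is an Euler product over the monic primes of `F_q[T]`, and `∏ π, (1 - t ^ deg π) = 1 - q * t`, so
multiplying it by such a factor amounts to multiplying the Euler factor at every prime by a similar
binomial. Away from `T` the resulting Euler factors have no low-degree terms: each of their
nonconstant monomials has total weight at least two on `S`, on `Sᶜ`, and on the complement of any
pair `{i, j}` with `i ∈ S`, `j ∉ S`. If `Q` is one of these sets, the distinct primes other than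
`T` occurring in a term of degree `a` therefore have total degree at most `(∑ i ∈ Q, a i) / 2`,
so that up to polynomial factors there are at most `q ^ ((∑ i ∈ Q, a i) / 2)` terms. Against the
normalization `q ^ (-(∑ i, a i) / 2)` this leaves `q ^ (-(∑ i ∈ Qᶜ, a i) / 2)`, and the choices
of `Q` give the terms of the minimum. -/

section

open Finset

section LocalFactor

variable {ι : Type*} [DecidableEq ι]

/-- The degree sequence of a finite set of directed edges, both endpoints of an edge being
counted. -/
def edgeDegree (H : Finset (ι × ι)) : ι → ℕ :=
  ∑ p ∈ H, (Pi.single p.1 1 + Pi.single p.2 1)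

theorem edgeDegree_apply (H : Finset (ι × ι)) (i : ι) :
    edgeDegree H i = #{p ∈ H | p.1 = i} + #{p ∈ H | p.2 = i} := by
  simp only [edgeDegree, sum_add_distrib, Pi.add_apply, Finset.sum_apply, Pi.single_apply,
    sum_boole, Nat.cast_id, eq_comm (a := i)]

theorem edgeDegree_empty : edgeDegree (∅ : Finset (ι × ι)) = 0 := sum_empty

theorem edgeDegree_insert {p : ι × ι} {H : Finset (ι × ι)} (hp : p ∉ H) :
    edgeDegree (insert p H) = edgeDegree {p} + edgeDegree H := by
  rw [edgeDegree, sum_insert hp, edgeDegree, sum_singleton, edgeDegree]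

theorem edgeDegree_mono {H H' : Finset (ι × ι)} (h : H ⊆ H') : edgeDegree H ≤ edgeDegree H' :=
  sum_le_sum_of_subset h

theorem edgeDegree_insert_apply_of_ne {p : ι × ι} {i : ι} (h₁ : i ≠ p.1) (h₂ : i ≠ p.2)
    (H : Finset (ι × ι)) : edgeDegree (insert p H) i = edgeDegree H i := by
  simp only [edgeDegree_apply, filter_insert, h₁.symm, h₂.symm, if_false]

theorem edgeDegree_image_swap (H : Finset (ι × ι)) :
    edgeDegree (H.image Prod.swap) = edgeDegree H := by
  simp only [edgeDegree, sum_image Prod.swap_injective.injOn, Prod.fst_swap, Prod.snd_swap,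
    add_comm]

theorem sum_edgeDegree (U : Finset ι) (H : Finset (ι × ι)) :
    ∑ i ∈ U, edgeDegree H i = #{p ∈ H | p.1 ∈ U} + #{p ∈ H | p.2 ∈ U} := by
  simp only [edgeDegree, Finset.sum_apply, Pi.add_apply, Pi.single_apply]
  rw [sum_comm]
  simp only [sum_add_distrib, sum_ite_eq', sum_boole, Nat.cast_id]

/-- The sets of edges from `E` in which every vertex `i` has degree at most `e i`. -/
def edgeSubsets (E : Finset (ι × ι)) (e : ι → ℕ) : Finset (Finset (ι × ι)) :=
  open Classical in {H ∈ E.powerset | edgeDegree H ≤ e}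

theorem mem_edgeSubsets {E H : Finset (ι × ι)} {e : ι → ℕ} :
    H ∈ edgeSubsets E e ↔ H ⊆ E ∧ edgeDegree H ≤ e := by
  simp only [edgeSubsets, mem_filter, mem_powerset]

/-- The signed count of `edgeSubsets E e`: the coefficient of `x ^ e` in
`∏ p ∈ E, (1 - x p.1 * x p.2) * ∏ i, (1 - x i)⁻¹`. -/
def localFactor (E : Finset (ι × ι)) (e : ι → ℕ) : ℤ :=
  ∑ H ∈ edgeSubsets E e, (-1) ^ #H

open Classical in
theorem localFactor_eq_sum_powerset (E : Finset (ι × ι)) (e : ι → ℕ) :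
    localFactor E e = ∑ H ∈ E.powerset, if edgeDegree H ≤ e then (-1) ^ #H else 0 := by
  rw [localFactor, edgeSubsets, sum_filter]

theorem localFactor_empty (e : ι → ℕ) : localFactor ∅ e = 1 := by
  classical
  simp [localFactor_eq_sum_powerset, edgeDegree_empty]

theorem abs_localFactor_le (E : Finset (ι × ι)) (e : ι → ℕ) :
    |localFactor E e| ≤ #(edgeSubsets E e) := by
  calc |localFactor E e| ≤ ∑ H ∈ edgeSubsets E e, |(-1 : ℤ) ^ #H| := abs_sum_le_sum_abs _ _
    _ = #(edgeSubsets E e) := by simp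

/-- The coefficients of `∑ e, w e * x ^ e` multiplied by `1 - x ^ δ`. -/
def backwardDiff (δ : ι → ℕ) (w : (ι → ℕ) → ℤ) (e : ι → ℕ) : ℤ :=
  open Classical in w e - if δ ≤ e then w (e - δ) else 0

theorem localFactor_insert {E : Finset (ι × ι)} {p : ι × ι} (hp : p ∉ E) :
    localFactor (insert p E) = backwardDiff (edgeDegree {p}) (localFactor E) := by
  classical
  funext e
  have hterm : ∀ H ∈ E.powerset,
      (if edgeDegree (insert p H) ≤ e then (-1 : ℤ) ^ #(insert p H) else 0) =
        -if edgeDegree {p} ≤ e then if edgeDegree H ≤ e - edgeDegree {p} then (-1) ^ #H else 0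
          else 0 := by
    intro H hH
    have hpH : p ∉ H := fun hmem => hp (mem_powerset.mp hH hmem)
    rw [edgeDegree_insert hpH, card_insert_of_notMem hpH, pow_succ, mul_neg_one]
    by_cases hpe : edgeDegree {p} ≤ e
    · simp only [le_tsub_iff_left hpe, hpe, if_true, neg_ite, neg_zero]
    · rw [if_neg hpe, if_neg fun h => hpe (le_of_add_le_left h), neg_zero]
  rw [localFactor_eq_sum_powerset, sum_powerset_insert hp, sum_congr rfl hterm, sum_neg_distrib,
    ← sub_eq_add_neg, backwardDiff, localFactor_eq_sum_powerset E e, localFactor_eq_sum_powerset E]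
  split_ifs
  · rfl
  · rw [sum_const_zero]

theorem localFactor_eq_zero_of_toggle {E : Finset (ι × ι)} {e : ι → ℕ} {p : ι × ι} (hp : p ∈ E)
    (h : ∀ H ⊆ E.erase p, edgeDegree H ≤ e → edgeDegree (insert p H) ≤ e) :
    localFactor E e = 0 := by
  classical
  rw [← insert_erase hp, localFactor_eq_sum_powerset, sum_powerset_insert (notMem_erase p E),
    ← sum_add_distrib]
  refine sum_eq_zero fun H hH => ?_
  have hHE := mem_powerset.mp hH
  have hpH : p ∉ H := fun hmem => notMem_erase p E (hHE hmem)
  have hiff : edgeDegree (insert p H) ≤ e ↔ edgeDegree H ≤ e :=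
    ⟨(edgeDegree_mono (subset_insert p H)).trans, h H hHE⟩
  rw [card_insert_of_notMem hpH, pow_succ]
  simp only [hiff]
  split_ifs <;> ring

theorem localFactor_image_swap (E : Finset (ι × ι)) (e : ι → ℕ) :
    localFactor (E.image Prod.swap) e = localFactor E e := by
  have hswap : ∀ H : Finset (ι × ι), (H.image Prod.swap).image Prod.swap = H := fun H => by
    rw [image_image, Prod.swap_swap_eq, image_id]
  refine sum_nbij' (image Prod.swap) (image Prod.swap) ?_ ?_ (fun H _ => hswap H)
    (fun H _ => hswap H) fun H _ => by rw [card_image_of_injective _ Prod.swap_injective]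
  · intro H hH
    obtain ⟨hHE, hdeg⟩ := mem_edgeSubsets.mp hH
    refine mem_edgeSubsets.mpr ⟨?_, (edgeDegree_image_swap H).trans_le hdeg⟩
    rw [← hswap E]
    exact image_subset_image hHE
  · intro H hH
    obtain ⟨hHE, hdeg⟩ := mem_edgeSubsets.mp hH
    exact mem_edgeSubsets.mpr ⟨image_subset_image hHE, (edgeDegree_image_swap H).trans_le hdeg⟩

end LocalFactor

section Balanced

variable {ι : Type*} [DecidableEq ι] [Fintype ι] {S : Finset ι}

/-- `e` has equal total weight on `S` and on its complement; the degree sequences of bipartite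
edge sets between `S` and `Sᶜ` are of this kind. -/
def IsBalanced (S : Finset ι) (e : ι → ℕ) : Prop :=
  ∑ i ∈ S, e i = ∑ i ∈ Sᶜ, e i

theorem isBalanced_compl {e : ι → ℕ} : IsBalanced Sᶜ e ↔ IsBalanced S e := by
  rw [IsBalanced, IsBalanced, compl_compl, eq_comm]

theorem isBalanced_add_right {e e' : ι → ℕ} (he : IsBalanced S e) :
    IsBalanced S (e' + e) ↔ IsBalanced S e' := by
  simp only [IsBalanced] at he
  simp only [IsBalanced, Pi.add_apply, sum_add_distrib, he, add_left_inj]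

theorem sum_edgeDegree_left {H : Finset (ι × ι)} (hH : H ⊆ S ×ˢ Sᶜ) :
    ∑ i ∈ S, edgeDegree H i = #H := by
  rw [sum_edgeDegree, filter_true_of_mem fun p hp => (mem_product.mp (hH hp)).1,
    filter_false_of_mem fun p hp => mem_compl.mp (mem_product.mp (hH hp)).2, card_empty, add_zero]

theorem sum_edgeDegree_right {H : Finset (ι × ι)} (hH : H ⊆ S ×ˢ Sᶜ) :
    ∑ i ∈ Sᶜ, edgeDegree H i = #H := by
  rw [sum_edgeDegree, filter_true_of_mem fun p hp => (mem_product.mp (hH hp)).2,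
    filter_false_of_mem fun p hp => notMem_compl.mpr (mem_product.mp (hH hp)).1, card_empty,
    zero_add]

theorem eq_empty_of_edgeDegree_le_zero {H : Finset (ι × ι)} (hH : H ⊆ S ×ˢ Sᶜ)
    (h : edgeDegree H ≤ 0) : H = ∅ :=
  card_eq_zero.mp ((sum_edgeDegree_left hH).symm.trans
    (sum_eq_zero fun i _ => Nat.le_zero.mp (h i)))

theorem isBalanced_edgeDegree {H : Finset (ι × ι)} (hH : H ⊆ S ×ˢ Sᶜ) :
    IsBalanced S (edgeDegree H) :=
  (sum_edgeDegree_left hH).trans (sum_edgeDegree_right hH).symm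

theorem edgeDegree_apply_left {H : Finset (ι × ι)} (hH : H ⊆ S ×ˢ Sᶜ) {i : ι} (hi : i ∈ S) :
    edgeDegree H i = #{p ∈ H | p.1 = i} := by
  rw [edgeDegree_apply, filter_false_of_mem (p := fun p : ι × ι => p.2 = i), card_empty, add_zero]
  rintro p hp rfl
  exact mem_compl.mp (mem_product.mp (hH hp)).2 hi

theorem edgeDegree_apply_right {H : Finset (ι × ι)} (hH : H ⊆ S ×ˢ Sᶜ) {j : ι} (hj : j ∉ S) :
    edgeDegree H j = #{p ∈ H | p.2 = j} := by
  rw [edgeDegree_apply, filter_false_of_mem (p := fun p : ι × ι => p.1 = j), card_empty, zero_add]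
  rintro p hp rfl
  exact hj (mem_product.mp (hH hp)).1

theorem edgeDegree_le_card_compl {H : Finset (ι × ι)} (hH : H ⊆ S ×ˢ Sᶜ) {i : ι} (hi : i ∈ S) :
    edgeDegree H i ≤ #Sᶜ := by
  rw [edgeDegree_apply_left hH hi]
  refine card_le_card_of_injOn Prod.snd (fun p hp => ?_) fun p hp p' hp' h => ?_
  · exact (mem_product.mp (hH (mem_filter.mp hp).1)).2
  · exact Prod.ext ((mem_filter.mp hp).2.trans (mem_filter.mp hp').2.symm) h

theorem edgeDegree_le_card {H : Finset (ι × ι)} (hH : H ⊆ S ×ˢ Sᶜ) {j : ι} (hj : j ∉ S) :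
    edgeDegree H j ≤ #S := by
  rw [edgeDegree_apply_right hH hj]
  refine card_le_card_of_injOn Prod.fst (fun p hp => ?_) fun p hp p' hp' h => ?_
  · exact (mem_product.mp (hH (mem_filter.mp hp).1)).1
  · exact Prod.ext h ((mem_filter.mp hp).2.trans (mem_filter.mp hp').2.symm)

theorem sum_le_of_localFactor_ne_zero {e : ι → ℕ} (he : IsBalanced S e)
    (hne : localFactor (S ×ˢ Sᶜ) e ≠ 0) : ∑ i ∈ S, e i ≤ #S * #Sᶜ := by
  by_contra! hlt
  obtain ⟨i₀, hi₀, hei⟩ : ∃ i ∈ S, #Sᶜ < e i := exists_lt_of_sum_lt (by simpa using hlt)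
  obtain ⟨j₀, hj₀, hej⟩ : ∃ j ∈ Sᶜ, #S < e j :=
    exists_lt_of_sum_lt (by rw [← he]; simpa [mul_comm] using hlt)
  refine hne (localFactor_eq_zero_of_toggle (mk_mem_product hi₀ hj₀) fun H hHE hHe i => ?_)
  have hinsert : insert (i₀, j₀) H ⊆ S ×ˢ Sᶜ :=
    insert_subset (mk_mem_product hi₀ hj₀) (hHE.trans (erase_subset _ _))
  rcases eq_or_ne i i₀ with rfl | hii₀
  · exact (edgeDegree_le_card_compl hinsert hi₀).trans hei.le
  rcases eq_or_ne i j₀ with rfl | hij₀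
  · exact (edgeDegree_le_card hinsert (mem_compl.mp hj₀)).trans hej.le
  · exact (edgeDegree_insert_apply_of_ne hii₀ hij₀ H).trans_le (hHe i)

theorem edgeDegree_insert_le_of_forall_fst_eq {e : ι → ℕ} (he : IsBalanced S e) {i₀ j₀ : ι}
    (hi₀ : i₀ ∈ S) (hj₀ : j₀ ∈ Sᶜ) (hei : ∑ i ∈ S, e i ≤ e i₀) (hej : e j₀ ≠ 0)
    {H : Finset (ι × ι)} (hH : H ⊆ S ×ˢ Sᶜ) (hstart : ∀ p ∈ H, p.1 = i₀)
    (hHe : edgeDegree H ≤ e) : edgeDegree (insert (i₀, j₀) H) ≤ e := by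
  have hinsert : insert (i₀, j₀) H ⊆ S ×ˢ Sᶜ := insert_subset (mk_mem_product hi₀ hj₀) hH
  have hend : edgeDegree (insert (i₀, j₀) H) j₀ ≤ 1 := by
    rw [edgeDegree_apply_right hinsert (mem_compl.mp hj₀), ← card_singleton (i₀, j₀)]
    refine card_le_card fun p hp => ?_
    obtain ⟨hpH, rfl⟩ := mem_filter.mp hp
    rcases mem_insert.mp hpH with hp | hp
    · exact mem_singleton.mpr hp
    · exact mem_singleton.mpr (Prod.ext (hstart p hp) rfl)
  have hne : ∀ i, i ≠ i₀ → edgeDegree (insert (i₀, j₀) H) i ≤ e i := by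
    intro i hii₀
    rcases eq_or_ne i j₀ with rfl | hij₀
    · exact hend.trans (Nat.one_le_iff_ne_zero.mpr hej)
    · exact (edgeDegree_insert_apply_of_ne hii₀ hij₀ H).trans_le (hHe i)
  intro i
  rcases eq_or_ne i i₀ with rfl | hii₀
  · calc edgeDegree (insert (i, j₀) H) i ≤ ∑ l ∈ S, edgeDegree (insert (i, j₀) H) l :=
          single_le_sum (f := edgeDegree _) (fun _ _ => Nat.zero_le _) hi₀
      _ = ∑ j ∈ Sᶜ, edgeDegree (insert (i, j₀) H) j := isBalanced_edgeDegree hinsert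
      _ ≤ ∑ j ∈ Sᶜ, e j := sum_le_sum fun j hj => hne j (by rintro rfl; exact mem_compl.mp hj hi₀)
      _ ≤ e i := he.symm.trans_le hei
  · exact hne i hii₀

theorem IsBalanced.eq_zero {e : ι → ℕ} (he : IsBalanced S e) (h0 : ∑ i ∈ S, e i = 0) : e = 0 := by
  funext i
  by_cases hi : i ∈ S
  · exact sum_eq_zero_iff.mp h0 i hi
  · exact sum_eq_zero_iff.mp (he.symm.trans h0) i (mem_compl.mpr hi)

theorem le_of_localFactor_ne_zero {e : ι → ℕ} (he : IsBalanced S e)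
    (hne : localFactor (S ×ˢ Sᶜ) e ≠ 0) (i : ι) : e i ≤ #S * #Sᶜ := by
  have hsum := sum_le_of_localFactor_ne_zero he hne
  by_cases hi : i ∈ S
  · exact (single_le_sum (fun _ _ => Nat.zero_le _) hi).trans hsum
  · exact (single_le_sum (fun _ _ => Nat.zero_le _) (mem_compl.mpr hi)).trans
      (he.symm.trans_le hsum)

/-- If `e` lives on a single vertex `i₀` of `S`, all edges of an admissible set start at `i₀`, so
an edge `(i₀, j₀)` with `e j₀ ≠ 0` can be toggled freely. -/
theorem lt_sum_of_localFactor_ne_zero {e : ι → ℕ} (he : IsBalanced S e)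
    (hne : localFactor (S ×ˢ Sᶜ) e ≠ 0) (he0 : e ≠ 0) {i₀ : ι} (hi₀ : i₀ ∈ S) :
    e i₀ < ∑ i ∈ S, e i := by
  by_contra! hle
  have hrest : ∀ i ∈ S, i ≠ i₀ → e i = 0 := fun i hi hii₀ => by
    have hsplit := add_sum_erase S e hi₀
    exact sum_eq_zero_iff.mp (by omega) i (mem_erase.mpr ⟨hii₀, hi⟩)
  obtain ⟨j₀, hj₀, hej⟩ : ∃ j ∈ Sᶜ, e j ≠ 0 :=
    exists_ne_zero_of_sum_ne_zero fun h0 => he0 (he.eq_zero (he.trans h0))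
  refine hne (localFactor_eq_zero_of_toggle (mk_mem_product hi₀ hj₀) fun H hHE hHe => ?_)
  have hH : H ⊆ S ×ˢ Sᶜ := hHE.trans (erase_subset _ _)
  refine edgeDegree_insert_le_of_forall_fst_eq he hi₀ hj₀ hle hej hH (fun p hp => ?_) hHe
  by_contra hpi
  have hpS := (mem_product.mp (hH hp)).1
  have hdeg : edgeDegree H p.1 ≤ 0 := (hHe p.1).trans_eq (hrest p.1 hpS hpi)
  rw [edgeDegree_apply_left hH hpS, Nat.le_zero, card_eq_zero, filter_eq_empty_iff] at hdeg
  exact hdeg hp rfl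

theorem localFactor_compl (e : ι → ℕ) :
    localFactor (Sᶜ ×ˢ Sᶜᶜ) e = localFactor (S ×ˢ Sᶜ) e := by
  rw [← localFactor_image_swap (S ×ˢ Sᶜ), image_swap_product, compl_compl]

theorem lt_sum_compl_of_localFactor_ne_zero {e : ι → ℕ} (he : IsBalanced S e)
    (hne : localFactor (S ×ˢ Sᶜ) e ≠ 0) (he0 : e ≠ 0) {j₀ : ι} (hj₀ : j₀ ∈ Sᶜ) :
    e j₀ < ∑ j ∈ Sᶜ, e j :=
  lt_sum_of_localFactor_ne_zero (isBalanced_compl.mpr he) (by rwa [localFactor_compl]) he0 hj₀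

theorem two_le_sum_of_localFactor_ne_zero {e : ι → ℕ} (he : IsBalanced S e)
    (hne : localFactor (S ×ˢ Sᶜ) e ≠ 0) (he0 : e ≠ 0) : 2 ≤ ∑ i ∈ S, e i := by
  obtain ⟨i₀, hi₀, hei⟩ := exists_ne_zero_of_sum_ne_zero (mt he.eq_zero he0)
  have hlt := lt_sum_of_localFactor_ne_zero he hne he0 hi₀
  omega

/-- Every exponent vector contributing to the local factor at a prime has total weight at least
two on `Q`. This is what makes the sum of `deg π` over the primes `π` dividing a contributing
tuple at most half of the total degree on `Q`. -/
def HasDoubleWeight (S Q : Finset ι) : Prop :=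
  ∀ e : ι → ℕ, IsBalanced S e → localFactor (S ×ˢ Sᶜ) e ≠ 0 → e ≠ 0 → 2 ≤ ∑ i ∈ Q, e i

theorem hasDoubleWeight_left (S : Finset ι) : HasDoubleWeight S S :=
  fun _ => two_le_sum_of_localFactor_ne_zero

theorem hasDoubleWeight_right (S : Finset ι) : HasDoubleWeight S Sᶜ :=
  fun _ he hne he0 => (two_le_sum_of_localFactor_ne_zero he hne he0).trans_eq he

theorem hasDoubleWeight_compl_pair {i j : ι} (hi : i ∈ S) (hj : j ∈ Sᶜ) :
    HasDoubleWeight S {i, j}ᶜ := by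
  intro e he hne he0
  have hij : i ≠ j := fun h => mem_compl.mp hj (h ▸ hi)
  have htotal : ∑ i ∈ S, e i + ∑ i ∈ Sᶜ, e i = ∑ i, e i := sum_add_sum_compl S e
  have hpair : e i + e j + ∑ l ∈ {i, j}ᶜ, e l = ∑ i, e i := by
    rw [← sum_pair hij, sum_add_sum_compl]
  have hlt := lt_sum_of_localFactor_ne_zero he hne he0 hi
  have hlt' := lt_sum_compl_of_localFactor_ne_zero he hne he0 hj
  omega

/-- The Euler factors of the generating function of tuples that agree away from the prime `T`, after
multiplication by `1 - x p.1 * x p.2` for every edge `p` of `E`. -/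
def diagonalFactor {P : Type*} (S : Finset ι) (T : P) (E : Finset (ι × ι)) (π : P) (e : ι → ℕ) :
    ℤ :=
  open Classical in if π = T ∨ IsBalanced S e then localFactor E e else 0

theorem diagonalFactor_insert {P : Type*} (T : P) {E : Finset (ι × ι)} {p : ι × ι}
    (hpS : p ∈ S ×ˢ Sᶜ) (hp : p ∉ E) (π : P) :
    diagonalFactor S T (insert p E) π =
      backwardDiff (edgeDegree {p}) (diagonalFactor S T E π) := by
  classical
  funext e
  have hbalanced (h : edgeDegree {p} ≤ e) : IsBalanced S (e - edgeDegree {p}) ↔ IsBalanced S e := by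
    conv_rhs => rw [← tsub_add_cancel_of_le h]
    exact (isBalanced_add_right (isBalanced_edgeDegree (singleton_subset_iff.mpr hpS))).symm
  simp only [diagonalFactor, backwardDiff, localFactor_insert hp]
  by_cases hpe : edgeDegree {p} ≤ e
  · simp only [hpe, if_true, hbalanced hpe]
    split_ifs <;> simp
  · simp only [hpe, if_false, sub_zero]

theorem isBalanced_of_diagonalFactor_ne_zero {P : Type*} {T π : P} {E : Finset (ι × ι)} {e : ι → ℕ}
    (h : diagonalFactor S T E π e ≠ 0) (hπ : π ≠ T) : IsBalanced S e := by
  by_contra he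
  exact h (if_neg (not_or.mpr ⟨hπ, he⟩))

theorem localFactor_ne_zero_of_diagonalFactor_ne_zero {P : Type*} {T π : P} {E : Finset (ι × ι)}
    {e : ι → ℕ} (h : diagonalFactor S T E π e ≠ 0) : localFactor E e ≠ 0 := by
  contrapose! h
  rw [diagonalFactor, h, ite_self]

/-- The edge sets whose signed count is `diagonalFactor S T (S ×ˢ Sᶜ) π e`; there are none if that
count is zero. -/
def diagonalTerms {P : Type*} (S : Finset ι) (T π : P) (e : ι → ℕ) : Finset (Finset (ι × ι)) :=
  open Classical in
  if diagonalFactor S T (S ×ˢ Sᶜ) π e = 0 then ∅ else edgeSubsets (S ×ˢ Sᶜ) e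

theorem mem_diagonalTerms {P : Type*} {T π : P} {e : ι → ℕ} {H : Finset (ι × ι)} :
    H ∈ diagonalTerms S T π e ↔
      diagonalFactor S T (S ×ˢ Sᶜ) π e ≠ 0 ∧ H ⊆ S ×ˢ Sᶜ ∧ edgeDegree H ≤ e := by
  rw [diagonalTerms]
  split_ifs with h
  · simp [h]
  · simp [h, mem_edgeSubsets]

theorem abs_diagonalFactor_le {P : Type*} (S : Finset ι) (T π : P) (e : ι → ℕ) :
    |diagonalFactor S T (S ×ˢ Sᶜ) π e| ≤ #(diagonalTerms S T π e) := by
  rw [diagonalTerms]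
  split_ifs with h
  · rw [h, abs_zero, card_empty, Nat.cast_zero]
  · have hcond : π = T ∨ IsBalanced S e := by_contra fun hcond => h (if_neg hcond)
    rw [diagonalFactor, if_pos hcond]
    exact abs_localFactor_le _ e

end Balanced

section LabelIndicator

variable {P Λ : Type*} [DecidableEq P] [DecidableEq Λ]

/-- The indicators of the fibres over the labels `θ ∈ Θ` of a labelling `z` of the primes, where the
prime `T` and the primes with the default label `o` are left out. -/
def labelIndicator (T : P) (o : Λ) (Θ : Finset Λ) (z : P → Λ) (π : P) (θ : Θ) : ℕ :=
  if (π ≠ T ∧ z π ≠ o) ∧ z π = θ then 1 else 0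

theorem sum_labelIndicator_le
    (T : P) (o : Λ) (Θ : Finset Λ) (z : P → Λ) (π : P) :
    ∑ θ, labelIndicator T o Θ z π θ ≤ if π ≠ T ∧ z π ≠ o then 1 else 0 := by
  by_cases h : π ≠ T ∧ z π ≠ o
  · simp only [labelIndicator, and_iff_right h, if_pos h, sum_boole, Nat.cast_id]
    refine card_le_one.mpr fun θ hθ θ' hθ' => Subtype.ext ?_
    exact (mem_filter.mp hθ).2.symm.trans (mem_filter.mp hθ').2
  · rw [if_neg h]
    exact (sum_eq_zero fun θ _ => if_neg fun hθ => h hθ.1).le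

theorem eq_of_labelIndicator_eq {T : P} {o : Λ} {Θ : Finset Λ}
    {z z' : P → Λ} (hz : ∀ π ≠ T, z π ≠ o → z π ∈ Θ) (hz' : ∀ π ≠ T, z' π ≠ o → z' π ∈ Θ)
    (hT : z T = z' T) (h : labelIndicator T o Θ z = labelIndicator T o Θ z') : z = z' := by
  have hforward {x y : P → Λ} (hx : ∀ π ≠ T, x π ≠ o → x π ∈ Θ)
      (hxy : labelIndicator T o Θ x = labelIndicator T o Θ y) (π : P) (hπ : π ≠ T)
      (ho : x π ≠ o) : x π = y π := by
    have hval := congrFun₂ hxy π ⟨x π, hx π hπ ho⟩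
    rw [labelIndicator, if_pos ⟨⟨hπ, ho⟩, rfl⟩] at hval
    by_contra hne
    rw [labelIndicator, if_neg fun hy => hne hy.2.symm] at hval
    exact one_ne_zero hval
  funext π
  rcases eq_or_ne π T with rfl | hπ
  · exact hT
  by_cases ho : z π = o
  · by_cases ho' : z' π = o
    · rw [ho, ho']
    · exact (hforward hz' h.symm π hπ ho').symm
  · exact hforward hz h π hπ ho

end LabelIndicator

section EulerProduct

variable {P : Type*} [Fintype P] {ι : Type*}

/-- The degrees of the `ι`-tuple `i ↦ ∏ π, π ^ F π i` of monomials in a family of primes `π` of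
degree `deg π`. -/
def tupleDegree (deg : P → ℕ) (F : P → ι → ℕ) (i : ι) : ℕ :=
  ∑ π, F π i * deg π

theorem tupleDegree_add (deg : P → ℕ) (F G : P → ι → ℕ) :
    tupleDegree deg (F + G) = tupleDegree deg F + tupleDegree deg G := by
  funext i
  simp only [tupleDegree, Pi.add_apply, add_mul, sum_add_distrib]

theorem sum_tupleDegree (deg : P → ℕ) (Q : Finset ι) (F : P → ι → ℕ) :
    ∑ i ∈ Q, tupleDegree deg F i = ∑ π, (∑ i ∈ Q, F π i) * deg π := by
  simp only [tupleDegree, sum_mul]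
  exact sum_comm

theorem le_tupleDegree {deg : P → ℕ} (hdeg : ∀ π, 0 < deg π) (F : P → ι → ℕ) (π : P) (i : ι) :
    F π i ≤ tupleDegree deg F i :=
  (Nat.le_mul_of_pos_right _ (hdeg π)).trans
    (single_le_sum (f := fun π => F π i * deg π) (fun _ _ => Nat.zero_le _) (mem_univ π))

variable [DecidableEq P]

/-- The tuple in which each prime of `h` has exponent vector `δ` and no other prime occurs. -/
def constTuple (h : Finset P) (δ : ι → ℕ) (π : P) : ι → ℕ :=
  if π ∈ h then δ else 0

theorem tupleDegree_constTuple (deg : P → ℕ) (h : Finset P) (δ : ι → ℕ) (i : ι) :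
    tupleDegree deg (constTuple h δ) i = (∑ π ∈ h, deg π) * δ i := by
  simp only [tupleDegree, constTuple, ite_apply, Pi.zero_apply, ite_mul, zero_mul, sum_ite_mem,
    univ_inter, sum_mul]
  exact sum_congr rfl fun π _ => mul_comm _ _

open Classical in
theorem prod_sdiff_mul_prod_shift (h : Finset P) (δ : ι → ℕ) (w : P → (ι → ℕ) → ℤ)
    (F : P → ι → ℕ) :
    (∏ π ∈ univ \ h, w π (F π)) * ∏ π ∈ h, (if δ ≤ F π then w π (F π - δ) else 0) =
      if constTuple h δ ≤ F then ∏ π, w π ((F - constTuple h δ) π) else 0 := by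
  have hle : constTuple h δ ≤ F ↔ ∀ π ∈ h, δ ≤ F π := by
    refine forall_congr' fun π => ?_
    by_cases hπ : π ∈ h <;> simp [constTuple, hπ]
  by_cases hF : ∀ π ∈ h, δ ≤ F π
  · rw [if_pos (hle.mpr hF), ← prod_sdiff (subset_univ h)]
    congr 1
    · refine prod_congr rfl fun π hπ => ?_
      rw [Pi.sub_apply, constTuple, if_neg (mem_sdiff.mp hπ).2, tsub_zero]
    · refine prod_congr rfl fun π hπ => ?_
      rw [Pi.sub_apply, constTuple, if_pos hπ, if_pos (hF π hπ)]
  · rw [if_neg (mt hle.mp hF)]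
    push Not at hF
    obtain ⟨π, hπ, hδ⟩ := hF
    rw [prod_eq_zero hπ (if_neg hδ), mul_zero]

variable [Fintype ι] [DecidableEq ι]

/-- The tuples of monomials with prescribed degrees `a`. The degrees are integers so that they can
be shifted down freely; there are no tuples if some `a i` is negative. The bound on the exponents
only serves to make the set finite: see `mem_degreeTuples`. -/
def degreeTuples (deg : P → ℕ) (a : ι → ℤ) : Finset (P → ι → ℕ) :=
  {F ∈ Fintype.piFinset fun _ => Fintype.piFinset fun i => range ((a i).toNat + 1) |
    ∀ i, (tupleDegree deg F i : ℤ) = a i}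

theorem mem_degreeTuples {deg : P → ℕ} (hdeg : ∀ π, 0 < deg π) {a : ι → ℤ} {F : P → ι → ℕ} :
    F ∈ degreeTuples deg a ↔ ∀ i, (tupleDegree deg F i : ℤ) = a i := by
  simp only [degreeTuples, mem_filter, Fintype.mem_piFinset, mem_range, and_iff_right_iff_imp]
  intro h π i
  have hle := le_tupleDegree hdeg F π i
  have hdegree := h i
  omega

theorem degreeTuples_eq_empty (deg : P → ℕ) {a : ι → ℤ} {i : ι} (hi : a i < 0) :
    degreeTuples deg a = ∅ :=
  filter_false_of_mem fun F _ h => by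
    have := h i
    omega

open Classical in
theorem sum_degreeTuples_shift {deg : P → ℕ} (hdeg : ∀ π, 0 < deg π) (a : ι → ℤ)
    (s : P → ι → ℕ) (f : (P → ι → ℕ) → ℤ) :
    (∑ F ∈ degreeTuples deg a, if s ≤ F then f (F - s) else 0) =
      ∑ F ∈ degreeTuples deg (fun i => a i - tupleDegree deg s i), f F := by
  rw [← sum_filter]
  refine sum_nbij' (· - s) (· + s) ?_ ?_ (fun F hF => ?_) (fun F _ => ?_) fun F _ => rfl
  · intro F hF
    obtain ⟨hF, hsF⟩ := mem_filter.mp hF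
    refine (mem_degreeTuples hdeg).mpr fun i => ?_
    rw [← (mem_degreeTuples hdeg).mp hF i]
    conv_rhs => rw [← tsub_add_cancel_of_le hsF, tupleDegree_add]
    simp
  · intro F hF
    refine mem_filter.mpr ⟨(mem_degreeTuples hdeg).mpr fun i => ?_, le_add_self⟩
    have := (mem_degreeTuples hdeg).mp hF i
    rw [tupleDegree_add]
    simp [this]
  · exact tsub_add_cancel_of_le (mem_filter.mp hF).2
  · exact add_tsub_cancel_right F s

/-- The coefficient with exponent vector `a` of the Euler product
`∏ π, ∑ e, w π e * x ^ (deg π • e)`. -/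
def eulerCoeff (deg : P → ℕ) (w : P → (ι → ℕ) → ℤ) (a : ι → ℤ) : ℤ :=
  ∑ F ∈ degreeTuples deg a, ∏ π, w π (F π)

theorem eulerCoeff_backwardDiff {deg : P → ℕ} (hdeg : ∀ π, 0 < deg π) (δ : ι → ℕ)
    (w : P → (ι → ℕ) → ℤ) (a : ι → ℤ) :
    eulerCoeff deg (fun π => backwardDiff δ (w π)) a =
      ∑ h : Finset P,
        (-1) ^ #h * eulerCoeff deg w fun i => a i - ((∑ π ∈ h, deg π) * δ i : ℕ) := by
  simp only [eulerCoeff, backwardDiff, prod_sub, powerset_univ, mul_assoc,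
    prod_sdiff_mul_prod_shift]
  rw [sum_comm]
  refine sum_congr rfl fun h _ => ?_
  rw [← mul_sum, sum_degreeTuples_shift hdeg a (constTuple h δ) fun F => ∏ π, w π (F π)]
  simp only [tupleDegree_constTuple]

theorem eulerCoeff_single_zero {deg : P → ℕ} (hdeg : ∀ π, 0 < deg π) (a : ι → ℤ) :
    eulerCoeff deg (fun _ e => if e = 0 then 1 else 0) a = if a = 0 then 1 else 0 := by
  have hprod (F : P → ι → ℕ) :
      (∏ π, if F π = 0 then 1 else 0 : ℤ) = if F = 0 then 1 else 0 := by
    rw [prod_ite_zero]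
    simp [funext_iff]
  have hmem : (0 : P → ι → ℕ) ∈ degreeTuples deg a ↔ a = 0 := by
    simp [mem_degreeTuples hdeg, tupleDegree, funext_iff, eq_comm]
  simp only [eulerCoeff, hprod, sum_ite_eq', hmem]

/-- `deg : P → ℕ` are the degrees of a finite family of primes which, up to total degree `D`, has
as many monomials of each degree as there are monic polynomials over a field with `q` elements. -/
structure IsPolynomialLike (deg : P → ℕ) (q D : ℕ) : Prop where
  deg_pos : ∀ π, 0 < deg π
  card : ∀ n ≤ D, #(degreeTuples deg fun _ : Unit => (n : ℤ)) = q ^ n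

namespace IsPolynomialLike

variable {deg : P → ℕ} {q D : ℕ}

theorem sum_neg_one_pow_mul_card (hP : IsPolynomialLike deg q D) (n : ℤ) :
    ∑ h : Finset P, (-1 : ℤ) ^ #h * #(degreeTuples deg fun _ : Unit => n - (∑ π ∈ h, deg π : ℕ)) =
      if n = 0 then 1 else 0 := by
  have hdiff : backwardDiff (1 : Unit → ℕ) (fun _ => 1) = fun e => if e = 0 then 1 else 0 := by
    funext e
    have hle : 1 ≤ e ↔ e ≠ 0 := by
      simp [Pi.le_def, funext_iff, Nat.one_le_iff_ne_zero, Unique.forall_iff]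
    by_cases he : e = 0 <;> simp [backwardDiff, hle, he]
  have key := eulerCoeff_backwardDiff (ι := Unit) hP.deg_pos 1 (fun _ _ => 1) fun _ => n
  rw [hdiff, eulerCoeff_single_zero hP.deg_pos] at key
  simpa [eulerCoeff, funext_iff] using key.symm

theorem card_degreeTuples_sub (hP : IsPolynomialLike deg q D) {n : ℕ} (hn : n ≤ D) (m : ℕ) :
    (#(degreeTuples deg fun _ : Unit => (n : ℤ) - m) : ℤ) =
      if m ≤ n then (q : ℤ) ^ (n - m) else 0 := by
  split_ifs with hmn
  · rw [← Nat.cast_sub hmn, hP.card _ ((Nat.sub_le n m).trans hn), Nat.cast_pow]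
  · rw [degreeTuples_eq_empty deg (i := ()) (by omega), card_empty, Nat.cast_zero]

/-- The power series identity `∏ π, (1 - t ^ deg π) = 1 - q * t` up to degree `D`, read off from
its inverse `∏ π, (1 - t ^ deg π)⁻¹ = ∑ n, q ^ n * t ^ n`. -/
theorem sum_neg_one_pow_of_degree_eq (hP : IsPolynomialLike deg q D) {n : ℕ} (hn : n ≤ D) :
    ∑ h : Finset P with ∑ π ∈ h, deg π = n, (-1 : ℤ) ^ #h =
      if n = 0 then 1 else if n = 1 then -(q : ℤ) else 0 := by
  have hind (m : ℕ) : (if m = n then 1 else 0 : ℤ) =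
      #(degreeTuples deg fun _ : Unit => (n : ℤ) - m) -
        q * #(degreeTuples deg fun _ : Unit => (n : ℤ) - 1 - m) := by
    have hpred : (fun _ : Unit => (n : ℤ) - 1 - m) = fun _ => (n : ℤ) - (m + 1 : ℕ) := by
      funext
      push_cast
      ring
    rw [hpred, hP.card_degreeTuples_sub hn, hP.card_degreeTuples_sub hn]
    rcases lt_trichotomy m n with h | rfl | h
    · rw [if_neg h.ne, if_pos h.le, if_pos (Nat.succ_le_of_lt h), ← pow_succ',
        show n - (m + 1) + 1 = n - m by omega, sub_self]
    · simp
    · simp [h.ne', h.not_ge, show ¬ m + 1 ≤ n by omega]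
  calc ∑ h : Finset P with ∑ π ∈ h, deg π = n, (-1 : ℤ) ^ #h
      = ∑ h : Finset P, (-1 : ℤ) ^ #h * if ∑ π ∈ h, deg π = n then 1 else 0 := by
        simp only [sum_filter, mul_ite, mul_one, mul_zero]
    _ = (if (n : ℤ) = 0 then 1 else 0) - q * if (n : ℤ) - 1 = 0 then 1 else 0 := by
        rw [← hP.sum_neg_one_pow_mul_card, ← hP.sum_neg_one_pow_mul_card, mul_sum,
          ← sum_sub_distrib]
        refine sum_congr rfl fun h _ => ?_
        rw [hind]
        ring
    _ = if n = 0 then 1 else if n = 1 then -(q : ℤ) else 0 := by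
        simp only [sub_eq_zero, Nat.cast_eq_zero, Nat.cast_eq_one]
        split_ifs <;> simp_all

theorem sum_neg_one_pow_mul_degree (hP : IsPolynomialLike deg q D) (hD : 1 ≤ D) {Φ : ℕ → ℤ}
    (hΦ : ∀ n, D < n → Φ n = 0) :
    ∑ h : Finset P, (-1) ^ #h * Φ (∑ π ∈ h, deg π) = Φ 0 - q * Φ 1 := by
  obtain ⟨D, rfl⟩ := Nat.exists_eq_add_of_le' hD
  calc ∑ h : Finset P, (-1) ^ #h * Φ (∑ π ∈ h, deg π)
      = ∑ n ∈ range (D + 1 + 1), ∑ h : Finset P with ∑ π ∈ h, deg π = n, (-1) ^ #h * Φ n := by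
        simp only [sum_filter]
        rw [sum_comm]
        refine sum_congr rfl fun h _ => ?_
        rw [sum_ite_eq]
        split_ifs with hh
        · rfl
        · rw [hΦ _ (by simpa using hh), mul_zero]
    _ = ∑ n ∈ range (D + 1 + 1), (if n = 0 then 1 else if n = 1 then -(q : ℤ) else 0) * Φ n := by
        refine sum_congr rfl fun n hn => ?_
        rw [← sum_mul, hP.sum_neg_one_pow_of_degree_eq (Nat.lt_succ_iff.mp (mem_range.mp hn))]
    _ = Φ 0 - q * Φ 1 := by
        rw [sum_range_succ', sum_range_succ', sum_eq_zero fun n _ => by simp]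
        simp only [zero_add, Nat.one_ne_zero, if_true, if_false]
        ring

theorem eulerCoeff_backwardDiff_eq (hP : IsPolynomialLike deg q D) (hD : 1 ≤ D) {δ : ι → ℕ}
    {a : ι → ℤ} {i : ι} (hδ : δ i ≠ 0) (ha : a i ≤ D) (w : P → (ι → ℕ) → ℤ) :
    eulerCoeff deg (fun π => backwardDiff δ (w π)) a =
      eulerCoeff deg w a - q * eulerCoeff deg w fun l => a l - δ l := by
  rw [eulerCoeff_backwardDiff hP.deg_pos, hP.sum_neg_one_pow_mul_degree hD
    (Φ := fun n => eulerCoeff deg w fun i => a i - (n * δ i : ℕ)) fun n hn => ?_]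
  · simp only [zero_mul, Nat.cast_zero, sub_zero, one_mul]
  · have hmul : n ≤ n * δ i := Nat.le_mul_of_pos_right n (Nat.pos_of_ne_zero hδ)
    rw [eulerCoeff, degreeTuples_eq_empty deg (i := i) (by omega), sum_empty]

end IsPolynomialLike

theorem IsPolynomialLike.sum_powerset_eulerCoeff {deg : P → ℕ} {q D : ℕ}
    (hP : IsPolynomialLike deg q D) (hD : 1 ≤ D) {S : Finset ι} (T : P) {E : Finset (ι × ι)}
    (hE : E ⊆ S ×ˢ Sᶜ) {a : ι → ℤ} (ha : ∀ i, a i ≤ D) :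
    ∑ J ∈ E.powerset, (-(q : ℤ)) ^ #J *
        eulerCoeff deg (diagonalFactor S T ∅) (fun i => a i - edgeDegree J i) =
      eulerCoeff deg (diagonalFactor S T E) a := by
  induction E using Finset.induction_on generalizing a with
  | empty => simp [edgeDegree_empty]
  | insert p E hp ih =>
    obtain ⟨hpS, hES⟩ := insert_subset_iff.mp hE
    have hδ : edgeDegree {p} p.1 ≠ 0 := by
      simp [edgeDegree_apply, filter_singleton]
    have hterm : ∀ J ∈ E.powerset, (-(q : ℤ)) ^ #(insert p J) *
        eulerCoeff deg (diagonalFactor S T ∅) (fun i => a i - edgeDegree (insert p J) i) =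
        -q * ((-(q : ℤ)) ^ #J * eulerCoeff deg (diagonalFactor S T ∅)
          (fun i => a i - edgeDegree {p} i - edgeDegree J i)) := by
      intro J hJ
      have hpJ : p ∉ J := fun h => hp (mem_powerset.mp hJ h)
      simp only [card_insert_of_notMem hpJ, edgeDegree_insert hpJ, Pi.add_apply, Nat.cast_add,
        sub_sub, pow_succ', mul_assoc]
    rw [sum_powerset_insert hp, sum_congr rfl hterm, ← mul_sum, ih hES ha,
      ih hES (fun i => (sub_le_self _ (Nat.cast_nonneg _)).trans (ha i)),
      funext (diagonalFactor_insert T hpS hp), hP.eulerCoeff_backwardDiff_eq hD hδ (ha p.1)]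
    ring

section Counting

variable {deg : P → ℕ} {q D : ℕ}

theorem IsPolynomialLike.card_degreeTuples (hP : IsPolynomialLike deg q D) {a : ι → ℕ}
    (ha : ∀ i, a i ≤ D) : #(degreeTuples deg fun i => (a i : ℤ)) = q ^ ∑ i, a i := by
  calc #(degreeTuples deg fun i => (a i : ℤ))
      = #(Fintype.piFinset fun i => degreeTuples deg fun _ : Unit => (a i : ℤ)) := by
        refine card_nbij' (fun F i π _ => F π i) (fun G π i => G i π ()) ?_ ?_ (fun _ _ => rfl)
          fun _ _ => rfl
        · intro F hF
          rw [Fintype.coe_piFinset]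
          exact fun i _ => (mem_degreeTuples hP.deg_pos).mpr fun _ =>
            (mem_degreeTuples hP.deg_pos).mp hF i
        · intro G hG
          exact (mem_degreeTuples hP.deg_pos).mpr fun i =>
            (mem_degreeTuples hP.deg_pos).mp (Fintype.mem_piFinset.mp hG i) ()
    _ = q ^ ∑ i, a i := by
        rw [Fintype.card_piFinset, prod_congr rfl fun i _ => hP.card (a i) (ha i),
          prod_pow_eq_pow_sum]

omit [DecidableEq ι] in
theorem IsPolynomialLike.card_le_of_sum_tupleDegree_le (hP : IsPolynomialLike deg q D)
    (hq : 1 ≤ q) {m : ℕ} (hm : m ≤ D) {A : Finset (P → ι → ℕ)}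
    (hA : ∀ F ∈ A, ∑ i, tupleDegree deg F i ≤ m) :
    #A ≤ (m + 1) ^ Fintype.card ι * q ^ m := by
  classical
  have hdegree (F) (hF : F ∈ A) (i : ι) : tupleDegree deg F i ≤ m :=
    (single_le_sum (fun _ _ => Nat.zero_le _) (mem_univ i)).trans (hA F hF)
  have hmaps : ∀ F ∈ A, tupleDegree deg F ∈ Fintype.piFinset fun _ : ι => range (m + 1) :=
    fun F hF => Fintype.mem_piFinset.mpr fun i => mem_range.mpr (Nat.lt_succ_of_le (hdegree F hF i))
  have hfiber : ∀ r ∈ Fintype.piFinset fun _ : ι => range (m + 1),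
      #{F ∈ A | tupleDegree deg F = r} ≤ q ^ m := by
    intro r _
    rcases {F ∈ A | tupleDegree deg F = r}.eq_empty_or_nonempty with h | ⟨F, hF⟩
    · simp [h]
    obtain ⟨hFA, rfl⟩ := mem_filter.mp hF
    calc #{G ∈ A | tupleDegree deg G = tupleDegree deg F}
        ≤ #(degreeTuples deg fun i => (tupleDegree deg F i : ℤ)) :=
          card_le_card fun G hG => (mem_degreeTuples hP.deg_pos).mpr fun i => by
            rw [(mem_filter.mp hG).2]
      _ = q ^ ∑ i, tupleDegree deg F i := hP.card_degreeTuples fun i => (hdegree F hFA i).trans hm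
      _ ≤ q ^ m := Nat.pow_le_pow_right hq (hA F hFA)
  refine (card_le_mul_card_image_of_maps_to hmaps _ hfiber).trans_eq ?_
  rw [Fintype.card_piFinset, prod_const, card_range, card_univ, mul_comm]

/-- A labelling of the primes is determined by the label of `T` and by the products, one for each
label `θ ∈ Θ`, of the primes with that label. -/
theorem IsPolynomialLike.card_labellings_le (hP : IsPolynomialLike deg q D) (hq : 1 ≤ q) {m : ℕ}
    (hm : m ≤ D) {α Λ : Type*} [DecidableEq Λ] {Z : Finset α} {z : α → P → Λ}
    (hz : Set.InjOn z Z) {T : P} {o : Λ} {Λ₀ Θ : Finset Λ} (hT : ∀ x ∈ Z, z x T ∈ Λ₀)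
    (hΘ : ∀ x ∈ Z, ∀ π ≠ T, z x π ≠ o → z x π ∈ Θ)
    (hdeg : ∀ x ∈ Z, ∑ π with π ≠ T ∧ z x π ≠ o, deg π ≤ m) :
    #Z ≤ #Λ₀ * ((m + 1) ^ #Θ * q ^ m) := by
  let mark (x : α) : P → Θ → ℕ := labelIndicator T o Θ (z x)
  have hinj : Set.InjOn (fun x => (z x T, mark x)) Z := fun x hx y hy hxy =>
    hz hx hy (eq_of_labelIndicator_eq (hΘ x hx) (hΘ y hy) (Prod.mk.inj hxy).1 (Prod.mk.inj hxy).2)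
  have hmark : ∀ x ∈ Z, ∑ θ, tupleDegree deg (mark x) θ ≤ m := by
    intro x hx
    refine le_trans ?_ (hdeg x hx)
    rw [sum_tupleDegree, sum_filter]
    refine sum_le_sum fun π _ => ?_
    calc (∑ θ, mark x π θ) * deg π ≤ (if π ≠ T ∧ z x π ≠ o then 1 else 0) * deg π :=
          Nat.mul_le_mul_right _ (sum_labelIndicator_le T o Θ (z x) π)
      _ = if π ≠ T ∧ z x π ≠ o then deg π else 0 := by rw [ite_mul, one_mul, zero_mul]
  calc #Z ≤ #(Λ₀ ×ˢ Z.image mark) :=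
        card_le_card_of_injOn _ (fun x hx => mk_mem_product (hT x hx) (mem_image_of_mem _ hx)) hinj
    _ = #Λ₀ * #(Z.image mark) := card_product _ _
    _ ≤ #Λ₀ * ((m + 1) ^ #Θ * q ^ m) := by
        rw [← Fintype.card_coe Θ]
        exact Nat.mul_le_mul_left _
          (hP.card_le_of_sum_tupleDegree_le hq hm (forall_mem_image.mpr hmark))

variable {S Q : Finset ι}

/-- Pairs of a tuple of monomials with degrees `a` and a term of the Euler factor at each prime. -/
def termChoices (deg : P → ℕ) (S : Finset ι) (T : P) (a : ι → ℤ) :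
    Finset ((_ : P → ι → ℕ) × (P → Finset (ι × ι))) :=
  (degreeTuples deg a).sigma fun F => Fintype.piFinset fun π => diagonalTerms S T π (F π)

theorem abs_eulerCoeff_diagonalFactor_le (deg : P → ℕ) (S : Finset ι) (T : P) (a : ι → ℤ) :
    |eulerCoeff deg (diagonalFactor S T (S ×ˢ Sᶜ)) a| ≤ #(termChoices deg S T a) := by
  simp only [termChoices, card_sigma, Fintype.card_piFinset, Nat.cast_sum, Nat.cast_prod,
    eulerCoeff]
  refine (abs_sum_le_sum_abs _ _).trans (sum_le_sum fun F _ => ?_)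
  rw [abs_prod]
  exact prod_le_prod (fun π _ => abs_nonneg _) fun π _ => abs_diagonalFactor_le S T π (F π)

theorem HasDoubleWeight.sum_deg_le (hQ : HasDoubleWeight S Q) {T : P} {F : P → ι → ℕ}
    (hF : ∀ π, diagonalFactor S T (S ×ˢ Sᶜ) π (F π) ≠ 0) :
    ∑ π with π ≠ T ∧ F π ≠ 0, deg π ≤ (∑ i ∈ Q, tupleDegree deg F i) / 2 := by
  rw [Nat.le_div_iff_mul_le two_pos, sum_tupleDegree, sum_mul]
  calc ∑ π with π ≠ T ∧ F π ≠ 0, deg π * 2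
      ≤ ∑ π with π ≠ T ∧ F π ≠ 0, (∑ i ∈ Q, F π i) * deg π := by
        refine sum_le_sum fun π hπ => ?_
        obtain ⟨hπT, hπ0⟩ := (mem_filter.mp hπ).2
        rw [mul_comm]
        exact Nat.mul_le_mul_right _ (hQ _ (isBalanced_of_diagonalFactor_ne_zero (hF π) hπT)
          (localFactor_ne_zero_of_diagonalFactor_ne_zero (hF π)) hπ0)
    _ ≤ ∑ π, (∑ i ∈ Q, F π i) * deg π := sum_le_sum_of_subset (subset_univ _)

/-- The vectors with entries at most `n`, paired with the edge sets between `S` and `Sᶜ`. -/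
def boundedLabels (S : Finset ι) (n : ℕ) : Finset ((ι → ℕ) × Finset (ι × ι)) :=
  (Fintype.piFinset fun _ => range (n + 1)) ×ˢ (S ×ˢ Sᶜ).powerset

theorem card_boundedLabels (S : Finset ι) (n : ℕ) :
    #(boundedLabels S n) = (n + 1) ^ Fintype.card ι * 2 ^ (#S * #Sᶜ) := by
  simp only [boundedLabels, card_product, Fintype.card_piFinset, card_range, prod_const, card_univ,
    card_powerset]

theorem mem_boundedLabels {n : ℕ} {e : ι → ℕ} {H : Finset (ι × ι)} :
    (e, H) ∈ boundedLabels S n ↔ (∀ i, e i ≤ n) ∧ H ⊆ S ×ˢ Sᶜ := by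
  simp only [boundedLabels, mem_product, Fintype.mem_piFinset, mem_range, Nat.lt_succ_iff,
    mem_powerset]

theorem IsPolynomialLike.mem_termChoices (hP : IsPolynomialLike deg q D) {T : P} {a : ι → ℕ}
    {F : P → ι → ℕ} {H : P → Finset (ι × ι)} :
    ⟨F, H⟩ ∈ termChoices deg S T (fun i => (a i : ℤ)) ↔ tupleDegree deg F = a ∧
      ∀ π, diagonalFactor S T (S ×ˢ Sᶜ) π (F π) ≠ 0 ∧ H π ⊆ S ×ˢ Sᶜ ∧ edgeDegree (H π) ≤ F π := by
  simp only [termChoices, mem_sigma, mem_degreeTuples hP.deg_pos, Nat.cast_inj, funext_iff,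
    Fintype.mem_piFinset, mem_diagonalTerms]

theorem IsPolynomialLike.card_termChoices_le (hP : IsPolynomialLike deg q D) (hq : 1 ≤ q)
    (hQ : HasDoubleWeight S Q) (T : P) {a : ι → ℕ} (ha : ∑ i, a i ≤ D) :
    #(termChoices deg S T fun i => (a i : ℤ)) ≤ #(boundedLabels S D) *
      ((D + 1) ^ #(boundedLabels S (#S * #Sᶜ)) * q ^ ((∑ i ∈ Q, a i) / 2)) := by
  have hm : (∑ i ∈ Q, a i) / 2 ≤ D :=
    (Nat.div_le_self _ _).trans ((sum_le_sum_of_subset (subset_univ Q)).trans ha)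
  have hne {e : ι → ℕ} {H : Finset (ι × ι)} (hH : H ⊆ S ×ˢ Sᶜ) (he : edgeDegree H ≤ e)
      (hlabel : (e, H) ≠ (0, ∅)) : e ≠ 0 := by
    rintro rfl
    exact hlabel (Prod.ext rfl (eq_empty_of_edgeDegree_le_zero hH he))
  refine (hP.card_labellings_le hq hm (z := fun x π => (x.1 π, x.2 π)) (o := (0, ∅)) (T := T)
    (Λ₀ := boundedLabels S D) (Θ := boundedLabels S (#S * #Sᶜ)) ?_ ?_ ?_ ?_).trans ?_
  · rintro ⟨F, H⟩ _ ⟨F', H'⟩ _ h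
    obtain rfl : F = F' := funext fun π => (Prod.mk.inj (congrFun h π)).1
    obtain rfl : H = H' := funext fun π => (Prod.mk.inj (congrFun h π)).2
    rfl
  · rintro ⟨F, H⟩ hx
    obtain ⟨rfl, hterm⟩ := hP.mem_termChoices.mp hx
    exact mem_boundedLabels.mpr ⟨fun i => (le_tupleDegree hP.deg_pos F T i).trans
      ((single_le_sum (fun _ _ => Nat.zero_le _) (mem_univ i)).trans ha), (hterm T).2.1⟩
  · rintro ⟨F, H⟩ hx π hπ -
    obtain ⟨-, hterm⟩ := hP.mem_termChoices.mp hx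
    obtain ⟨hfactor, hH, -⟩ := hterm π
    exact mem_boundedLabels.mpr ⟨le_of_localFactor_ne_zero
      (isBalanced_of_diagonalFactor_ne_zero hfactor hπ)
      (localFactor_ne_zero_of_diagonalFactor_ne_zero hfactor), hH⟩
  · rintro ⟨F, H⟩ hx
    obtain ⟨rfl, hterm⟩ := hP.mem_termChoices.mp hx
    refine le_trans (sum_le_sum_of_subset fun π hπ => ?_) (hQ.sum_deg_le fun π => (hterm π).1)
    obtain ⟨hπT, hlabel⟩ := (mem_filter.mp hπ).2
    exact mem_filter.mpr ⟨mem_univ π, hπT, hne (hterm π).2.1 (hterm π).2.2 hlabel⟩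
  · gcongr

/-- The exponent of a power of `D + 1` which, up to a constant, dominates the number of ways to
label the primes occurring in a `k`-tuple of total degree at most `D`. -/
def labelExponent (k : ℕ) : ℕ :=
  k + (k ^ 2 + 1) ^ k * 2 ^ k ^ 2

theorem IsPolynomialLike.abs_eulerCoeff_le (hP : IsPolynomialLike deg q D) (hq : 1 ≤ q)
    (hQ : HasDoubleWeight S Q) (T : P) {a : ι → ℕ} (ha : ∑ i, a i ≤ D) :
    |eulerCoeff deg (diagonalFactor S T (S ×ˢ Sᶜ)) fun i => (a i : ℤ)| ≤
      (2 ^ Fintype.card ι ^ 2 * (D + 1) ^ labelExponent (Fintype.card ι) *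
        q ^ ((∑ i ∈ Q, a i) / 2) : ℕ) := by
  have hedges : #S * #Sᶜ ≤ Fintype.card ι ^ 2 := by
    rw [sq]
    exact Nat.mul_le_mul S.card_le_univ Sᶜ.card_le_univ
  have hlabels (n : ℕ) :
      #(boundedLabels S n) ≤ (n + 1) ^ Fintype.card ι * 2 ^ Fintype.card ι ^ 2 := by
    rw [card_boundedLabels]
    gcongr
    exact one_le_two
  have hexponent : #(boundedLabels S (#S * #Sᶜ)) ≤
      (Fintype.card ι ^ 2 + 1) ^ Fintype.card ι * 2 ^ Fintype.card ι ^ 2 :=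
    (hlabels _).trans (by gcongr)
  refine (abs_eulerCoeff_diagonalFactor_le deg S T _).trans (Nat.cast_le.mpr ?_)
  calc #(termChoices deg S T fun i => (a i : ℤ))
      ≤ #(boundedLabels S D) *
        ((D + 1) ^ #(boundedLabels S (#S * #Sᶜ)) * q ^ ((∑ i ∈ Q, a i) / 2)) :=
        hP.card_termChoices_le hq hQ T ha
    _ ≤ ((D + 1) ^ Fintype.card ι * 2 ^ Fintype.card ι ^ 2) *
        ((D + 1) ^ ((Fintype.card ι ^ 2 + 1) ^ Fintype.card ι * 2 ^ Fintype.card ι ^ 2) *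
          q ^ ((∑ i ∈ Q, a i) / 2)) := by
        gcongr
        · exact hlabels D
        · exact Nat.le_add_left 1 D
    _ = 2 ^ Fintype.card ι ^ 2 * (D + 1) ^ labelExponent (Fintype.card ι) *
        q ^ ((∑ i ∈ Q, a i) / 2) := by
        rw [labelExponent, pow_add]
        ring

end Counting

end EulerProduct

section MonicPrime

open UniqueFactorizationMonoid

/-- The monic irreducible polynomials over `F` of degree at most `D`, which suffice to factor
the polynomials of degree at most `D`. -/
def MonicPrime (F : Type*) [Field F] (D : ℕ) : Type _ :=
  {p : F[X] // p.Monic ∧ Irreducible p ∧ p.natDegree ≤ D}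

namespace MonicPrime

variable {F : Type*} [Field F] {D : ℕ}

instance : DecidableEq (MonicPrime F D) := Classical.decEq _

instance [Finite F] : Finite (MonicPrime F D) := by
  refine Finite.of_injective (fun (p : MonicPrime F D) (i : Fin (D + 1)) => p.1.coeff i) ?_
  intro p r h
  refine Subtype.ext ((ext_iff_natDegree_le p.2.2.2 r.2.2.2).mpr fun n hn => ?_)
  exact congrFun h ⟨n, Nat.lt_succ_of_le hn⟩

instance [Finite F] : Fintype (MonicPrime F D) := Fintype.ofFinite _

/-- The weight of a prime in the Euler product. -/
def degree (π : MonicPrime F D) : ℕ := π.1.natDegree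

theorem degree_pos (π : MonicPrime F D) : 0 < π.degree := π.2.2.1.natDegree_pos

/-- The prime `T` of `F[T]`. -/
def X (hD : 1 ≤ D) : MonicPrime F D :=
  ⟨Polynomial.X, monic_X, irreducible_X, by rwa [natDegree_X]⟩

variable [Finite F]

/-- The polynomial with prime factorization `u`. -/
def monomial (u : MonicPrime F D → ℕ) : F[X] := ∏ π, π.1 ^ u π

theorem monic_monomial (u : MonicPrime F D → ℕ) : (monomial u).Monic :=
  monic_prod_of_monic _ _ fun π _ => π.2.1.pow _

theorem natDegree_monomial (u : MonicPrime F D → ℕ) :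
    (monomial u).natDegree = ∑ π, u π * π.degree := by
  rw [monomial, natDegree_prod_of_monic _ _ fun π _ => π.2.1.pow _]
  simp only [natDegree_pow, degree]

theorem monomial_add (u v : MonicPrime F D → ℕ) : monomial (u + v) = monomial u * monomial v := by
  simp only [monomial, Pi.add_apply, pow_add, prod_mul_distrib]

theorem monomial_sum {ι : Type*} (s : Finset ι) (u : ι → MonicPrime F D → ℕ) :
    monomial (fun π => ∑ i ∈ s, u i π) = ∏ i ∈ s, monomial (u i) := by
  simp only [monomial, ← prod_pow_eq_pow_sum]
  exact prod_comm

theorem monomial_single_X (hD : 1 ≤ D) (a : ℕ) :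
    monomial (Pi.single (X hD) a) = (Polynomial.X : F[X]) ^ a := by
  rw [monomial, Fintype.prod_eq_single (X hD) fun π hπ => by rw [Pi.single_eq_of_ne hπ, pow_zero],
    Pi.single_eq_same, X]

open Classical in
theorem normalizedFactors_monomial (u : MonicPrime F D → ℕ) :
    normalizedFactors (monomial u) = ∑ π, u π • {π.1} := by
  have hmonomial : monomial u = (∑ π, u π • {π.1} : Multiset F[X]).prod := by
    simp only [monomial, Multiset.prod_sum, Multiset.prod_nsmul, Multiset.prod_singleton]
  have hmem {p : F[X]} (hp : p ∈ (∑ π, u π • {π.1} : Multiset F[X])) :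
      ∃ π : MonicPrime F D, π.1 = p := by
    obtain ⟨π, -, hπ⟩ := Multiset.mem_sum.mp hp
    exact ⟨π, (Multiset.mem_singleton.mp (Multiset.mem_of_mem_nsmul hπ)).symm⟩
  rw [hmonomial, normalizedFactors_prod_eq]
  · refine (Multiset.map_congr rfl fun p hp => ?_).trans (Multiset.map_id _)
    obtain ⟨π, rfl⟩ := hmem hp
    exact π.2.1.normalize_eq_self
  · intro p hp
    obtain ⟨π, rfl⟩ := hmem hp
    exact π.2.2.1

theorem monomial_injective : Function.Injective (monomial : (MonicPrime F D → ℕ) → F[X]) := by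
  classical
  have hcount (u : MonicPrime F D → ℕ) (π : MonicPrime F D) :
      (normalizedFactors (monomial u)).count π.1 = u π := by
    simp only [normalizedFactors_monomial, Multiset.count_sum', Multiset.count_nsmul,
      Multiset.count_singleton]
    rw [Fintype.sum_eq_single π fun ρ hρ => ?_, if_pos rfl, mul_one]
    rw [if_neg fun h => hρ (Subtype.ext h.symm), mul_zero]
  intro u v h
  funext π
  rw [← hcount u π, ← hcount v π, h]

theorem exists_monomial_eq {p : F[X]} (hp : p.Monic) (hd : p.natDegree ≤ D) :
    ∃ u : MonicPrime F D → ℕ, monomial u = p := by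
  classical
  have hprime {r : F[X]} (hr : r ∈ (normalizedFactors p).toFinset) :
      r.Monic ∧ Irreducible r ∧ r.natDegree ≤ D := by
    rw [Multiset.mem_toFinset] at hr
    have hirr := irreducible_of_normalized_factor r hr
    refine ⟨?_, hirr, (natDegree_le_of_dvd (dvd_of_mem_normalizedFactors hr) hp.ne_zero).trans hd⟩
    rw [← normalize_normalized_factor r hr]
    exact monic_normalize hirr.ne_zero
  refine ⟨fun π => (normalizedFactors p).count π.1, ?_⟩
  calc monomial (fun π => (normalizedFactors p).count π.1)
      = ∏ r ∈ (normalizedFactors p).toFinset, r ^ (normalizedFactors p).count r := by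
        rw [monomial, eq_comm]
        refine prod_bij_ne_one (fun r hr _ => ⟨r, hprime hr⟩) (fun _ _ _ => mem_univ _)
          (fun _ _ _ _ _ _ h => congrArg Subtype.val h) (fun π _ hπ => ⟨π.1, ?_, hπ, rfl⟩)
          fun _ _ _ => rfl
        rw [Multiset.mem_toFinset, ← Multiset.count_ne_zero]
        exact fun h => hπ (by rw [h, pow_zero])
    _ = (normalizedFactors p).prod := (prod_multiset_count _).symm
    _ = p := by rw [prod_normalizedFactors_eq hp.ne_zero, hp.normalize_eq_self]

theorem exists_X_pow_mul_monomial_eq_iff (hD : 1 ≤ D) {u v : MonicPrime F D → ℕ} :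
    (∃ a b : ℕ, Polynomial.X ^ a * monomial u = Polynomial.X ^ b * monomial v) ↔
      ∀ π, π = X hD ∨ u π = v π := by
  simp only [← monomial_single_X hD, ← monomial_add, monomial_injective.eq_iff, funext_iff,
    Pi.add_apply]
  refine ⟨fun ⟨a, b, h⟩ π => or_iff_not_imp_left.mpr fun hπ => ?_,
    fun h => ⟨v (X hD), u (X hD), fun π => ?_⟩⟩
  · simpa only [Pi.single_eq_of_ne hπ, zero_add] using h π
  · obtain rfl | hπ := eq_or_ne π (X hD)
    · rw [Pi.single_eq_same, Pi.single_eq_same, add_comm]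
    · rw [Pi.single_eq_of_ne hπ, Pi.single_eq_of_ne hπ, (h π).resolve_left hπ]

omit [Finite F] in
theorem ncard_monic_natDegree_eq (n : ℕ) :
    {p : F[X] | p.Monic ∧ p.natDegree = n}.ncard = Nat.card F ^ n := by
  rw [← Nat.card_coe_set_eq, Set.coe_ofPred,
    Nat.card_congr ((monicEquivDegreeLT n).trans (degreeLTEquiv F n).toEquiv), Nat.card_fun,
    Nat.card_fin]

theorem isPolynomialLike :
    IsPolynomialLike (degree : MonicPrime F D → ℕ) (Nat.card F) D where
  deg_pos := degree_pos
  card n hn := by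
    rw [← ncard_monic_natDegree_eq, ← Set.ncard_coe_finset]
    refine Set.ncard_congr (fun u _ => monomial fun π => u π ()) (fun u hu => ?_)
      (fun u v _ _ h => ?_) fun p ⟨hp, hpn⟩ => ?_
    · have hu := (mem_degreeTuples degree_pos).mp hu ()
      exact ⟨monic_monomial _, (natDegree_monomial _).trans (Nat.cast_injective hu)⟩
    · exact funext₂ fun π _ => congrFun (monomial_injective h) π
    · obtain ⟨u, rfl⟩ := exists_monomial_eq hp (hpn.trans_le hn)
      refine ⟨fun π _ => u π, (mem_degreeTuples degree_pos).mpr fun _ => ?_, rfl⟩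
      rw [← hpn, natDegree_monomial, tupleDegree]

end MonicPrime

end MonicPrime

section Diagonal

theorem eulerCoeff_diagonalFactor_empty {P ι : Type*} [Fintype P] [DecidableEq P] [Fintype ι]
    [DecidableEq ι] (deg : P → ℕ) (S : Finset ι) (T : P) (a : ι → ℤ) :
    eulerCoeff deg (diagonalFactor S T ∅) a =
      Set.ncard {F | F ∈ degreeTuples deg a ∧ ∀ π, π = T ∨ IsBalanced S (F π)} := by
  classical
  simp only [eulerCoeff, diagonalFactor, localFactor_empty, prod_boole, mem_univ, forall_const,
    sum_boole, ← coe_filter, Set.ncard_coe_finset]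

variable {k : ℕ} {S : Finset (Fin k)}

/-- The degrees which the polynomials counted by `NS F S d` must have. -/
def polyDegrees (S : Finset (Fin k)) (d : Fin k → ℤ) (i : Fin k) : ℤ :=
  if i ∈ S then d i else -d i

theorem sum_polyDegrees (S : Finset (Fin k)) (d : Fin k → ℤ) :
    ∑ i, polyDegrees S d i = ∑ i ∈ S, d i - ∑ i ∈ Sᶜ, d i := by
  rw [← sum_add_sum_compl S, sub_eq_add_neg, ← sum_neg_distrib]
  refine congrArg₂ _ (sum_congr rfl fun i hi => if_pos hi) (sum_congr rfl fun i hi => if_neg ?_)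
  exact mem_compl.mp hi

theorem polyDegrees_sub_vJ {J : Finset (Fin k × Fin k)} (hJ : J ⊆ S ×ˢ Sᶜ) (d : Fin k → ℤ)
    (i : Fin k) :
    polyDegrees S (fun i => d i - vJ S J i) i = polyDegrees S d i - edgeDegree J i := by
  by_cases hi : i ∈ S
  · simp only [polyDegrees, vJ, if_pos hi, edgeDegree_apply_left hJ hi]
  · simp only [polyDegrees, vJ, if_neg hi, edgeDegree_apply_right hJ hi]
    ring

theorem NS_eq_eulerCoeff (F : Type) [Field F] [Finite F] {D : ℕ} (hD : 1 ≤ D) {d : Fin k → ℤ}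
    (hd : ∀ i, polyDegrees S d i ≤ D) :
    (NS F S d : ℤ) = eulerCoeff MonicPrime.degree
      (diagonalFactor S (MonicPrime.X hD : MonicPrime F D) ∅) (polyDegrees S d) := by
  have hdegree (f : Fin k → F[X]) : (∀ i, ((f i).natDegree : ℤ) = polyDegrees S d i) ↔
      (∀ i ∈ S, ((f i).natDegree : ℤ) = d i) ∧ ∀ i ∉ S, ((f i).natDegree : ℤ) = -d i := by
    simp only [polyDegrees]
    grind
  have hbalanced (G : MonicPrime F D → Fin k → ℕ) :
      (∃ a b : ℕ, X ^ a * ∏ i ∈ S, MonicPrime.monomial (fun π => G π i) =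
        X ^ b * ∏ i ∈ Sᶜ, MonicPrime.monomial fun π => G π i) ↔
      ∀ π, π = MonicPrime.X hD ∨ IsBalanced S (G π) := by
    simp only [← MonicPrime.monomial_sum S fun i π => G π i,
      ← MonicPrime.monomial_sum Sᶜ fun i π => G π i,
      MonicPrime.exists_X_pow_mul_monomial_eq_iff hD, IsBalanced]
  rw [eulerCoeff_diagonalFactor_empty, Nat.cast_inj, NS]
  symm
  refine Set.ncard_congr (fun G _ i => MonicPrime.monomial fun π => G π i) (fun G hG => ?_)
    (fun G G' _ _ h => ?_) fun f ⟨hf, hS, hSc, hdiag⟩ => ?_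
  · have hG' (i : Fin k) := (mem_degreeTuples MonicPrime.degree_pos).mp hG.1 i
    simp only [tupleDegree, ← MonicPrime.natDegree_monomial] at hG'
    obtain ⟨hS, hSc⟩ := (hdegree _).mp hG'
    exact ⟨fun i => MonicPrime.monic_monomial _, hS, hSc, (hbalanced G).mpr hG.2⟩
  · exact funext₂ fun π i => congrFun (MonicPrime.monomial_injective (congrFun h i)) π
  · have hfd := (hdegree f).mpr ⟨hS, hSc⟩
    choose u hu using fun i =>
      MonicPrime.exists_monomial_eq (hf i) (Nat.cast_le.mp ((hfd i).trans_le (hd i)))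
    obtain rfl := funext hu
    refine ⟨fun π i => u i π, ⟨(mem_degreeTuples MonicPrime.degree_pos).mpr fun i => ?_,
      (hbalanced _).mp hdiag⟩, rfl⟩
    rw [← hfd i, MonicPrime.natDegree_monomial, tupleDegree]

theorem bS_eq_eulerCoeff (F : Type) [Field F] [Fintype F] {D : ℕ} (hD : 1 ≤ D) {d : Fin k → ℤ}
    (hd : ∀ i, polyDegrees S d i ≤ D) :
    bS F S d = (Fintype.card F : ℝ) ^ (-((∑ i, polyDegrees S d i : ℤ) : ℝ) / 2) *
      (eulerCoeff MonicPrime.degree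
        (diagonalFactor S (MonicPrime.X hD : MonicPrime F D) (S ×ˢ Sᶜ)) (polyDegrees S d) : ℤ) := by
  have hq : (0 : ℝ) < Fintype.card F := Nat.cast_pos.mpr Fintype.card_pos
  rw [← MonicPrime.isPolynomialLike.sum_powerset_eulerCoeff hD _ Subset.rfl hd,
    Nat.card_eq_fintype_card, bS, Int.cast_sum (S ×ˢ Sᶜ).powerset, mul_sum]
  refine sum_congr rfl fun J hJ => ?_
  rw [mem_powerset] at hJ
  have hdegrees : polyDegrees S (fun i => d i - vJ S J i) =
      fun i => polyDegrees S d i - edgeDegree J i :=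
    funext (polyDegrees_sub_vJ hJ d)
  have hexponent : -((∑ i, (polyDegrees S d i - edgeDegree J i) : ℤ) : ℝ) / 2 =
      -((∑ i, polyDegrees S d i : ℤ) : ℝ) / 2 + (#J : ℕ) := by
    have hsum : ∑ i, edgeDegree J i = #J + #J := by
      rw [← sum_add_sum_compl S, sum_edgeDegree_left hJ, sum_edgeDegree_right hJ]
    rw [sum_sub_distrib, ← Nat.cast_sum, hsum]
    push_cast
    ring
  have hNS := NS_eq_eulerCoeff F hD (S := S) (d := fun i => d i - vJ S J i) fun i => by
    rw [hdegrees]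
    exact (sub_le_self _ (Nat.cast_nonneg _)).trans (hd i)
  rw [wS, ← sum_polyDegrees, hdegrees, hexponent, Real.rpow_add hq, Real.rpow_natCast,
    ← Int.cast_natCast (NS F S _), hNS, hdegrees, neg_pow (Fintype.card F : ℤ)]
  push_cast
  ring

theorem bS_eq_zero_of_polyDegrees_neg (F : Type) [Field F] [Fintype F] {d : Fin k → ℤ} {i : Fin k}
    (hi : polyDegrees S d i < 0) : bS F S d = 0 := by
  have hle (j : Fin k) :
      polyDegrees S d j ≤ ((1 + ∑ j, (polyDegrees S d j).toNat : ℕ) : ℤ) := by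
    have := single_le_sum_of_canonicallyOrdered (f := fun j => (polyDegrees S d j).toNat)
      (mem_univ j)
    grind
  rw [bS_eq_eulerCoeff F le_self_add hle, eulerCoeff, degreeTuples_eq_empty _ hi, sum_empty,
    Int.cast_zero, mul_zero]

theorem abs_bS_le (F : Type) [Field F] [Fintype F] {Q : Finset (Fin k)} (hQ : HasDoubleWeight S Q)
    {d : Fin k → ℤ} (hd : ∀ i, 0 ≤ polyDegrees S d i) :
    |bS F S d| ≤ 2 ^ k ^ 2 * ((∑ i, polyDegrees S d i + 2 : ℤ) : ℝ) ^ labelExponent k *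
      (Fintype.card F : ℝ) ^ (-((∑ i ∈ Qᶜ, polyDegrees S d i : ℤ) : ℝ) / 2) := by
  lift polyDegrees S d to Fin k → ℕ using hd with a ha
  have hq : 1 ≤ Fintype.card F := Fintype.card_pos
  have hle (i : Fin k) : polyDegrees S d i ≤ (∑ i, a i + 1 : ℕ) := by
    rw [← ha]
    exact Nat.cast_le.mpr ((single_le_sum_of_canonicallyOrdered (mem_univ i)).trans
      (Nat.le_succ _))
  have hcoeff := MonicPrime.isPolynomialLike.abs_eulerCoeff_le
    (by rwa [Nat.card_eq_fintype_card]) hQ (MonicPrime.X (F := F) (Nat.le_add_left 1 _))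
    (Nat.le_succ (∑ i, a i))
  rw [Fintype.card_fin, Nat.card_eq_fintype_card, ← Int.cast_le (R := ℝ)] at hcoeff
  have hpow : (Fintype.card F : ℝ) ^ ((∑ i ∈ Q, a i) / 2) ≤
      (Fintype.card F : ℝ) ^ (((∑ i ∈ Q, a i : ℕ) : ℝ) / 2) := by
    rw [← Real.rpow_natCast]
    exact Real.rpow_le_rpow_of_exponent_le (mod_cast hq) Nat.cast_div_le
  have hexponent : -((∑ i ∈ Qᶜ, a i : ℕ) : ℝ) / 2 =
      -((∑ i, a i : ℕ) : ℝ) / 2 + ((∑ i ∈ Q, a i : ℕ) : ℝ) / 2 := by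
    rw [← sum_add_sum_compl Q, Nat.cast_add]
    ring
  rw [bS_eq_eulerCoeff F (Nat.le_add_left 1 _) hle, ← ha, abs_mul,
    Real.abs_rpow_of_nonneg (Nat.cast_nonneg _), Nat.abs_cast, ← Int.cast_abs]
  simp only [← Nat.cast_sum, Int.cast_natCast]
  rw [hexponent, Real.rpow_add (mod_cast hq), mul_left_comm]
  refine mul_le_mul_of_nonneg_left (hcoeff.trans ?_) (by positivity)
  push_cast at hpow ⊢
  rw [add_assoc, one_add_one_eq_two]
  gcongr

end Diagonal

section Vandermonde

variable {k : ℕ} {S : Finset (Fin k)}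

/-- The permutations mapping `S` to the initial segment of length `#S`, that is, the exponents of
the monomials in the product of the Vandermonde determinants of `S` and of its complement, the
latter multiplied by `x ^ #S`. -/
def blockPerms (S : Finset (Fin k)) : Finset (Equiv.Perm (Fin k)) :=
  {σ | ∀ i, (σ i : ℕ) < #S ↔ i ∈ S}

theorem mem_blockPerms {σ : Equiv.Perm (Fin k)} :
    σ ∈ blockPerms S ↔ ∀ i, (σ i : ℕ) < #S ↔ i ∈ S := by
  simp only [blockPerms, mem_filter_univ]

theorem map_eq_of_forall_lt {σ : Equiv.Perm (Fin k)} (hσ : ∀ i ∈ S, (σ i : ℕ) < #S) :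
    S.map σ.toEmbedding = ({i | (i : ℕ) < #S} : Finset (Fin k)) := by
  refine eq_of_subset_of_card_le (fun j hj => ?_) ?_
  · obtain ⟨i, hi, rfl⟩ := mem_map.mp hj
    exact mem_filter_univ _ |>.mpr (hσ i hi)
  · rw [Fin.card_filter_val_lt, card_map]
    exact min_le_right _ _

theorem mem_blockPerms_of_forall_lt {σ : Equiv.Perm (Fin k)} (hσ : ∀ i ∈ S, (σ i : ℕ) < #S) :
    σ ∈ blockPerms S := by
  refine mem_blockPerms.mpr fun i => ⟨fun hi => ?_, hσ i⟩
  have himage : σ i ∈ S.map σ.toEmbedding := by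
    rw [map_eq_of_forall_lt hσ]
    exact mem_filter_univ _ |>.mpr hi
  exact (mem_map' σ.toEmbedding).mp himage

variable {R : Type*} [CommRing R]

/-- A monic polynomial of degree `n` which vanishes at `x i` for `i ∈ S` unless `n < #S`. -/
def blockPolynomial (S : Finset (Fin k)) (x : Fin k → R) (n : ℕ) : R[X] :=
  if n < #S then X ^ n else X ^ (n - #S) * ∏ i ∈ S, (X - C (x i))

theorem isMonicOfDegree_blockPolynomial [Nontrivial R] (S : Finset (Fin k)) (x : Fin k → R)
    (n : ℕ) : IsMonicOfDegree (blockPolynomial S x n) n := by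
  rw [blockPolynomial]
  split_ifs with hn
  · exact isMonicOfDegree_X_pow _ _
  · have hprod : IsMonicOfDegree (∏ i ∈ S, (X - C (x i))) #S :=
      ⟨natDegree_finsetProd_X_sub_C_eq_card _ _, monic_prod_X_sub_C _ _⟩
    simpa only [Nat.sub_add_cancel (not_lt.mp hn)] using
      (isMonicOfDegree_X_pow R (n - #S)).mul hprod

theorem eval_blockPolynomial_of_mem (x : Fin k → R) {i : Fin k} (hi : i ∈ S) (n : ℕ) :
    (blockPolynomial S x n).eval (x i) = if n < #S then x i ^ n else 0 := by
  rw [blockPolynomial]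
  split_ifs
  · simp only [eval_pow, eval_X]
  · rw [eval_mul, eval_prod, prod_eq_zero hi, mul_zero]
    simp only [eval_sub, eval_X, eval_C, sub_self]

theorem eval_blockPolynomial_of_le {x y : Fin k → R} {j : Fin k} (hxy : x j * y j = 1) {n : ℕ}
    (hn : #S ≤ n) :
    (blockPolynomial S x n).eval (x j) = x j ^ n * ∏ i ∈ S, (1 - x i * y j) := by
  have hfactor (i : Fin k) : x j - x i = x j * (1 - x i * y j) := by
    linear_combination x i * hxy
  rw [blockPolynomial, if_neg hn.not_gt]
  simp only [eval_mul, eval_pow, eval_X, eval_prod, eval_sub, eval_C, hfactor, prod_mul_distrib,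
    prod_const]
  rw [← mul_assoc, ← pow_add, Nat.sub_add_cancel hn]

theorem prod_eval_blockPolynomial {x y : Fin k → R} (hxy : ∀ j, x j * y j = 1)
    (σ : Equiv.Perm (Fin k)) :
    ∏ i, (blockPolynomial S x (σ i)).eval (x i) =
      if σ ∈ blockPerms S then (∏ i, x i ^ (σ i : ℕ)) * ∏ p ∈ S ×ˢ Sᶜ, (1 - x p.1 * y p.2)
      else 0 := by
  split_ifs with hσ
  · rw [mem_blockPerms] at hσ
    rw [← prod_mul_prod_compl S, ← prod_mul_prod_compl S fun i => x i ^ (σ i : ℕ), mul_assoc,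
      prod_product_right, ← prod_mul_distrib]
    refine congrArg₂ _ (prod_congr rfl fun i hi => ?_) (prod_congr rfl fun j hj => ?_)
    · rw [eval_blockPolynomial_of_mem x hi, if_pos ((hσ i).mpr hi)]
    · exact eval_blockPolynomial_of_le (hxy j)
        (not_lt.mp fun h => mem_compl.mp hj ((hσ j).mp h))
  · obtain ⟨i, hi, hlt⟩ : ∃ i ∈ S, ¬(σ i : ℕ) < #S := by
      by_contra! h
      exact hσ (mem_blockPerms_of_forall_lt h)
    exact prod_eq_zero (mem_univ i) (by rw [eval_blockPolynomial_of_mem x hi, if_neg hlt])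

/-- Row reduction replaces the monomials `X ^ n` of the Vandermonde matrix by the polynomials
`blockPolynomial S x n`, which makes it block triangular. -/
theorem det_vandermonde_eq_sum_blockPerms [Nontrivial R] (S : Finset (Fin k)) {x y : Fin k → R}
    (hxy : ∀ j, x j * y j = 1) :
    (Matrix.vandermonde x).det = ∑ σ ∈ blockPerms S, Equiv.Perm.sign σ •
      ((∏ i, x i ^ (σ i : ℕ)) * ∏ p ∈ S ×ˢ Sᶜ, (1 - x p.1 * y p.2)) := by
  rw [Matrix.det_eval_matrixOfPolynomials_eq_det_vandermonde x (fun j => blockPolynomial S x j)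
    (fun j => (isMonicOfDegree_blockPolynomial S x j).natDegree_eq)
    (fun j => (isMonicOfDegree_blockPolynomial S x j).monic), ← Matrix.det_transpose,
    Matrix.det_apply]
  simp only [Matrix.transpose_apply, Matrix.of_apply, prod_eval_blockPolynomial hxy, smul_ite,
    smul_zero]
  rw [← sum_filter, filter_mem_eq_inter, univ_inter]

end Vandermonde

section ShiftedSum

variable {G : Type*} [AddCommGroup G]

/-- The coefficient at `d` of the product of a Laurent polynomial and the formal series whose
coefficients are `W`. -/
def mulCoeff (W : G → ℝ) (d : G) : AddMonoidAlgebra ℝ G →ₗ[ℝ] ℝ :=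
  (AddMonoidAlgebra.basis G ℝ).constr ℝ fun e => W (d - e)

theorem mulCoeff_single (W : G → ℝ) (d e : G) :
    mulCoeff W d (AddMonoidAlgebra.single e 1) = W (d - e) :=
  (AddMonoidAlgebra.basis G ℝ).constr_basis ℝ _ e

theorem mulCoeff_single_mul_prod {α : Type*} (W : G → ℝ) (d e : G) (E : Finset α)
    (v : α → G) :
    mulCoeff W d (AddMonoidAlgebra.single e 1 * ∏ p ∈ E, (1 - AddMonoidAlgebra.single (v p) 1)) =
      ∑ J ∈ E.powerset, (-1) ^ #J * W (d - e - ∑ p ∈ J, v p) := by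
  classical
  simp only [prod_sub, prod_const_one, mul_one, AddMonoidAlgebra.prod_single, mul_sum, map_sum]
  refine sum_congr rfl fun J _ => ?_
  have hsmul (f : AddMonoidAlgebra ℝ G) : (-1) ^ #J * f = ((-1) ^ #J : ℝ) • f := by
    rw [Algebra.smul_def, map_pow, map_neg, map_one]
  rw [mul_left_comm, AddMonoidAlgebra.single_mul_single, mul_one, hsmul, map_smul, smul_eq_mul,
    mulCoeff_single, sub_sub]

end ShiftedSum

section Antisymmetrized

variable {k : ℕ} {S : Finset (Fin k)}

theorem sum_single_sub_single {J : Finset (Fin k × Fin k)} (hJ : J ⊆ S ×ˢ Sᶜ) :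
    ∑ p ∈ J, (Pi.single p.1 1 + -Pi.single p.2 1) = vJ S J := by
  funext i
  have hmem {p : Fin k × Fin k} (hp : p ∈ J) := mem_product.mp (hJ hp)
  simp only [Finset.sum_apply, Pi.add_apply, Pi.neg_apply, Pi.single_apply, sum_add_distrib,
    sum_neg_distrib, sum_boole, vJ, eq_comm (a := i)]
  split_ifs with hi
  · rw [filter_false_of_mem fun p hp (h : p.2 = i) => mem_compl.mp (hmem hp).2 (h ▸ hi), card_empty,
      Nat.cast_zero, neg_zero, add_zero]
  · rw [filter_false_of_mem fun p hp (h : p.1 = i) => hi (h ▸ (hmem hp).1), card_empty,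
      Nat.cast_zero, zero_add]

theorem prod_single_pow (n : Fin k → ℕ) :
    ∏ i, (.single (Pi.single i 1) 1 : AddMonoidAlgebra ℝ (Fin k → ℤ)) ^ n i =
      .single (fun i => (n i : ℤ)) 1 := by
  simp only [AddMonoidAlgebra.single_pow, AddMonoidAlgebra.prod_single, one_pow, prod_const_one]
  refine congrArg (AddMonoidAlgebra.single · 1) (funext fun i => ?_)
  simp only [Finset.sum_apply, Pi.smul_apply, Pi.single_apply, smul_ite, smul_zero, nsmul_one,
    sum_ite_eq, mem_univ, if_true]

theorem cS_eq_sum_blockPerms (F : Type) [Field F] [Fintype F] (S : Finset (Fin k))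
    (d : Fin k → ℤ) :
    cS F S d = (-1) ^ (k * (k - 1) / 2) * ∑ σ ∈ blockPerms S,
      ((Equiv.Perm.sign σ : ℤ) : ℝ) * bS F S fun i => d i - (σ i : ℕ) := by
  let x (i : Fin k) : AddMonoidAlgebra ℝ (Fin k → ℤ) := .single (Pi.single i 1) 1
  let y (i : Fin k) : AddMonoidAlgebra ℝ (Fin k → ℤ) := .single (-Pi.single i 1) 1
  have hxy (i : Fin k) : x i * y i = 1 := by
    rw [AddMonoidAlgebra.single_mul_single, add_neg_cancel, mul_one, AddMonoidAlgebra.one_def]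
  have hwS (σ : Equiv.Perm (Fin k)) : mulCoeff (wS F S) d (∏ i, x i ^ (σ i : ℕ)) =
      wS F S fun i => d i - (σ i : ℕ) := by
    simp only [x]
    rw [prod_single_pow fun i => σ i, mulCoeff_single]
    rfl
  have hbS (σ : Equiv.Perm (Fin k)) :
      mulCoeff (wS F S) d ((∏ i, x i ^ (σ i : ℕ)) * ∏ p ∈ S ×ˢ Sᶜ, (1 - x p.1 * y p.2)) =
        bS F S fun i => d i - (σ i : ℕ) := by
    simp only [x, y, prod_single_pow fun i => σ i, AddMonoidAlgebra.single_mul_single, mul_one]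
    rw [mulCoeff_single_mul_prod, bS]
    refine sum_congr rfl fun J hJ => ?_
    rw [sum_single_sub_single (mem_powerset.mp hJ)]
    rfl
  have hdet := congrArg (mulCoeff (wS F S) d) (det_vandermonde_eq_sum_blockPerms S hxy)
  rw [← Matrix.det_transpose, Matrix.det_apply] at hdet
  simp only [Matrix.transpose_apply, Matrix.vandermonde_apply, map_sum, Units.smul_def, map_zsmul,
    hwS, hbS] at hdet
  simp only [zsmul_eq_mul] at hdet
  rw [cS, hdet]

end Antisymmetrized

section ShiftedDegrees

variable {k : ℕ} {S : Finset (Fin k)} {σ : Equiv.Perm (Fin k)}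

theorem sum_val_of_mem_blockPerms (hσ : σ ∈ blockPerms S) :
    ∑ i ∈ S, (σ i : ℕ) = (#S).choose 2 := by
  have hrange : (S.map σ.toEmbedding).map Fin.valEmbedding = range #S := by
    rw [map_eq_of_forall_lt fun i hi => (mem_blockPerms.mp hσ i).mpr hi]
    ext n
    simp only [mem_map, mem_filter_univ, Fin.valEmbedding_apply, mem_range]
    refine ⟨fun ⟨_, hi, hin⟩ => hin ▸ hi, fun hn => ⟨⟨n, hn.trans_le ?_⟩, hn, rfl⟩⟩
    exact card_finset_fin_le S
  rw [Nat.choose_two_right, ← sum_range_id, ← hrange, sum_map, sum_map]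
  rfl

theorem sum_perm_val (σ : Equiv.Perm (Fin k)) : ∑ i, (σ i : ℕ) = k.choose 2 := by
  rw [Equiv.sum_comp σ fun i => (i : ℕ), Fin.sum_univ_eq_sum_range fun i => i, sum_range_id,
    Nat.choose_two_right]

theorem sum_compl_val_of_mem_blockPerms (hσ : σ ∈ blockPerms S) :
    ∑ i ∈ Sᶜ, (σ i : ℤ) = k.choose 2 - (#S).choose 2 := by
  rw [← sum_perm_val σ, ← sum_val_of_mem_blockPerms hσ, ← sum_add_sum_compl S]
  push_cast
  ring

theorem sum_polyDegrees_sub_left (hσ : σ ∈ blockPerms S) (d : Fin k → ℤ) :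
    ∑ i ∈ S, polyDegrees S (fun i => d i - (σ i : ℕ)) i = ∑ i ∈ S, d i - (#S).choose 2 := by
  rw [← sum_val_of_mem_blockPerms hσ, Nat.cast_sum, ← sum_sub_distrib]
  exact sum_congr rfl fun i hi => if_pos hi

theorem sum_polyDegrees_sub_right (hσ : σ ∈ blockPerms S) (d : Fin k → ℤ) :
    ∑ i ∈ Sᶜ, polyDegrees S (fun i => d i - (σ i : ℕ)) i =
      k.choose 2 - (#S).choose 2 - ∑ i ∈ Sᶜ, d i := by
  rw [← sum_compl_val_of_mem_blockPerms hσ, ← sum_sub_distrib]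
  exact sum_congr rfl fun i hi => (if_neg (mem_compl.mp hi)).trans (neg_sub _ _)

theorem add_one_le_sum_pair_polyDegrees_sub (hσ : σ ∈ blockPerms S) (d : Fin k → ℤ) {i j : Fin k}
    (hi : i ∈ S) (hj : j ∈ Sᶜ) :
    d i - d j + 1 ≤ ∑ l ∈ {i, j}, polyDegrees S (fun l => d l - (σ l : ℕ)) l := by
  have hij : i ≠ j := fun h => mem_compl.mp hj (h ▸ hi)
  have hlt : (σ i : ℕ) < #S := (mem_blockPerms.mp hσ i).mpr hi
  have hle : #S ≤ σ j := not_lt.mp fun h => mem_compl.mp hj ((mem_blockPerms.mp hσ j).mp h)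
  rw [sum_pair hij, polyDegrees, polyDegrees, if_pos hi, if_neg (mem_compl.mp hj)]
  omega

theorem exists_hasDoubleWeight_sup'_sub_inf' (hσ : σ ∈ blockPerms S) (d : Fin k → ℤ)
    (hS : S.Nonempty) (hSc : Sᶜ.Nonempty) :
    ∃ Q, HasDoubleWeight S Q ∧ S.sup' hS d - Sᶜ.inf' hSc d + 1 ≤
      ∑ i ∈ Qᶜ, polyDegrees S (fun i => d i - (σ i : ℕ)) i := by
  obtain ⟨i, hi, hmax⟩ := exists_mem_eq_sup' hS d
  obtain ⟨j, hj, hmin⟩ := exists_mem_eq_inf' hSc d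
  refine ⟨{i, j}ᶜ, hasDoubleWeight_compl_pair hi hj, ?_⟩
  rw [compl_compl, hmax, hmin]
  exact add_one_le_sum_pair_polyDegrees_sub hσ d hi hj

theorem exists_hasDoubleWeight_abs (hσ : σ ∈ blockPerms S) {d : Fin k → ℤ}
    (hd : ∀ i, 0 ≤ polyDegrees S (fun i => d i - (σ i : ℕ)) i) :
    ∃ Q, HasDoubleWeight S Q ∧ |∑ i ∈ S, d i + ∑ i ∈ Sᶜ, d i - (k.choose 2 : ℤ)| ≤
      ∑ i ∈ Qᶜ, polyDegrees S (fun i => d i - (σ i : ℕ)) i := by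
  have hleft := sum_nonneg fun i (_ : i ∈ S) => hd i
  have hright := sum_nonneg fun i (_ : i ∈ Sᶜ) => hd i
  have hdiff : ∑ i ∈ S, d i + ∑ i ∈ Sᶜ, d i - (k.choose 2 : ℤ) =
      ∑ i ∈ S, polyDegrees S (fun i => d i - (σ i : ℕ)) i -
        ∑ i ∈ Sᶜ, polyDegrees S (fun i => d i - (σ i : ℕ)) i := by
    rw [sum_polyDegrees_sub_left hσ, sum_polyDegrees_sub_right hσ]
    ring
  rw [hdiff]
  rcases abs_cases (∑ i ∈ S, polyDegrees S (fun i => d i - (σ i : ℕ)) i -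
    ∑ i ∈ Sᶜ, polyDegrees S (fun i => d i - (σ i : ℕ)) i) with ⟨habs, -⟩ | ⟨habs, -⟩
  · refine ⟨Sᶜ, hasDoubleWeight_right S, ?_⟩
    rw [habs, compl_compl]
    exact sub_le_self _ hright
  · refine ⟨S, hasDoubleWeight_left S, ?_⟩
    rw [habs, neg_sub]
    exact sub_le_self _ hleft

end ShiftedDegrees

section CoefficientBound

variable {k : ℕ} {S : Finset (Fin k)}

theorem abs_cS_le_of_forall_blockPerms (F : Type) [Field F] [Fintype F] {d : Fin k → ℤ} {M : ℝ}
    (hM : 0 ≤ M) (h : ∀ σ ∈ blockPerms S, |bS F S fun i => d i - (σ i : ℕ)| ≤ M) :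
    |cS F S d| ≤ k.factorial * M := by
  have hcard : #(blockPerms S) ≤ k.factorial := by
    simpa only [card_univ, Fintype.card_perm, Fintype.card_fin] using card_le_univ (blockPerms S)
  have hsign (σ : Equiv.Perm (Fin k)) : |((Equiv.Perm.sign σ : ℤ) : ℝ)| = 1 := by
    rw [← Int.cast_abs, Int.isUnit_iff_abs_eq.mp (Equiv.Perm.sign σ).isUnit, Int.cast_one]
  rw [cS_eq_sum_blockPerms, abs_mul, abs_neg_one_pow, one_mul]
  calc _ ≤ ∑ σ ∈ blockPerms S, |((Equiv.Perm.sign σ : ℤ) : ℝ) * bS F S fun i => d i - (σ i : ℕ)| :=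
        abs_sum_le_sum_abs _ _
    _ ≤ ∑ _σ ∈ blockPerms S, M :=
        sum_le_sum fun σ hσ => by rw [abs_mul, hsign, one_mul]; exact h σ hσ
    _ ≤ k.factorial * M := by
        rw [sum_const, nsmul_eq_mul]
        exact mul_le_mul_of_nonneg_right (mod_cast hcard) hM

theorem labelExponent_pos (k : ℕ) : 0 < labelExponent k := by
  rw [labelExponent]
  positivity

theorem abs_bS_sub_le (F : Type) [Field F] [Fintype F] {σ : Equiv.Perm (Fin k)}
    (hσ : σ ∈ blockPerms S) {d : Fin k → ℤ} {Q : Finset (Fin k)} (hQ : HasDoubleWeight S Q)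
    {n : ℤ} (hn : -∑ i ∈ Qᶜ, polyDegrees S (fun i => d i - (σ i : ℕ)) i ≤ n)
    (hd : ∀ i, 0 ≤ polyDegrees S (fun i => d i - (σ i : ℕ)) i) :
    |bS F S fun i => d i - (σ i : ℕ)| ≤ 2 ^ k ^ 2 *
      ((2 + (k * (k - 1) / 2 : ℕ) : ℤ) + ((∑ i ∈ S, d i) - ∑ i ∈ Sᶜ, d i) : ℝ) ^
        (2 * labelExponent k) * (Fintype.card F : ℝ) ^ ((n : ℝ) / 2) := by
  have hbase : ((∑ i, polyDegrees S (fun i => d i - (σ i : ℕ)) i + 2 : ℤ) : ℝ) ≤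
      (2 + (k * (k - 1) / 2 : ℕ) : ℤ) + ((∑ i ∈ S, d i) - ∑ i ∈ Sᶜ, d i) := by
    rw [← sum_add_sum_compl S, sum_polyDegrees_sub_left hσ, sum_polyDegrees_sub_right hσ,
      ← Nat.choose_two_right]
    push_cast
    linarith [((#S).choose 2).cast_nonneg (α := ℝ)]
  have hone : (1 : ℝ) ≤ (∑ i, polyDegrees S (fun i => d i - (σ i : ℕ)) i + 2 : ℤ) :=
    Int.cast_one_le_of_pos ((sum_nonneg fun i _ => hd i).trans_lt (lt_add_of_pos_right _ two_pos))
  have hcard : (1 : ℝ) ≤ Fintype.card F := Nat.one_le_cast.mpr Fintype.card_pos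
  refine (abs_bS_le F hQ hd).trans ?_
  gcongr ?_ * ?_ * (Fintype.card F : ℝ) ^ (?_ / 2)
  · exact mul_nonneg (by positivity) ((even_two_mul _).pow_nonneg _)
  · exact (pow_le_pow_left₀ (zero_le_one.trans hone) hbase _).trans
      (pow_le_pow_right₀ (hone.trans hbase) (Nat.le_mul_of_pos_left _ two_pos))
  · exact_mod_cast hn

end CoefficientBound

theorem statement11_general (k : ℕ) :
    ∃ (C : ℝ) (K : ℕ), 0 < C ∧ 0 < K ∧
      ∀ (F : Type) [Field F] [Fintype F] (S : Finset (Fin k)) (hS : S.Nonempty)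
        (hSc : Sᶜ.Nonempty) (d : Fin k → ℤ),
        |cS F S d| ≤ C *
          ((((2 + (k * (k - 1) / 2 : ℕ) : ℤ) + ((∑ i ∈ S, d i) - ∑ i ∈ Sᶜ, d i))) : ℝ) ^ K *
          min
            (min ((Fintype.card F : ℝ) ^
                    ((((-(S.sup' hS d) + Sᶜ.inf' hSc d - 1 : ℤ)) : ℝ) / 2))
                 ((Fintype.card F : ℝ) ^
                    ((((-(∑ i ∈ S, d i) + (S.card.choose 2 : ℤ) : ℤ)) : ℝ) / 2)))
            (min ((Fintype.card F : ℝ) ^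
                    (((((∑ i ∈ Sᶜ, d i) + (S.card.choose 2 : ℤ) - (k.choose 2 : ℤ) : ℤ)) : ℝ) / 2))
                 ((Fintype.card F : ℝ) ^
                    (-|((((∑ i ∈ S, d i) + ∑ i ∈ Sᶜ, d i - (k.choose 2 : ℤ) : ℤ)) : ℝ)| / 2))) := by
  -- An even exponent keeps the bound nonnegative where its base is negative; there `cS` vanishes.
  refine ⟨k.factorial * 2 ^ k ^ 2, 2 * labelExponent k, by positivity,
    Nat.mul_pos two_pos (labelExponent_pos k), fun F _ _ S hS hSc d => ?_⟩
  have hpow := (even_two_mul (labelExponent k)).pow_nonneg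
    ((2 + (k * (k - 1) / 2 : ℕ) : ℤ) + ((∑ i ∈ S, d i) - ∑ i ∈ Sᶜ, d i) : ℝ)
  rw [mul_assoc (k.factorial : ℝ), mul_assoc (k.factorial : ℝ)]
  refine abs_cS_le_of_forall_blockPerms F (by positivity) fun σ hσ => ?_
  by_cases! hd : ∃ i, polyDegrees S (fun i => d i - (σ i : ℕ)) i < 0
  · obtain ⟨i, hi⟩ := hd
    rw [bS_eq_zero_of_polyDegrees_neg F hi, abs_zero]
    positivity
  obtain ⟨Q, hQ, hsup⟩ := exists_hasDoubleWeight_sup'_sub_inf' hσ d hS hSc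
  obtain ⟨Q', hQ', habs⟩ := exists_hasDoubleWeight_abs hσ hd
  rw [← Int.cast_abs, ← Int.cast_neg]
  rw [mul_min_of_nonneg _ _ (by positivity), mul_min_of_nonneg _ _ (by positivity),
    mul_min_of_nonneg _ _ (by positivity)]
  refine le_min (le_min ?_ ?_) (le_min ?_ ?_)
  · exact abs_bS_sub_le F hσ hQ (by omega) hd
  · refine abs_bS_sub_le F hσ (hasDoubleWeight_right S) ?_ hd
    rw [compl_compl, sum_polyDegrees_sub_left hσ, neg_sub', sub_neg_eq_add]
  · refine abs_bS_sub_le F hσ (hasDoubleWeight_left S) ?_ hd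
    rw [sum_polyDegrees_sub_right hσ]
    omega
  · exact abs_bS_sub_le F hσ hQ' (neg_le_neg habs) hd

end

/-- the bound on the coefficients `c_S(d)` of `M_S`, with constants
`C, K` depending only on `k`, for `d` in the support region of Lemma `M-support`. -/
theorem statement11 (k : ℕ) (hk : 1 ≤ k) :
    ∃ C K : ℝ, 0 < C ∧ 0 < K ∧
      ∀ (F : Type) [Field F] [Fintype F],
      ∀ (S : Finset (Fin k)) (hS : S.Nonempty) (hSc : Sᶜ.Nonempty) (d : Fin k → ℤ),
        (∃ σ : Equiv.Perm (Fin k),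
          (∀ i : Fin k, ((i : ℕ) < S.card ↔ σ i ∈ S)) ∧
          (∀ i : Fin k, (i : ℕ) < S.card → ((i : ℕ) : ℤ) ≤ d (σ i)) ∧
          (∀ i : Fin k, S.card ≤ (i : ℕ) → d (σ i) ≤ ((i : ℕ) : ℤ))) →
        |cS F S d| ≤ C *
          ((((2 + (k * (k - 1) / 2 : ℕ) : ℤ) + ((∑ i ∈ S, d i) - ∑ i ∈ Sᶜ, d i))) : ℝ) ^ K *
          min
            (min ((Fintype.card F : ℝ) ^
                    ((((-(S.sup' hS d) + Sᶜ.inf' hSc d - 1 : ℤ)) : ℝ) / 2))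
                 ((Fintype.card F : ℝ) ^
                    ((((-(∑ i ∈ S, d i) + (S.card.choose 2 : ℤ) : ℤ)) : ℝ) / 2)))
            (min ((Fintype.card F : ℝ) ^
                    (((((∑ i ∈ Sᶜ, d i) + (S.card.choose 2 : ℤ) - (k.choose 2 : ℤ) : ℤ)) : ℝ) / 2))
                 ((Fintype.card F : ℝ) ^
                    (-|((((∑ i ∈ S, d i) + ∑ i ∈ Sᶜ, d i - (k.choose 2 : ℤ) : ℤ)) : ℝ)| / 2))) := by
  obtain ⟨C, K, hC, hK, h⟩ := statement11_general k
  exact ⟨C, K, hC, Nat.cast_pos.mpr hK, fun F _ _ S hS hSc d _ => by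
    simpa only [Real.rpow_natCast] using h F S hS hSc d⟩

end
end

section
/- Let r ≥ 0 and r̃ ≥ 0 be integers with k := r + r̃ ≥ 1, and let S ⊆ {1,…,k}. Suppose ν ∈ ℂ satisfies ε_χ^{r−|S|} = ν for every χ ∈ S_{n,q}. Let d_1, …, d_k be integers with 0 ≤ d_i ≤ n−1 for all i, Σ_{i∈S} d_i ≤ n−1, and Σ_{i∉S} (n−1−d_i) ≤ n−1. Then Σ_{χ ∈ S_{n,q}} ε_χ^{−r̃} ∏_{i=1}^k λ_{d_i}(χ) = ν · (q^n − q^{n−1}) · q^{−(Σ_{i∈S} d_i + Σ_{i∉S}(n−1−d_i))/2} · N, where N is the number of tuples of monic polynomials ((f_i)_{i∈S}, (g_i)_{i∉S}) in F_q[T] with deg f_i = d_i for i ∈ S, deg g_i = n−1−d_i for i ∉ S, and T^a ∏_{i∈S} f_i = T^b ∏_{i∉S} g_i for some natural numbers a, b. -/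
/-!
Summing over polynomials of degree at most `d` and reversing coefficients, the coefficient sums of
an even character become sums over a subspace of `F_q[x]/(x^(n+1))`. Under the pairing `(u, w) ↦
[x^n] u w`, the polynomials of degree at most `d` and of degree at most `n-1-d` are each other's
annihilators, so evaluating `∑_w ∑_u ψ(u) 1_{[x^n] u w = 0}` in two ways gives, for primitive `ψ`,
the functional equation `λ_d = ε conj(λ_{n-1-d})`; taking `d = 0` shows `ε ≠ 0`. Applied to the
factors with index outside `S`, it turns the moment into `ν` times a sum over `χ` of `∏_{i ∈ S}
λ_{d_i} ∏_{i ∉ S} conj(λ_{n-1-d_i})`. The imprimitive even characters are those trivial on the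
larger group of units congruent to a constant modulo `x^n`, so orthogonality for two nested groups
of characters evaluates the sum of `χ(f) conj(χ(g))` for `f` and `g` of degree at most `n - 1`: it
is `q^n - q^(n-1)` when the reversals of `f` and `g` agree, that is when `f` and `g` agree up to
powers of `T`, and `0` otherwise.
-/

open Polynomial

noncomputable section

/-- The ring `F_q[x]/(x^(n+1))`. -/
abbrev QuotR (F : Type) [Field F] (n : ℕ) : Type :=
  Polynomial F ⧸ Ideal.span {(Polynomial.X : Polynomial F) ^ (n + 1)}

/-- The quotient map `F_q[x] → F_q[x]/(x^(n+1))`. -/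
def mkR (F : Type) [Field F] (n : ℕ) : Polynomial F →+* QuotR F n :=
  Ideal.Quotient.mk _

/-- A Dirichlet character modulo `x^(n+1)` is even if it is trivial on the constants. -/
def IsEvenChar (F : Type) [Field F] (n : ℕ) (ψ : MulChar (QuotR F n) ℂ) : Prop :=
  ∀ c : F, c ≠ 0 → ψ (mkR F n (Polynomial.C c)) = 1

/-- A Dirichlet character modulo `x^(n+1)` is primitive if it is nontrivial on the
units congruent to `1` modulo `x^n` (which are exactly the `1 + a x^n`). -/
def IsPrimitiveChar (F : Type) [Field F] (n : ℕ) (ψ : MulChar (QuotR F n) ℂ) : Prop :=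
  ∃ a : F, ψ (mkR F n (1 + Polynomial.C a * Polynomial.X ^ n)) ≠ 1

/-- The function `χ` on (monic) polynomials attached to a Dirichlet character `ψ`:
`χ(f) = ψ(f(x⁻¹) x^(deg f) mod x^(n+1))`. -/
def attachedChar (F : Type) [Field F] (n : ℕ) (ψ : MulChar (QuotR F n) ℂ) :
    Polynomial F → ℂ :=
  fun f => ψ (mkR F n f.reverse)

/-- The family `S_{n,q}` of functions attached to primitive even Dirichlet characters. -/
def Snq (F : Type) [Field F] (n : ℕ) : Set (Polynomial F → ℂ) :=
  {χ | ∃ ψ : MulChar (QuotR F n) ℂ,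
    IsEvenChar F n ψ ∧ IsPrimitiveChar F n ψ ∧ χ = attachedChar F n ψ}

/-- The sum of `χ(f)` over monic polynomials of degree `d`. -/
def coeffSum (F : Type) [Field F] (χ : Polynomial F → ℂ) (d : ℕ) : ℂ :=
  ∑ᶠ f ∈ {f : Polynomial F | f.Monic ∧ f.natDegree = d}, χ f

/-- `λ_d(χ) = q^(-d/2) ∑_{f monic, deg f = d} χ(f)`. -/
def lam (F : Type) [Field F] [Fintype F] (χ : Polynomial F → ℂ) (d : ℕ) : ℂ :=
  ((((Fintype.card F : ℝ) ^ (-(d : ℝ) / 2) : ℝ)) : ℂ) * coeffSum F χ d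

/-- The epsilon factor `ε_χ = λ_{n-1}(χ)`. -/
def epsFactor (F : Type) [Field F] [Fintype F] (n : ℕ) (χ : Polynomial F → ℂ) : ℂ :=
  lam F χ (n - 1)

/-- The L-function `L(s,χ) = ∑_{d=0}^{n-1} λ_d(χ) q^(d(1/2-s))`. -/
def Lfun (F : Type) [Field F] [Fintype F] (n : ℕ) (χ : Polynomial F → ℂ) (s : ℂ) : ℂ :=
  ∑ d ∈ Finset.range n, lam F χ d * (Fintype.card F : ℂ) ^ ((d : ℂ) * (1 / 2 - s))

section Reverse

lemma reverse_prod {R ι : Type*} [CommSemiring R] [NoZeroDivisors R] (s : Finset ι)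
    (f : ι → R[X]) : (∏ i ∈ s, f i).reverse = ∏ i ∈ s, (f i).reverse := by
  classical
  induction s using Finset.induction_on with
  | empty => simpa using reverse_C (1 : R)
  | insert i s hi ih =>
    rw [Finset.prod_insert hi, Finset.prod_insert hi, reverse_mul_of_domain, ih]

lemma X_pow_mul_eq_of_reverse_eq {R : Type*} [Semiring R] {f g : R[X]}
    (h : f.reverse = g.reverse) : X ^ g.natDegree * f = X ^ f.natDegree * g := by
  have hreflect : reflect (g.natDegree + f.natDegree) (X ^ g.natDegree * f) =
      reflect (g.natDegree + f.natDegree) (X ^ f.natDegree * g) := by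
    rw [reflect_mul _ _ (natDegree_X_pow_le _) le_rfl, add_comm g.natDegree,
      reflect_mul _ _ (natDegree_X_pow_le _) le_rfl, ← reverse, ← reverse, h]
    simp only [reflect_monomial, revAt_le le_rfl, Nat.sub_self]
  simpa only [reflect_reflect] using congrArg (reflect (g.natDegree + f.natDegree)) hreflect

lemma reverse_eq_reverse_iff {R : Type*} [Semiring R] {f g : R[X]} :
    f.reverse = g.reverse ↔ ∃ a b : ℕ, X ^ a * f = X ^ b * g := by
  refine ⟨fun h => ⟨_, _, X_pow_mul_eq_of_reverse_eq h⟩, ?_⟩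
  rintro ⟨a, b, h⟩
  rw [← reverse_X_pow_mul f a, h, reverse_X_pow_mul]

lemma eq_of_reverse_eq_of_natDegree_eq {R : Type*} [Semiring R] {f g : R[X]}
    (h : f.reverse = g.reverse) (hdeg : f.natDegree = g.natDegree) : f = g := by
  rw [reverse, reverse, hdeg] at h
  simpa only [reflect_reflect] using congrArg (reflect g.natDegree) h

lemma natDegree_reflect_eq {R : Type*} [Semiring R] {p : R[X]} {m : ℕ} (hp : p.natDegree ≤ m)
    (h0 : p.coeff 0 ≠ 0) : (reflect m p).natDegree = m := by
  refine natDegree_eq_of_le_of_coeff_ne_zero ?_ ?_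
  · exact natDegree_reflect_le.trans_eq (max_eq_left hp)
  · rwa [coeff_reflect, revAt_le le_rfl, Nat.sub_self]

lemma exists_monic_reverse_eq {R : Type*} [Semiring R] [Nontrivial R] {p : R[X]} {m : ℕ}
    (hp : p.natDegree ≤ m) (h0 : p.coeff 0 = 1) :
    ∃ f : R[X], f.Monic ∧ f.natDegree = m ∧ f.reverse = p := by
  have hdeg : (reflect m p).natDegree = m := natDegree_reflect_eq hp (by simp [h0])
  refine ⟨reflect m p, ?_, hdeg, by rw [reverse, hdeg, reflect_reflect]⟩
  rw [Monic, leadingCoeff, hdeg, coeff_reflect, revAt_le le_rfl, Nat.sub_self, h0]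

lemma exists_monic_C_mul_reverse_eq {F : Type*} [Field F] {p : F[X]} {m : ℕ}
    (hp : p.natDegree ≤ m) (h0 : p.coeff 0 ≠ 0) :
    ∃ f : F[X], f.Monic ∧ f.natDegree = m ∧ C (p.coeff 0) * f.reverse = p := by
  obtain ⟨f, hf, hdeg, hrev⟩ := exists_monic_reverse_eq (p := C (p.coeff 0)⁻¹ * p)
    ((natDegree_C_mul_le _ _).trans hp) (by simp [h0])
  exact ⟨f, hf, hdeg, by rw [hrev, ← mul_assoc, ← C_mul, mul_inv_cancel₀ h0, C_1, one_mul]⟩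

end Reverse

section FinitePolynomials

variable (F : Type) [Field F]

variable {F} in
lemma mem_degreeLT_succ {m : ℕ} {p : F[X]} : p ∈ degreeLT F (m + 1) ↔ p.natDegree ≤ m := by
  rw [degreeLT_succ_eq_degreeLE, mem_degreeLE, natDegree_le_iff_degree_le]

lemma finrank_degreeLT (m : ℕ) : Module.finrank F (degreeLT F m) = m := by
  simpa only [Fintype.card_fin] using Module.finrank_eq_card_basis (degreeLT.basis F m)

instance [Finite F] (m : ℕ) : Fintype (degreeLT F m) :=
  have := Module.finite_of_finite F (M := degreeLT F m)
  .ofFinite _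

lemma card_degreeLT [Fintype F] (m : ℕ) :
    Fintype.card (degreeLT F m) = Fintype.card F ^ m := by
  rw [Module.card_eq_pow_finrank (K := F), finrank_degreeLT]

lemma finite_monic_natDegree_eq [Finite F] (d : ℕ) :
    {f : F[X] | f.Monic ∧ f.natDegree = d}.Finite :=
  .of_equiv _ (monicEquivDegreeLT (R := F) d).symm

/-- The monic polynomials of degree `d`, as a finite set that sums can range over. -/
def monicsOfDegree [Finite F] (d : ℕ) : Finset F[X] :=
  (finite_monic_natDegree_eq F d).toFinset

variable {F}

lemma mem_monicsOfDegree [Finite F] {d : ℕ} {f : F[X]} :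
    f ∈ monicsOfDegree F d ↔ f.Monic ∧ f.natDegree = d :=
  (finite_monic_natDegree_eq F d).mem_toFinset

lemma monicsOfDegree_zero [Finite F] : monicsOfDegree F 0 = {1} := by
  ext f
  rw [mem_monicsOfDegree, Finset.mem_singleton]
  exact ⟨fun h => h.1.natDegree_eq_zero.1 h.2, by rintro rfl; simp⟩

lemma card_monicsOfDegree [Fintype F] (d : ℕ) :
    (monicsOfDegree F d).card = Fintype.card F ^ d := by
  rw [← card_degreeLT, ← Fintype.card_coe]
  refine Fintype.card_congr (.trans (.subtypeEquivRight fun f => ?_) (monicEquivDegreeLT d))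
  exact mem_monicsOfDegree

lemma card_sub_one_ne_zero [Fintype F] : (Fintype.card F - 1 : ℂ) ≠ 0 :=
  sub_ne_zero.2 (Nat.cast_ne_one.2 Fintype.one_lt_card.ne')

lemma coeffSum_eq_sum [Finite F] (χ : F[X] → ℂ) (d : ℕ) :
    coeffSum F χ d = ∑ f ∈ monicsOfDegree F d, χ f :=
  finsum_mem_eq_finite_toFinset_sum χ (finite_monic_natDegree_eq F d)

end FinitePolynomials

section QuotientRing

variable {F : Type} [Field F] {n : ℕ}

lemma mkR_surjective : Function.Surjective (mkR F n) := Ideal.Quotient.mk_surjective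

lemma mkR_eq_mkR_iff {p r : F[X]} : mkR F n p = mkR F n r ↔ X ^ (n + 1) ∣ p - r := by
  rw [mkR, Ideal.Quotient.eq, Ideal.mem_span_singleton]

lemma eq_of_X_pow_dvd_sub {p r : F[X]} {m : ℕ} (hp : p.degree < m) (hr : r.degree < m)
    (h : X ^ m ∣ p - r) : p = r := by
  refine sub_eq_zero.1 (eq_zero_of_dvd_of_degree_lt h ?_)
  rw [degree_X_pow]
  exact (degree_sub_le p r).trans_lt (max_lt hp hr)

lemma mkR_injOn_degreeLT {d : ℕ} (hd : d ≤ n + 1) : Set.InjOn (mkR F n) (degreeLT F d) :=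
  fun _ hp _ hr h => eq_of_X_pow_dvd_sub (mem_degreeLT.1 (degreeLT_mono hd hp))
    (mem_degreeLT.1 (degreeLT_mono hd hr)) (mkR_eq_mkR_iff.1 h)

lemma exists_mem_degreeLT_mkR_eq (u : QuotR F n) : ∃ p ∈ degreeLT F (n + 1), mkR F n p = u := by
  obtain ⟨p, rfl⟩ := mkR_surjective u
  refine ⟨p %ₘ X ^ (n + 1), ?_, mkR_eq_mkR_iff.2 (dvd_modByMonic_sub _ _)⟩
  rw [mem_degreeLT, ← degree_X_pow (R := F)]
  exact degree_modByMonic_lt p (monic_X_pow _)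

lemma isUnit_mkR_iff {p : F[X]} : IsUnit (mkR F n p) ↔ p.coeff 0 ≠ 0 := by
  have hcoprime : IsUnit (mkR F n p) ↔ IsCoprime p (X ^ (n + 1)) := by
    rw [isUnit_iff_exists_inv', mkR_surjective.exists]
    refine exists_congr fun r => ?_
    rw [← map_mul, ← map_one (mkR F n), mkR_eq_mkR_iff, dvd_sub_comm]
    exact ⟨fun ⟨b, hb⟩ => ⟨b, by rw [mul_comm b, ← hb]; ring⟩,
      fun ⟨b, hb⟩ => ⟨b, by rw [← hb]; ring⟩⟩
  rw [hcoprime, IsCoprime.pow_right_iff n.succ_pos, isCoprime_comm,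
    prime_X.irreducible.coprime_iff_not_dvd, X_dvd_iff]

instance [Finite F] : Fintype (QuotR F n) :=
  have := Finite.of_surjective (fun p : degreeLT F (n + 1) => mkR F n p) fun u =>
    let ⟨p, hp, hu⟩ := exists_mem_degreeLT_mkR_eq u
    ⟨⟨p, hp⟩, hu⟩
  .ofFinite _

lemma apply_mkR_eq_zero (ψ : MulChar (QuotR F n) ℂ) {p : F[X]} (h : p.coeff 0 = 0) :
    ψ (mkR F n p) = 0 :=
  ψ.map_nonunit (mt isUnit_mkR_iff.1 (not_not.2 h))

lemma IsEvenChar.apply_C_mul {ψ : MulChar (QuotR F n) ℂ} (hψ : IsEvenChar F n ψ) {c : F}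
    (hc : c ≠ 0) (p : F[X]) : ψ (mkR F n (C c * p)) = ψ (mkR F n p) := by
  rw [map_mul, map_mul, hψ c hc, one_mul]

lemma IsEvenChar.sum_degreeLT [Fintype F] {ψ : MulChar (QuotR F n) ℂ} (hψ : IsEvenChar F n ψ)
    (d : ℕ) : ∑ p : degreeLT F (d + 1), ψ (mkR F n p) =
      (Fintype.card F - 1) * coeffSum F (attachedChar F n ψ) d := by
  classical
  have hcard : (Fintype.card F - 1 : ℂ) = Fintype.card Fˣ := by
    rw [Fintype.card_units, Nat.cast_sub Fintype.card_pos, Nat.cast_one]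
  have hsum : (Fintype.card F - 1) * coeffSum F (attachedChar F n ψ) d =
      ∑ x : Fˣ × monicsOfDegree F d, attachedChar F n ψ x.2 := by
    simp only [Fintype.sum_prod_type, Finset.sum_const, Finset.card_univ, nsmul_eq_mul]
    rw [hcard, coeffSum_eq_sum, Finset.sum_coe_sort]
  rw [hsum]
  symm
  refine Finset.sum_of_injOn (fun x => ⟨C (x.1 : F) * (x.2 : F[X]).reverse, ?_⟩) ?_ ?_ ?_ ?_
  · obtain ⟨-, hdeg⟩ := mem_monicsOfDegree.1 x.2.2
    exact mem_degreeLT_succ.2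
      ((natDegree_C_mul_le _ _).trans ((reverse_natDegree_le _).trans_eq hdeg))
  · rintro ⟨c, f, hf⟩ - ⟨c', f', hf'⟩ - h
    rw [mem_monicsOfDegree] at hf hf'
    have hpoly : C (c : F) * f.reverse = C (c' : F) * f'.reverse := congrArg Subtype.val h
    have hc : c = c' := by
      simpa [hf.1, hf'.1, Units.ext_iff] using congrArg (coeff · 0) hpoly
    subst hc
    have hrev := mul_left_cancel₀ (C_ne_zero.2 c.ne_zero) hpoly
    simp [eq_of_reverse_eq_of_natDegree_eq hrev (hf.2.trans hf'.2.symm)]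
  · exact fun _ _ => Finset.mem_coe.2 (Finset.mem_univ _)
  · rintro ⟨p, hp⟩ - hnot
    refine apply_mkR_eq_zero ψ (not_not.1 fun h0 => hnot ?_)
    obtain ⟨f, hf, hdeg, hrev⟩ := exists_monic_C_mul_reverse_eq (mem_degreeLT_succ.1 hp) h0
    exact ⟨⟨Units.mk0 _ h0, f, mem_monicsOfDegree.2 ⟨hf, hdeg⟩⟩,
      Finset.mem_coe.2 (Finset.mem_univ _), Subtype.ext hrev⟩
  · rintro ⟨c, f, hf⟩ -
    exact (hψ.apply_C_mul c.ne_zero _).symm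

end QuotientRing

section Twisting

lemma sum_mulChar_mul_apply_mul {M R : Type*} [CommMonoid M] [Fintype M] [CommRing R] [IsDomain R]
    (ψ : MulChar M R)
    (hψ : ∀ w : M, ¬IsUnit w → ∃ y : Mˣ, y * w = w ∧ ψ y ≠ 1)
    (φ : M → R) (w : M) :
    ∑ u, ψ u * φ (u * w) = ψ⁻¹ w * ∑ u, ψ u * φ u := by
  have hshift (y : Mˣ) (φ : M → R) : ∑ u, ψ u * φ u = ψ y * ∑ u, ψ u * φ (u * y) := by
    rw [Finset.mul_sum, ← Equiv.sum_comp y.mulRight]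
    refine Finset.sum_congr rfl fun u _ => ?_
    rw [Units.mulRight_apply, map_mul, mul_left_comm, mul_assoc]
  by_cases hw : IsUnit w
  · obtain ⟨w, rfl⟩ := hw
    have hinv : ψ⁻¹ w * ψ w = 1 := by
      rw [← MulChar.mul_apply, inv_mul_cancel, MulChar.one_apply_coe]
    rw [hshift w φ, ← mul_assoc, hinv, one_mul]
  · obtain ⟨y, hyw, hy⟩ := hψ w hw
    have hfix := hshift y fun u => φ (u * w)
    simp only [mul_assoc, hyw] at hfix
    rw [MulChar.map_nonunit _ hw, zero_mul]
    exact not_not.1 fun hne => hy ((right_eq_mul₀ hne).1 hfix)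

end Twisting

section Duality

variable (F : Type) [Field F]

/-- The `F`-linear functional on `F[x]/(x^(n+1))` reading off the coefficient of `x^n`. -/
def topCoeff (n : ℕ) : QuotR F n →ₗ[F] F :=
  (Submodule.liftQ ((Ideal.span {(X : F[X]) ^ (n + 1)}).restrictScalars F) (lcoeff F n) (by
    intro p hp
    rw [Submodule.restrictScalars_mem, Ideal.mem_span_singleton, X_pow_dvd_iff] at hp
    exact hp n n.lt_succ_self)) ∘ₗ (Submodule.Quotient.restrictScalarsEquiv F _).symm.toLinearMap

/-- The bilinear pairing `(u, w) ↦ topCoeff (u * w)` between `F[x]/(x^(n+1))` and polynomials of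
degree less than `m`. -/
def topPairing (n m : ℕ) : QuotR F n →ₗ[F] Module.Dual F (degreeLT F m) :=
  ((LinearMap.mul F (QuotR F n)).compr₂ (topCoeff F n)).compl₂
    ((Ideal.Quotient.mkₐ F _).toLinearMap ∘ₗ (degreeLT F m).subtype)

variable {F} {n : ℕ}

lemma topCoeff_mkR (p : F[X]) : topCoeff F n (mkR F n p) = p.coeff n := rfl

lemma topPairing_apply {m : ℕ} (u : QuotR F n) (w : degreeLT F m) :
    topPairing F n m u w = topCoeff F n (u * mkR F n w) := rfl

lemma topPairing_eq_zero_iff {d e : ℕ} (hde : d + e = n + 1) {u : QuotR F n} :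
    topPairing F n e u = 0 ↔ ∃ p : degreeLT F d, mkR F n p = u := by
  simp only [LinearMap.ext_iff, topPairing_apply, LinearMap.zero_apply]
  constructor
  · intro h
    obtain ⟨p, hp, rfl⟩ := exists_mem_degreeLT_mkR_eq u
    refine ⟨⟨p, mem_degreeLT.2 ((degree_lt_iff_coeff_zero _ _).2 fun j hj => ?_)⟩, rfl⟩
    rcases le_or_gt j n with hjn | hjn
    · have hX : (X : F[X]) ^ (n - j) ∈ degreeLT F e := by
        rw [mem_degreeLT, degree_X_pow, Nat.cast_lt]
        lia
      have htest := h ⟨_, hX⟩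
      rwa [← map_mul, topCoeff_mkR, coeff_mul_X_pow', if_pos (Nat.sub_le _ _),
        Nat.sub_sub_self hjn] at htest
    · exact (degree_lt_iff_coeff_zero _ _).1 (mem_degreeLT.1 hp) j hjn
  · rintro ⟨⟨p, hp⟩, rfl⟩ ⟨w, hw⟩
    rw [mem_degreeLT, degree_lt_iff_coeff_zero] at hp hw
    rw [← map_mul, topCoeff_mkR, coeff_mul]
    refine Finset.sum_eq_zero fun ij hij => ?_
    rw [Finset.HasAntidiagonal.mem_antidiagonal] at hij
    rcases le_or_gt d ij.1 with hi | hi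
    · rw [hp _ hi, zero_mul]
    · rw [hw _ (by lia), mul_zero]

open scoped Classical in
lemma sum_ite_dual_apply_eq_zero {V : Type*} [Fintype F] [AddCommGroup V] [Module F V] [Fintype V]
    {m : ℕ} (hV : Module.finrank F V = m + 1) (f : Module.Dual F V) :
    (∑ w, if f w = 0 then 1 else 0 : ℂ) = (Fintype.card F : ℂ) ^ m +
      if f = 0 then (Fintype.card F : ℂ) ^ (m + 1) - (Fintype.card F : ℂ) ^ m else 0 := by
  by_cases hf : f = 0
  · simp [hf, Module.card_eq_pow_finrank (K := F) (V := V), hV]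
  · have : FiniteDimensional F V := .of_finite
    have hker : Module.finrank F (LinearMap.ker f) = m := by
      have := Module.Dual.finrank_ker_add_one_of_ne_zero hf
      lia
    rw [Finset.sum_boole, if_neg hf, add_zero, ← Fintype.card_subtype, ← hker, ← Nat.cast_pow,
      ← Module.card_eq_pow_finrank]
    rfl

end Duality

section FunctionalEquation

open ComplexConjugate

variable {F : Type} [Field F] {n : ℕ} {ψ : MulChar (QuotR F n) ℂ}

lemma IsPrimitiveChar.exists_unit_apply_ne_one (hn : n ≠ 0) (hψ : IsPrimitiveChar F n ψ) :
    ∃ y : (QuotR F n)ˣ, ψ y ≠ 1 ∧ ∀ w : QuotR F n, ¬IsUnit w → y * w = w := by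
  obtain ⟨a, ha⟩ := hψ
  have hunit : IsUnit (mkR F n (1 + C a * X ^ n)) := by
    rw [isUnit_mkR_iff]
    simp [hn.symm]
  -- Nonunits are multiples of `x`, and `x * x^n = 0`, so `1 + a x^n` fixes them.
  refine ⟨hunit.unit, ha, fun w hw => ?_⟩
  obtain ⟨p, rfl⟩ := mkR_surjective w
  rw [isUnit_mkR_iff, not_not, ← X_dvd_iff] at hw
  obtain ⟨s, rfl⟩ := hw
  rw [hunit.unit_spec, ← map_mul, mkR_eq_mkR_iff]
  exact ⟨C a * s, by ring⟩

lemma IsPrimitiveChar.ne_one (hn : n ≠ 0) (hψ : IsPrimitiveChar F n ψ) : ψ ≠ 1 := by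
  rintro rfl
  obtain ⟨y, hy, -⟩ := hψ.exists_unit_apply_ne_one hn
  exact hy (MulChar.one_apply_coe y)

lemma IsEvenChar.sum_inv_degreeLT [Fintype F] (heven : IsEvenChar F n ψ) (e : ℕ) :
    ∑ w : degreeLT F (e + 1), ψ⁻¹ (mkR F n w) =
      (Fintype.card F - 1) * conj (coeffSum F (attachedChar F n ψ) e) := by
  simp only [← MulChar.star_apply', ← starRingEnd_apply, ← map_sum]
  rw [heven.sum_degreeLT]
  simp

open scoped Classical in
lemma sum_mul_ite_topPairing_eq_zero [Finite F] {d e : ℕ} (hde : d + e = n + 1)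
    (φ : QuotR F n → ℂ) :
    (∑ u, φ u * if topPairing F n e u = 0 then 1 else 0) = ∑ p : degreeLT F d, φ (mkR F n p) := by
  simp only [mul_ite, mul_one, mul_zero]
  symm
  refine Finset.sum_of_injOn (fun p => mkR F n p) ?_ (fun _ _ => Finset.mem_coe.2
    (Finset.mem_univ _)) (fun u _ hu => if_neg fun h => hu ?_)
    fun p _ => (if_pos ((topPairing_eq_zero_iff hde).2 ⟨p, rfl⟩)).symm
  · intro p _ r _ h
    exact Subtype.ext (mkR_injOn_degreeLT (by lia) p.2 r.2 h)
  · obtain ⟨p, rfl⟩ := (topPairing_eq_zero_iff hde).1 h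
    exact ⟨p, Finset.mem_coe.2 (Finset.mem_univ _), rfl⟩

-- Both sides evaluate `∑_w ∑_u ψ(u) 1_{topCoeff (u w) = 0}` over `w` of degree at most `e`, up to
-- the factor `q - 1`: substituting in `u` pulls out `ψ⁻¹ w`, while for fixed `u` the inner sum over
-- `w` depends only on whether `u` is orthogonal to all `w`, that is, has degree at most `d`.
open scoped Classical in
lemma IsPrimitiveChar.sum_topCoeff_mul_conj_coeffSum [Fintype F] (hprim : IsPrimitiveChar F n ψ)
    (heven : IsEvenChar F n ψ) {d e : ℕ} (hde : d + e + 1 = n) :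
    (∑ u, ψ u * if topCoeff F n u = 0 then 1 else 0) *
        conj (coeffSum F (attachedChar F n ψ) e) =
      ((Fintype.card F : ℂ) ^ (e + 1) - (Fintype.card F : ℂ) ^ e) *
        coeffSum F (attachedChar F n ψ) d := by
  have hn : n ≠ 0 := by lia
  set q : ℂ := (Fintype.card F : ℂ)
  obtain ⟨y, hy, hfix⟩ := hprim.exists_unit_apply_ne_one hn
  have htwist (w : QuotR F n) := sum_mulChar_mul_apply_mul ψ (fun w hw => ⟨y, hfix w hw, hy⟩)
    (fun u => if topCoeff F n u = 0 then 1 else 0) w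
  have hdual := sum_mul_ite_topPairing_eq_zero (n := n) (d := d + 1) (e := e + 1) (by lia) ψ
  refine mul_left_cancel₀ (card_sub_one_ne_zero (F := F)) ?_
  calc
    _ = ∑ w : degreeLT F (e + 1), ∑ u, ψ u * if topCoeff F n (u * mkR F n w) = 0 then 1 else 0 := by
      simp only [htwist]
      rw [← Finset.sum_mul, heven.sum_inv_degreeLT]
      ring
    _ = ∑ u, ψ u * (q ^ e + if topPairing F n (e + 1) u = 0 then q ^ (e + 1) - q ^ e else 0) := by
      rw [Finset.sum_comm]
      refine Finset.sum_congr rfl fun u _ => ?_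
      rw [← sum_ite_dual_apply_eq_zero (finrank_degreeLT F (e + 1)), Finset.mul_sum]
      rfl
    _ = (∑ u, ψ u) * q ^ e + (q ^ (e + 1) - q ^ e) *
          ∑ u, ψ u * if topPairing F n (e + 1) u = 0 then 1 else 0 := by
      rw [Finset.sum_mul, Finset.mul_sum, ← Finset.sum_add_distrib]
      refine Finset.sum_congr rfl fun u _ => ?_
      split_ifs <;> ring
    _ = (q - 1) * ((q ^ (e + 1) - q ^ e) * coeffSum F (attachedChar F n ψ) d) := by
      rw [MulChar.sum_eq_zero_of_ne_one (hprim.ne_one hn), hdual, heven.sum_degreeLT]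
      ring

lemma coeffSum_attachedChar_zero [Finite F] : coeffSum F (attachedChar F n ψ) 0 = 1 := by
  rw [coeffSum_eq_sum, monicsOfDegree_zero, Finset.sum_singleton, attachedChar, ← C_1, reverse_C,
    C_1, map_one, map_one]

-- The case `e = 0` of the preceding identity evaluates the unknown sum over `u`.
lemma IsPrimitiveChar.coeffSum_mul_conj_coeffSum [Fintype F] (hprim : IsPrimitiveChar F n ψ)
    (heven : IsEvenChar F n ψ) {d e : ℕ} (hde : d + e + 1 = n) :
    coeffSum F (attachedChar F n ψ) (n - 1) * conj (coeffSum F (attachedChar F n ψ) e) =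
      (Fintype.card F : ℂ) ^ e * coeffSum F (attachedChar F n ψ) d := by
  classical
  have hgauss := hprim.sum_topCoeff_mul_conj_coeffSum heven (d := n - 1) (e := 0) (by lia)
  rw [coeffSum_attachedChar_zero, map_one, mul_one, zero_add, pow_one, pow_zero] at hgauss
  have htwist := hprim.sum_topCoeff_mul_conj_coeffSum heven hde
  rw [hgauss] at htwist
  refine mul_left_cancel₀ (card_sub_one_ne_zero (F := F)) ?_
  linear_combination htwist

end FunctionalEquation

section Orthogonality

open Classical in
lemma finsum_mem_mulChar_apply {M R : Type*} [CommMonoid M] [Finite M] [CommRing R] [IsDomain R]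
    [HasEnoughRootsOfUnity R (Monoid.exponent Mˣ)] (H : Subgroup Mˣ) (u : Mˣ) :
    ∑ᶠ ψ ∈ {ψ : MulChar M R | ∀ v ∈ H, ψ v = 1}, ψ u = if u ∈ H then (H.index : R) else 0 := by
  set D := (MulChar.subgroupOrderIsoSubgroupMulChar M R H).ofDual
  have hD : {ψ : MulChar M R | ∀ v ∈ H, ψ v = 1} = D :=
    Set.ext fun ψ => MulChar.mem_subgroupOrderIsoSubgroupMulChar_iff.symm
  have := Fintype.ofFinite D
  let eval : D →* R := ((MulChar.mulCharEquiv M R).symm u).toMonoidHom.comp D.subtype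
  have heval (ψ : D) : eval ψ = (ψ : MulChar M R) u := MulChar.mulCharEquiv_symm_apply_apply u _
  have hmem : u ∈ H ↔ ∀ ψ ∈ D, ψ u = 1 := by
    rw [← MulChar.mem_subgroupOrderIsoSubgroupMulChar_symm_iff, OrderDual.toDual_ofDual,
      OrderIso.symm_apply_apply]
  have htrivial : eval = 1 ↔ u ∈ H := by
    simp only [hmem, DFunLike.ext_iff, heval, Subtype.forall, MonoidHom.one_apply]
  calc
    _ = ∑ ψ : D, eval ψ := by
      rw [hD, ← finsum_set_coe_eq_finsum_mem, finsum_eq_sum_of_fintype]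
      exact Finset.sum_congr rfl fun ψ _ => (heval ψ).symm
    _ = _ := by
      rw [sum_hom_units, ← Nat.card_eq_fintype_card, MulChar.card_subgroupOrderIsoSubgroupMulChar,
        ← Subgroup.index_eq_card]
      simp only [htrivial, Nat.cast_ite, Nat.cast_zero]

variable (F : Type) [Field F] (n m : ℕ)

/-- The units of `F[x]/(x^(n+1))` that are congruent to a constant modulo `x^(m+1)`.
For `m = n` these are the constants, whose annihilator is the group of even characters; for
`m + 1 = n` the annihilator is the group of imprimitive even characters. -/
def constantUnitsMod : Subgroup (QuotR F n)ˣ :=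
  let J : Ideal (QuotR F n) := Ideal.span {mkR F n (X ^ (m + 1))}
  (Units.map (algebraMap F (QuotR F n ⧸ J)).toMonoidHom).range.comap
    (Units.map (Ideal.Quotient.mk J).toMonoidHom)

variable {F n m}

lemma mkR_X_pow_dvd_mkR_iff {j : ℕ} (hj : j ≤ n + 1) {p : F[X]} :
    mkR F n (X ^ j) ∣ mkR F n p ↔ X ^ j ∣ p := by
  refine ⟨fun ⟨s, hs⟩ => ?_, fun h => map_dvd _ h⟩
  obtain ⟨s, rfl⟩ := mkR_surjective s
  rw [← map_mul, mkR_eq_mkR_iff] at hs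
  exact (dvd_iff_dvd_of_dvd_sub ((pow_dvd_pow X hj).trans hs)).2 (dvd_mul_right _ _)

lemma div_mem_constantUnitsMod_iff (hm : m ≤ n) {u v : (QuotR F n)ˣ} {p r : F[X]}
    (hu : mkR F n p = u) (hv : mkR F n r = v) :
    u / v ∈ constantUnitsMod F n m ↔ ∃ c : F, c ≠ 0 ∧ X ^ (m + 1) ∣ p - C c * r := by
  let J : Ideal (QuotR F n) := Ideal.span {mkR F n (X ^ (m + 1))}
  have hconst (c : Fˣ) : Units.map (algebraMap F (QuotR F n ⧸ J)).toMonoidHom c =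
      Units.map (Ideal.Quotient.mk J).toMonoidHom (u / v) ↔ X ^ (m + 1) ∣ p - C (c : F) * r := by
    rw [_root_.map_div, eq_div_iff_mul_eq', eq_comm, Units.ext_iff,
      ← mkR_X_pow_dvd_mkR_iff (n := n) (by lia), map_sub, map_mul, hu, hv,
      ← Ideal.mem_span_singleton, ← Ideal.Quotient.eq, map_mul]
    rfl
  rw [constantUnitsMod, Subgroup.mem_comap, MonoidHom.mem_range]
  simp only [J, hconst]
  exact ⟨fun ⟨c, hc⟩ => ⟨c, c.ne_zero, hc⟩, fun ⟨c, hc0, hc⟩ => ⟨Units.mk0 c hc0, hc⟩⟩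

lemma mem_constantUnitsMod_iff (hm : m ≤ n) {u : (QuotR F n)ˣ} {p : F[X]} (hu : mkR F n p = u) :
    u ∈ constantUnitsMod F n m ↔ ∃ c : F, c ≠ 0 ∧ X ^ (m + 1) ∣ p - C c := by
  simpa only [div_one, mul_one] using
    div_mem_constantUnitsMod_iff hm hu (v := 1) (r := 1) (by rw [map_one, Units.val_one])

lemma div_mem_constantUnitsMod_iff_eq (hm : m ≤ n) {u v : (QuotR F n)ˣ} {p r : F[X]}
    (hu : mkR F n p = u) (hv : mkR F n r = v) (hp : p.natDegree ≤ m) (hr : r.natDegree ≤ m)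
    (hp0 : p.coeff 0 = 1) (hr0 : r.coeff 0 = 1) : u / v ∈ constantUnitsMod F n m ↔ p = r := by
  rw [div_mem_constantUnitsMod_iff hm hu hv]
  constructor
  · rintro ⟨c, -, hc⟩
    have hc1 : c = 1 := by
      have h0 := X_pow_dvd_iff.1 hc 0 m.succ_pos
      rw [coeff_sub, coeff_C_mul, hp0, hr0, mul_one, sub_eq_zero] at h0
      exact h0.symm
    rw [hc1, C_1, one_mul] at hc
    exact eq_of_X_pow_dvd_sub (mem_degreeLT.1 (mem_degreeLT_succ.2 hp))
      (mem_degreeLT.1 (mem_degreeLT_succ.2 hr)) hc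
  · rintro rfl
    exact ⟨1, one_ne_zero, by simp⟩

lemma exists_monic_X_pow_dvd_sub_C_mul_reverse {p : F[X]} (h0 : p.coeff 0 ≠ 0) (m : ℕ) :
    ∃ c : F, c ≠ 0 ∧ ∃ f : F[X], f.Monic ∧ f.natDegree = m ∧
      X ^ (m + 1) ∣ p - C c * f.reverse := by
  set r := p %ₘ X ^ (m + 1)
  have hr : r.natDegree ≤ m := by
    rw [← mem_degreeLT_succ, mem_degreeLT, ← degree_X_pow (R := F)]
    exact degree_modByMonic_lt p (monic_X_pow _)
  have hrp : X ^ (m + 1) ∣ r - p := dvd_modByMonic_sub _ _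
  have hr0 : r.coeff 0 = p.coeff 0 := by
    simpa only [coeff_sub, sub_eq_zero] using X_pow_dvd_iff.1 hrp 0 m.succ_pos
  obtain ⟨f, hf, hfm, hfr⟩ := exists_monic_C_mul_reverse_eq hr (hr0 ▸ h0)
  exact ⟨_, hr0 ▸ h0, f, hf, hfm, by rwa [hfr, dvd_sub_comm]⟩

lemma exists_unit_eq_mkR_reverse {f : F[X]} (hf : f.Monic) :
    ∃ u : (QuotR F n)ˣ, mkR F n f.reverse = u := by
  have hunit : IsUnit (mkR F n f.reverse) := by
    rw [isUnit_mkR_iff, coeff_zero_reverse, hf]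
    exact one_ne_zero
  exact ⟨hunit.unit, rfl⟩

lemma div_mem_constantUnitsMod_iff_reverse_eq (hm : m ≤ n) {u v : (QuotR F n)ˣ} {f g : F[X]}
    (hf : f.Monic) (hg : g.Monic) (hfm : f.natDegree ≤ m) (hgm : g.natDegree ≤ m)
    (hu : mkR F n f.reverse = u) (hv : mkR F n g.reverse = v) :
    u / v ∈ constantUnitsMod F n m ↔ f.reverse = g.reverse :=
  div_mem_constantUnitsMod_iff_eq hm hu hv ((reverse_natDegree_le f).trans hfm)
    ((reverse_natDegree_le g).trans hgm) (by rw [coeff_zero_reverse, hf])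
    (by rw [coeff_zero_reverse, hg])

lemma index_constantUnitsMod [Fintype F] (hm : m ≤ n) :
    (constantUnitsMod F n m).index = Fintype.card F ^ m := by
  choose unit hunit using fun f : monicsOfDegree F m =>
    exists_unit_eq_mkR_reverse (n := n) (mem_monicsOfDegree.1 f.2).1
  have : (constantUnitsMod F n m).Normal :=
    ⟨fun u hu v => by rwa [mul_comm v, mul_inv_cancel_right]⟩
  have hbij : Function.Bijective fun f => (unit f : (QuotR F n)ˣ ⧸ constantUnitsMod F n m) := by
    constructor
    · intro f g hfg
      obtain ⟨hf, hfm⟩ := mem_monicsOfDegree.1 f.2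
      obtain ⟨hg, hgm⟩ := mem_monicsOfDegree.1 g.2
      rw [QuotientGroup.eq_iff_div_mem,
        div_mem_constantUnitsMod_iff_reverse_eq hm hf hg hfm.le hgm.le (hunit f) (hunit g)] at hfg
      exact Subtype.ext (eq_of_reverse_eq_of_natDegree_eq hfg (hfm.trans hgm.symm))
    · rintro ⟨v⟩
      obtain ⟨p, hp⟩ := mkR_surjective v.val
      obtain ⟨c, hc0, f, hf, hfm, hc⟩ := exists_monic_X_pow_dvd_sub_C_mul_reverse
        (isUnit_mkR_iff.1 (hp ▸ v.isUnit)) m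
      refine ⟨⟨f, mem_monicsOfDegree.2 ⟨hf, hfm⟩⟩, (QuotientGroup.eq_iff_div_mem.2 ?_).symm⟩
      rw [div_mem_constantUnitsMod_iff hm hp (hunit _)]
      exact ⟨c, hc0, hc⟩
  rw [Subgroup.index_eq_card, ← Nat.card_eq_of_bijective _ hbij, Nat.card_eq_fintype_card,
    Fintype.card_coe, card_monicsOfDegree]

lemma isEvenChar_iff {ψ : MulChar (QuotR F n) ℂ} :
    IsEvenChar F n ψ ↔ ∀ u ∈ constantUnitsMod F n n, ψ u = 1 := by
  constructor
  · intro hψ u hu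
    obtain ⟨p, hp⟩ := mkR_surjective u.val
    obtain ⟨c, hc0, hc⟩ := (mem_constantUnitsMod_iff le_rfl hp).1 hu
    rw [← hp, mkR_eq_mkR_iff.2 hc, hψ c hc0]
  · intro h c hc
    have hunit : IsUnit (mkR F n (C c)) := by rwa [isUnit_mkR_iff, coeff_C_zero]
    refine h hunit.unit ((mem_constantUnitsMod_iff le_rfl rfl).2 ⟨c, hc, ?_⟩)
    rw [sub_self]
    exact dvd_zero _

lemma isEvenChar_and_not_isPrimitiveChar_iff {ψ : MulChar (QuotR F (m + 1)) ℂ} :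
    IsEvenChar F (m + 1) ψ ∧ ¬IsPrimitiveChar F (m + 1) ψ ↔
      ∀ u ∈ constantUnitsMod F (m + 1) m, ψ u = 1 := by
  simp only [IsPrimitiveChar, not_exists, not_not]
  constructor
  · rintro ⟨heven, himprim⟩ u hu
    obtain ⟨p, hp⟩ := mkR_surjective u.val
    obtain ⟨c, hc0, s, hs⟩ := (mem_constantUnitsMod_iff m.le_succ hp).1 hu
    have hpc : mkR F (m + 1) p = mkR F (m + 1) (C c * (1 + C (c⁻¹ * s.coeff 0) * X ^ (m + 1))) := by
      rw [mkR_eq_mkR_iff]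
      obtain ⟨t, ht⟩ := X_dvd_sub_C (p := s)
      refine ⟨t, ?_⟩
      have hcc : C c * C (c⁻¹ * s.coeff 0) = C (s.coeff 0) := by
        rw [← C_mul, mul_inv_cancel_left₀ hc0]
      linear_combination hs + X ^ (m + 1) * ht - X ^ (m + 1) * hcc
    rw [← hp, hpc, heven.apply_C_mul hc0, himprim]
  · intro h
    have hone {p : F[X]} (hp : ∃ c : F, c ≠ 0 ∧ X ^ (m + 1) ∣ p - C c) :
        ψ (mkR F (m + 1) p) = 1 := by
      obtain ⟨c, hc0, hc⟩ := hp
      have hp0 : p.coeff 0 = c := by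
        simpa only [coeff_sub, coeff_C_zero, sub_eq_zero] using X_pow_dvd_iff.1 hc 0 m.succ_pos
      have hunit : IsUnit (mkR F (m + 1) p) := isUnit_mkR_iff.2 (hp0 ▸ hc0)
      exact h hunit.unit ((mem_constantUnitsMod_iff m.le_succ rfl).2 ⟨c, hc0, hc⟩)
    exact ⟨fun c hc => hone ⟨c, hc, by simp⟩, fun a => hone ⟨1, one_ne_zero, by simp⟩⟩

lemma setOf_isEvenChar_and_isPrimitiveChar :
    {ψ | IsEvenChar F (m + 1) ψ ∧ IsPrimitiveChar F (m + 1) ψ} =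
      {ψ | ∀ u ∈ constantUnitsMod F (m + 1) (m + 1), ψ u = 1} \
        {ψ | ∀ u ∈ constantUnitsMod F (m + 1) m, ψ u = 1} := by
  ext ψ
  have := isEvenChar_and_not_isPrimitiveChar_iff (ψ := ψ)
  have := isEvenChar_iff (ψ := ψ)
  simp only [Set.mem_sdiff, Set.mem_ofPred_eq]
  tauto

lemma attachedChar_injOn : Set.InjOn (attachedChar F n) {ψ | IsEvenChar F n ψ} := by
  intro ψ hψ η hη h
  ext u
  obtain ⟨p, hu⟩ := mkR_surjective u.val
  obtain ⟨c, hc0, f, -, -, hc⟩ := exists_monic_X_pow_dvd_sub_C_mul_reverse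
    (isUnit_mkR_iff.1 (hu ▸ u.isUnit)) n
  rw [← hu, mkR_eq_mkR_iff.2 hc, IsEvenChar.apply_C_mul hψ hc0, IsEvenChar.apply_C_mul hη hc0]
  exact congrFun h f

lemma setOf_mulChar_constantUnitsMod_subset :
    {ψ : MulChar (QuotR F (m + 1)) ℂ | ∀ u ∈ constantUnitsMod F (m + 1) m, ψ u = 1} ⊆
      {ψ | ∀ u ∈ constantUnitsMod F (m + 1) (m + 1), ψ u = 1} := fun _ hψ =>
  isEvenChar_iff.1 (isEvenChar_and_not_isPrimitiveChar_iff.2 hψ).1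

open ComplexConjugate in
open scoped Classical in
lemma finsum_mem_Snq_mul_conj [Fintype F] {f g : F[X]} (hf : f.Monic) (hg : g.Monic)
    (hfm : f.natDegree ≤ m) (hgm : g.natDegree ≤ m) :
    ∑ᶠ χ ∈ Snq F (m + 1), χ f * conj (χ g) = if f.reverse = g.reverse then
      (Fintype.card F : ℂ) ^ (m + 1) - (Fintype.card F : ℂ) ^ m else 0 := by
  obtain ⟨u, hu⟩ := exists_unit_eq_mkR_reverse (n := m + 1) hf
  obtain ⟨v, hv⟩ := exists_unit_eq_mkR_reverse (n := m + 1) hg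
  have hdiv (ψ : MulChar (QuotR F (m + 1)) ℂ) :
      attachedChar F (m + 1) ψ f * conj (attachedChar F (m + 1) ψ g) = ψ ↑(u / v) := by
    rw [attachedChar, attachedChar, hu, hv, starRingEnd_apply, MulChar.star_apply',
      MulChar.inv_apply, Ring.inverse_unit, ← map_mul, div_eq_mul_inv, Units.val_mul]
  have horth {j : ℕ} (hmj : m ≤ j) (hj : j ≤ m + 1) :
      ∑ᶠ ψ ∈ {ψ : MulChar (QuotR F (m + 1)) ℂ | ∀ u ∈ constantUnitsMod F (m + 1) j, ψ u = 1},
        ψ ↑(u / v) = if f.reverse = g.reverse then (Fintype.card F : ℂ) ^ j else 0 := by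
    rw [finsum_mem_mulChar_apply, index_constantUnitsMod hj, Nat.cast_pow]
    simp only [div_mem_constantUnitsMod_iff_reverse_eq hj hf hg (hfm.trans hmj)
      (hgm.trans hmj) hu hv]
  have hSnq : Snq F (m + 1) = attachedChar F (m + 1) ''
      {ψ | IsEvenChar F (m + 1) ψ ∧ IsPrimitiveChar F (m + 1) ψ} := by
    ext χ
    simp only [Snq, Set.mem_ofPred_eq, Set.mem_image, and_assoc, eq_comm]
  rw [hSnq, finsum_mem_image (attachedChar_injOn.mono fun _ h => h.1),
    setOf_isEvenChar_and_isPrimitiveChar]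
  simp only [hdiv]
  have hsplit := finsum_mem_add_sdiff (f := fun ψ : MulChar (QuotR F (m + 1)) ℂ => ψ ↑(u / v))
    (setOf_mulChar_constantUnitsMod_subset (F := F) (m := m)) (Set.toFinite _)
  rw [horth le_rfl m.le_succ, horth m.le_succ le_rfl] at hsplit
  rw [eq_sub_of_add_eq' hsplit]
  split_ifs <;> simp

end Orthogonality

section Normalization

lemma prod_rpow_neg_div_two {ι : Type*} [Fintype ι] (a : ι → ℕ) {x : ℝ} (hx : 0 < x) :
    ∏ i, x ^ (-(a i : ℝ) / 2) =
      x ^ (-((∑ i, a i : ℕ) : ℝ) / 2) := by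
  rw [← Real.rpow_sum_of_pos hx, ← Finset.sum_div,
    Finset.sum_neg_distrib, Nat.cast_sum]

open ComplexConjugate

variable {F : Type} [Field F] [Fintype F] {n : ℕ} {χ : F[X] → ℂ}

lemma lam_zero_of_mem_Snq (hχ : χ ∈ Snq F n) : lam F χ 0 = 1 := by
  obtain ⟨ψ, -, -, rfl⟩ := hχ
  rw [lam, coeffSum_attachedChar_zero, Nat.cast_zero, neg_zero, zero_div, Real.rpow_zero,
    Complex.ofReal_one, one_mul]

lemma lam_eq_epsFactor_mul_conj_lam (hχ : χ ∈ Snq F n) {d e : ℕ} (hde : d + e + 1 = n) :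
    lam F χ d = epsFactor F n χ * conj (lam F χ e) := by
  obtain ⟨ψ, heven, hprim, rfl⟩ := hχ
  have hfe := hprim.coeffSum_mul_conj_coeffSum heven hde
  have hq : 0 < (Fintype.card F : ℝ) := Nat.cast_pos.2 Fintype.card_pos
  have hpow : (Fintype.card F : ℝ) ^ (-(d : ℝ) / 2) =
      (Fintype.card F : ℝ) ^ (-((n - 1 : ℕ) : ℝ) / 2) * (Fintype.card F : ℝ) ^ (-(e : ℝ) / 2) *
        (Fintype.card F : ℝ) ^ e := by
    rw [← Real.rpow_natCast _ e, ← Real.rpow_add hq, ← Real.rpow_add hq, ← hde]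
    congr 1
    push_cast [Nat.add_sub_cancel]
    ring
  rw [epsFactor, lam, lam, lam, hpow, map_mul, Complex.conj_ofReal]
  push_cast
  linear_combination (-(((Fintype.card F : ℝ) ^ (-((n - 1 : ℕ) : ℝ) / 2) : ℝ) : ℂ) *
    (((Fintype.card F : ℝ) ^ (-(e : ℝ) / 2) : ℝ) : ℂ)) * hfe

lemma epsFactor_ne_zero (hn : n ≠ 0) (hχ : χ ∈ Snq F n) : epsFactor F n χ ≠ 0 := by
  have h := lam_eq_epsFactor_mul_conj_lam hχ (d := 0) (e := n - 1) (by lia)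
  rw [lam_zero_of_mem_Snq hχ] at h
  exact left_ne_zero_of_mul (h ▸ one_ne_zero)

lemma lam_eq_mul_sum (d : ℕ) : lam F χ d =
    (((Fintype.card F : ℝ) ^ (-(d : ℝ) / 2) : ℝ) : ℂ) * ∑ f ∈ monicsOfDegree F d, χ f := by
  rw [lam, coeffSum_eq_sum]

end Normalization

section Moments

open ComplexConjugate

variable {F : Type} [Field F] {n m : ℕ} {χ : F[X] → ℂ} {ι : Type*}

lemma map_prod_of_mem_Snq (hχ : χ ∈ Snq F n) (s : Finset ι) (f : ι → F[X]) :
    χ (∏ i ∈ s, f i) = ∏ i ∈ s, χ (f i) := by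
  obtain ⟨ψ, -, -, rfl⟩ := hχ
  simp only [attachedChar, reverse_prod, map_prod]

lemma finite_Snq [Finite F] : (Snq F n).Finite :=
  (Set.finite_range (attachedChar F n)).subset fun _ ⟨ψ, _, _, h⟩ => ⟨ψ, h.symm⟩

variable [Fintype ι] [DecidableEq ι]

lemma monic_natDegree_prod_of_mem_piFinset [Finite F] {a : ι → ℕ} {s : Finset ι} {f : ι → F[X]}
    (hf : f ∈ Fintype.piFinset fun i => monicsOfDegree F (a i)) :
    (∏ i ∈ s, f i).Monic ∧ (∏ i ∈ s, f i).natDegree = ∑ i ∈ s, a i := by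
  have hmem (i : ι) := mem_monicsOfDegree.1 (Fintype.mem_piFinset.1 hf i)
  refine ⟨monic_prod_of_monic _ _ fun i _ => (hmem i).1, ?_⟩
  rw [natDegree_prod_of_monic _ _ fun i _ => (hmem i).1]
  exact Finset.sum_congr rfl fun i _ => (hmem i).2

variable [Fintype F] {S : Finset ι}

lemma epsFactor_zpow_neg_mul_prod_lam (hn : n ≠ 0) (hχ : χ ∈ Snq F n) {k j : ℕ}
    (hι : Fintype.card ι = k + j) {a d : ι → ℕ} (haS : ∀ i ∈ S, a i = d i)
    (haSc : ∀ i ∉ S, d i + a i + 1 = n) :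
    epsFactor F n χ ^ (-(j : ℤ)) * ∏ i, lam F χ (d i) =
      epsFactor F n χ ^ ((k : ℤ) - S.card) *
        ((∏ i ∈ S, lam F χ (a i)) * ∏ i ∈ Sᶜ, conj (lam F χ (a i))) := by
  have hprodS : ∏ i ∈ S, lam F χ (d i) = ∏ i ∈ S, lam F χ (a i) :=
    Finset.prod_congr rfl fun i hi => by rw [haS i hi]
  have hprodSc : ∏ i ∈ Sᶜ, lam F χ (d i) =
      epsFactor F n χ ^ (Sᶜ.card : ℤ) * ∏ i ∈ Sᶜ, conj (lam F χ (a i)) := by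
    rw [zpow_natCast, ← Finset.prod_const, ← Finset.prod_mul_distrib]
    exact Finset.prod_congr rfl fun i hi =>
      lam_eq_epsFactor_mul_conj_lam hχ (haSc i (Finset.mem_compl.1 hi))
  have hcard : (k : ℤ) - S.card = -j + Sᶜ.card := by
    have := S.card_add_card_compl
    lia
  rw [hcard, zpow_add₀ (epsFactor_ne_zero hn hχ), ← Finset.prod_mul_prod_compl S, hprodS, hprodSc]
  ring

variable {a : ι → ℕ}

lemma prod_lam_mul_prod_conj_lam (hχ : χ ∈ Snq F n) :
    (∏ i ∈ S, lam F χ (a i)) * ∏ i ∈ Sᶜ, conj (lam F χ (a i)) =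
      (((Fintype.card F : ℝ) ^ (-((∑ i, a i : ℕ) : ℝ) / 2) : ℝ) : ℂ) *
        ∑ f ∈ Fintype.piFinset fun i => monicsOfDegree F (a i),
          χ (∏ i ∈ S, f i) * conj (χ (∏ i ∈ Sᶜ, f i)) := by
  have hprod (g : ι → ℂ) : (∏ i ∈ S, g i) * ∏ i ∈ Sᶜ, conj (g i) =
      ∏ i, if i ∈ S then g i else conj (g i) := by
    rw [← Finset.prod_mul_prod_compl S]
    congr 1
    · exact Finset.prod_congr rfl fun i hi => (if_pos hi).symm
    · exact Finset.prod_congr rfl fun i hi => (if_neg (Finset.mem_compl.1 hi)).symm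
  have hlam (i : ι) : (if i ∈ S then lam F χ (a i) else conj (lam F χ (a i))) =
      (((Fintype.card F : ℝ) ^ (-(a i : ℝ) / 2) : ℝ) : ℂ) *
        ∑ f ∈ monicsOfDegree F (a i), if i ∈ S then χ f else conj (χ f) := by
    rw [lam_eq_mul_sum]
    split_ifs
    · rfl
    · rw [map_mul, map_sum, Complex.conj_ofReal]
  simp only [hprod, hlam, map_prod_of_mem_Snq hχ, map_prod]
  rw [Finset.prod_mul_distrib, ← Complex.ofReal_prod,
    prod_rpow_neg_div_two _ (Nat.cast_pos.2 Fintype.card_pos), Finset.prod_univ_sum]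

theorem finsum_mem_Snq_prod_lam_mul_prod_conj_lam (haS : ∑ i ∈ S, a i ≤ m)
    (haSc : ∑ i ∈ Sᶜ, a i ≤ m) :
    ∑ᶠ χ ∈ Snq F (m + 1), (∏ i ∈ S, lam F χ (a i)) * ∏ i ∈ Sᶜ, conj (lam F χ (a i)) =
      ((Fintype.card F : ℂ) ^ (m + 1) - (Fintype.card F : ℂ) ^ m) *
        (((Fintype.card F : ℝ) ^ (-((∑ i, a i : ℕ) : ℝ) / 2) : ℝ) : ℂ) *
        {f : ι → F[X] | (∀ i, (f i).Monic ∧ (f i).natDegree = a i) ∧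
          ∃ x y : ℕ, X ^ x * ∏ i ∈ S, f i = X ^ y * ∏ i ∈ Sᶜ, f i}.ncard := by
  classical
  have hfin : (Snq F (m + 1)).Finite := finite_Snq
  set P := Fintype.piFinset fun i => monicsOfDegree F (a i)
  have horth {f : ι → F[X]} (hf : f ∈ P) :
      ∑ χ ∈ hfin.toFinset, χ (∏ i ∈ S, f i) * conj (χ (∏ i ∈ Sᶜ, f i)) =
        if (∏ i ∈ S, f i).reverse = (∏ i ∈ Sᶜ, f i).reverse then
          (Fintype.card F : ℂ) ^ (m + 1) - (Fintype.card F : ℂ) ^ m else 0 := by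
    obtain ⟨hS, hdegS⟩ := monic_natDegree_prod_of_mem_piFinset (s := S) hf
    obtain ⟨hSc, hdegSc⟩ := monic_natDegree_prod_of_mem_piFinset (s := Sᶜ) hf
    rw [← finsum_mem_eq_finite_toFinset_sum]
    exact finsum_mem_Snq_mul_conj hS hSc (hdegS.trans_le haS) (hdegSc.trans_le haSc)
  have hcount : {f : ι → F[X] | (∀ i, (f i).Monic ∧ (f i).natDegree = a i) ∧
      ∃ x y : ℕ, X ^ x * ∏ i ∈ S, f i = X ^ y * ∏ i ∈ Sᶜ, f i} =
        P.filter fun f => (∏ i ∈ S, f i).reverse = (∏ i ∈ Sᶜ, f i).reverse := by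
    ext f
    simp [P, mem_monicsOfDegree, reverse_eq_reverse_iff]
  rw [finsum_mem_congr rfl fun χ hχ => prod_lam_mul_prod_conj_lam hχ,
    finsum_mem_eq_finite_toFinset_sum _ hfin, ← Finset.mul_sum, Finset.sum_comm,
    Finset.sum_congr rfl fun f hf => horth hf, ← Finset.sum_filter, Finset.sum_const,
    hcount, Set.ncard_coe_finset, nsmul_eq_mul]
  ring

end Moments

/-- exact evaluation of the twisted moment of coefficients
`∑_{χ ∈ S_{n,q}} ε_χ^{-r̃} ∏_i λ_{d_i}(χ)` in the range where orthogonality applies. -/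
theorem statement12 (p : ℕ) (hp : p.Prime) (F : Type) [Field F] [Fintype F] (hchar : CharP F p)
    (n : ℕ) (hn : 1 ≤ n) (r rt : ℕ) (hk : 1 ≤ r + rt) (S : Finset (Fin (r + rt)))
    (ν : ℂ) (hν : ∀ χ ∈ Snq F n, epsFactor F n χ ^ ((r : ℤ) - (S.card : ℤ)) = ν)
    (d : Fin (r + rt) → ℕ) (hd : ∀ i, d i ≤ n - 1)
    (hdS : ∑ i ∈ S, d i ≤ n - 1) (hdSc : ∑ i ∈ Sᶜ, (n - 1 - d i) ≤ n - 1) :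
    (∑ᶠ χ ∈ Snq F n, epsFactor F n χ ^ (-(rt : ℤ)) * ∏ i, lam F χ (d i)) =
      ν * ((Fintype.card F : ℂ) ^ n - (Fintype.card F : ℂ) ^ (n - 1)) *
        ((((Fintype.card F : ℝ) ^
            (-(((∑ i ∈ S, d i) + ∑ i ∈ Sᶜ, (n - 1 - d i) : ℕ) : ℝ) / 2) : ℝ)) : ℂ) *
        (Set.ncard {f : Fin (r + rt) → Polynomial F |
            (∀ i, (f i).Monic) ∧ (∀ i ∈ S, (f i).natDegree = d i) ∧
            (∀ i ∉ S, (f i).natDegree = n - 1 - d i) ∧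
            ∃ a b : ℕ, Polynomial.X ^ a * ∏ i ∈ S, f i =
              Polynomial.X ^ b * ∏ i ∈ Sᶜ, f i} : ℂ) := by
  obtain ⟨m, rfl⟩ := Nat.exists_eq_add_of_le' hn
  simp only [Nat.add_sub_cancel] at hd hdS hdSc ⊢
  obtain ⟨a, haS, haSc⟩ : ∃ a, (∀ i ∈ S, a i = d i) ∧ ∀ i ∉ S, a i = m - d i :=
    ⟨S.piecewise d (m - d ·), fun _ => S.piecewise_eq_of_mem _ _,
      fun _ => S.piecewise_eq_of_notMem _ _⟩
  have hsumS : ∑ i ∈ S, a i = ∑ i ∈ S, d i := Finset.sum_congr rfl haS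
  have hsumSc : ∑ i ∈ Sᶜ, a i = ∑ i ∈ Sᶜ, (m - d i) :=
    Finset.sum_congr rfl fun i hi => haSc i (Finset.mem_compl.1 hi)
  have hset (f : Fin (r + rt) → F[X]) : (∀ i, (f i).Monic ∧ (f i).natDegree = a i) ↔
      (∀ i, (f i).Monic) ∧ (∀ i ∈ S, (f i).natDegree = d i) ∧
        ∀ i ∉ S, (f i).natDegree = m - d i := by
    refine ⟨by grind, fun ⟨hmonic, hS, hSc⟩ i => ⟨hmonic i, ?_⟩⟩
    by_cases hi : i ∈ S
    · rw [hS i hi, haS i hi]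
    · rw [hSc i hi, haSc i hi]
  have hdual (i) (hi : i ∉ S) : d i + a i + 1 = m + 1 := by grind
  rw [finsum_mem_congr rfl fun χ hχ => by rw [epsFactor_zpow_neg_mul_prod_lam m.succ_ne_zero hχ
    (Fintype.card_fin _) haS hdual, hν χ hχ], ← mul_finsum_mem,
    finsum_mem_Snq_prod_lam_mul_prod_conj_lam (hsumS.trans_le hdS) (hsumSc.trans_le hdSc),
    ← hsumS, ← hsumSc, Finset.sum_add_sum_compl]
  simp only [hset, and_assoc, mul_assoc]

end
end

section
/- Let q ≥ 2 be a prime power and let α_1, α_2, α_3, α_4 ∈ ℂ with Re α_1 > 1/2, Re α_2 > 1/2, Re α_3 < −1/2, and Re α_4 < −1/2. Then the series Σ q^{−(1/2+α_1)deg f_1 − (1/2+α_2)deg f_2 − (1/2−α_3)deg f_3 − (1/2−α_4)deg f_4}, taken over all quadruples (f_1, f_2, f_3, f_4) of monic polynomials in F_q[T] such that T^a f_1 f_2 = T^b f_3 f_4 for some natural numbers a, b, converges absolutely, and its sum equals [ (1 − q^{−1−α_1−α_2+α_3+α_4}) / (1 − q^{−2−α_1−α_2+α_3+α_4}) ] ·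 [ (1−q^{−1/2−α_1})(1−q^{−1/2−α_2})(1−q^{−1/2+α_3})(1−q^{−1/2+α_4}) ]^{−1} · ∏_{i ∈ {1,2}, j ∈ {3,4}} (1 − q^{−1−α_i+α_j}) / (1 − q^{−α_i+α_j}). -/
/-!
Write each monic `fᵢ` as `T ^ nᵢ * gᵢ` with `gᵢ` prime to `T`. The condition `f₁ f₂ / f₃ f₄ ∈ T^ℤ`
becomes `g₁ g₂ = g₃ g₄`, while the exponents `nᵢ` are free and contribute four geometric series.

In a monoid with unique factorization, the solutions of `g₁ g₂ = g₃ g₄` are the quadruples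
`(d a, e b, d b, e a)` with `a`, `b` coprime. A sum of completely multiplicative functions over them
is thus a product of two sums over the monoid and one over coprime pairs. The latter is a quotient
of sums over the monoid, because every pair is uniquely `(d a, d b)` with `a`, `b` coprime. For the
monic polynomials prime to `T`, the sums over the monoid are `∑ u ^ deg g = (1 - u) / (1 - q u)`.
-/

open Polynomial

noncomputable section

/-- The set of quadruples of monic polynomials with `f₁ f₂ / f₃ f₄ ∈ T^ℤ`,
i.e. `T^a f₁ f₂ = T^b f₃ f₄` for some naturals `a, b`. -/
def QuadSet (F : Type) [Field F] : Set (Fin 4 → Polynomial F) :=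
  {f | (∀ i, (f i).Monic) ∧
    ∃ a b : ℕ, Polynomial.X ^ a * (f 0 * f 1) = Polynomial.X ^ b * (f 2 * f 3)}

/-- The summand `q^{-(1/2+α₁)deg f₁ - (1/2+α₂)deg f₂ - (1/2-α₃)deg f₃ - (1/2-α₄)deg f₄}`. -/
def quadTerm (F : Type) [Field F] [Fintype F] (α : Fin 4 → ℂ)
    (f : Fin 4 → Polynomial F) : ℂ :=
  (Fintype.card F : ℂ) ^
    (-(1 / 2 + α 0) * ((f 0).natDegree : ℂ) - (1 / 2 + α 1) * ((f 1).natDegree : ℂ)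
      - (1 / 2 - α 2) * ((f 2).natDegree : ℂ) - (1 / 2 - α 3) * ((f 3).natDegree : ℂ))

section InfiniteSums

variable {𝕜 : Type*} [RCLike 𝕜]

lemma hasSum_mul_prod {ι κ : Type*} {f : ι → 𝕜} {g : κ → 𝕜} {a b : 𝕜}
    (hf : HasSum f a) (hg : HasSum g b) :
    HasSum (fun p : ι × κ => f p.1 * g p.2) (a * b) :=
  hf.mul hg (summable_mul_of_summable_norm hf.summable.norm hg.summable.norm)

lemma hasSum_prod_pi_fin {n : ℕ} {κ : Fin n → Type*} {f : ∀ i, κ i → 𝕜} {a : Fin n → 𝕜}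
    (hf : ∀ i, HasSum (f i) (a i)) :
    HasSum (fun k : ∀ i, κ i => ∏ i, f i (k i)) (∏ i, a i) := by
  induction n with
  | zero => simp [hasSum_unique]
  | succ n ih =>
    have hcons := hasSum_mul_prod (hf 0) (ih fun i => hf i.succ)
    rw [← (Fin.consEquiv κ).hasSum_iff, Fin.prod_univ_succ]
    simpa only [Function.comp_def, Fin.consEquiv_apply, Fin.prod_univ_succ, Fin.cons_zero,
      Fin.cons_succ] using hcons

end InfiniteSums

lemma norm_lt_one_of_norm_natCast_mul_lt_one {𝕜 : Type*} [RCLike 𝕜] {n : ℕ} (hn : 0 < n) {u : 𝕜}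
    (hu : ‖(n : 𝕜) * u‖ < 1) : ‖u‖ < 1 := by
  refine lt_of_le_of_lt ?_ hu
  rw [norm_mul, RCLike.norm_natCast]
  exact le_mul_of_one_le_left (norm_nonneg u) (mod_cast hn)

section CoprimePairs

/-- Pairs of relatively prime elements of a commutative monoid. -/
abbrev CoprimePair (M : Type*) [CommMonoid M] := {p : M × M // IsRelPrime p.1 p.2}

/-- The quadruples with `f₀ f₁ = f₂ f₃`: the diagonal of a fourth moment. -/
def equalProducts (M : Type*) [Mul M] : Set (Fin 4 → M) :=
  {f | f 0 * f 1 = f 2 * f 3}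

/-- A monoid in which any two elements become relatively prime on removing a common factor. This
replaces `GCDMonoid`, which requires a zero element. -/
class HasReducedPairs (M : Type*) [CommMonoid M] : Prop where
  exists_reduced_pair : ∀ f g : M, ∃ d a b, f = d * a ∧ g = d * b ∧ IsRelPrime a b

variable {M : Type*} [CommMonoid M]

lemma mul_coprimePair_mem_equalProducts (x : (M × M) × CoprimePair M) :
    ![x.1.1 * x.2.1.1, x.1.2 * x.2.1.2, x.1.1 * x.2.1.2, x.1.2 * x.2.1.1] ∈ equalProducts M := by
  change x.1.1 * x.2.1.1 * (x.1.2 * x.2.1.2) = x.1.1 * x.2.1.2 * (x.1.2 * x.2.1.1)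
  rw [mul_mul_mul_comm, mul_comm x.2.1.1, mul_mul_mul_comm]

variable [IsCancelMul M] [Subsingleton Mˣ]

lemma dvd_antisymm_of_isCancelMul {a b : M} (hab : a ∣ b) (hba : b ∣ a) : a = b := by
  obtain ⟨c, rfl⟩ := hab
  obtain ⟨d, hd⟩ := hba
  have hcd : c * d = 1 := mul_left_cancel (a := a) (by rw [← mul_assoc, ← hd, mul_one])
  rw [eq_one_of_mul_right hcd, mul_one]

variable [DecompositionMonoid M]

lemma eq_and_eq_of_mul_eq_mul_of_isRelPrime {a b a' b' : M} (h : IsRelPrime a b)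
    (h' : IsRelPrime a' b') (heq : a * b' = a' * b) : a = a' ∧ b = b' := by
  have ha : a = a' := dvd_antisymm_of_isCancelMul
    (h.dvd_of_dvd_mul_right ⟨b', heq.symm⟩) (h'.dvd_of_dvd_mul_right ⟨b, heq⟩)
  subst ha
  exact ⟨rfl, (mul_left_cancel heq).symm⟩

lemma eq_and_eq_of_mul_pair_eq {d d' : M} {p p' : CoprimePair M}
    (h₁ : d * p.1.1 = d' * p'.1.1) (h₂ : d * p.1.2 = d' * p'.1.2) : d = d' ∧ p = p' := by
  have hcross : p.1.1 * p'.1.2 = p'.1.1 * p.1.2 := mul_left_cancel (a := d * d') <| by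
    calc d * d' * (p.1.1 * p'.1.2) = d * p.1.1 * (d' * p'.1.2) := mul_mul_mul_comm ..
      _ = d' * p'.1.1 * (d * p.1.2) := by rw [h₁, h₂]
      _ = d * d' * (p'.1.1 * p.1.2) := by rw [mul_mul_mul_comm, mul_comm d']
  have hp : p = p' :=
    Subtype.ext (Prod.ext_iff.2 (eq_and_eq_of_mul_eq_mul_of_isRelPrime p.2 p'.2 hcross))
  subst hp
  exact ⟨mul_right_cancel h₁, rfl⟩

variable [HasReducedPairs M]

lemma bijective_mul_coprimePair :
    Function.Bijective fun x : M × CoprimePair M => (x.1 * x.2.1.1, x.1 * x.2.1.2) := by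
  constructor
  · intro x y h
    obtain ⟨hd, hp⟩ := eq_and_eq_of_mul_pair_eq (congrArg Prod.fst h) (congrArg Prod.snd h)
    exact Prod.ext hd hp
  · rintro ⟨f, g⟩
    obtain ⟨d, a, b, rfl, rfl, hab⟩ := HasReducedPairs.exists_reduced_pair f g
    exact ⟨(d, ⟨(a, b), hab⟩), rfl⟩

lemma bijective_mul_coprimePair_equalProducts :
    Function.Bijective fun x : (M × M) × CoprimePair M =>
      (⟨_, mul_coprimePair_mem_equalProducts x⟩ : equalProducts M) := by
  constructor
  · rintro ⟨⟨d, e⟩, p⟩ ⟨⟨d', e'⟩, p'⟩ h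
    have hval := congrFun (congrArg Subtype.val h)
    obtain ⟨rfl, rfl⟩ := eq_and_eq_of_mul_pair_eq (hval 0) (hval 2)
    obtain rfl : e = e' := mul_right_cancel (hval 1)
    rfl
  · rintro ⟨f, hf : f 0 * f 1 = f 2 * f 3⟩
    obtain ⟨d, a, b, h0, h2, hab⟩ := HasReducedPairs.exists_reduced_pair (f 0) (f 2)
    have hred : a * f 1 = b * f 3 := mul_left_cancel (a := d) <| by
      rw [← mul_assoc, ← mul_assoc, ← h0, ← h2, hf]
    obtain ⟨e, h1⟩ : b ∣ f 1 := hab.symm.dvd_of_dvd_mul_left ⟨_, hred⟩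
    have h3 : f 3 = a * e := mul_left_cancel (a := b) <| by rw [← hred, h1, mul_left_comm]
    refine ⟨((d, e), ⟨(a, b), hab⟩), Subtype.ext (funext fun i => ?_)⟩
    fin_cases i
    exacts [h0.symm, (mul_comm e b).trans h1.symm, h2.symm, (mul_comm e a).trans h3.symm]

variable {𝕜 : Type*} [RCLike 𝕜]

lemma hasSum_coprimePair {φ ψ : M →* 𝕜} {A B C : 𝕜} (hφ : HasSum φ A) (hψ : HasSum ψ B)
    (hφψ : HasSum ⇑(φ * ψ) C) (hC : C ≠ 0) :
    HasSum (fun p : CoprimePair M => φ p.1.1 * ψ p.1.2) (A * B / C) := by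
  have hpairs := hasSum_mul_prod hφ hψ
  have hcoprime : Summable fun p : CoprimePair M => φ p.1.1 * ψ p.1.2 :=
    hpairs.summable.comp_injective Subtype.val_injective
  have hscaled : HasSum (fun x : M × CoprimePair M =>
      (φ * ψ) x.1 * (φ x.2.1.1 * ψ x.2.1.2)) (A * B) := by
    rw [← (Equiv.ofBijective _ bijective_mul_coprimePair).hasSum_iff] at hpairs
    convert hpairs using 2 with x
    simp [mul_mul_mul_comm]
  have hprod := hasSum_mul_prod hφψ hcoprime.hasSum
  rw [hscaled.unique hprod, mul_div_cancel_left₀ _ hC]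
  exact hcoprime.hasSum

lemma hasSum_equalProducts {φ : Fin 4 → M →* 𝕜} {A₀₂ A₀₃ A₁₂ A₁₃ C : 𝕜}
    (h₀₂ : HasSum ⇑(φ 0 * φ 2) A₀₂) (h₀₃ : HasSum ⇑(φ 0 * φ 3) A₀₃)
    (h₁₂ : HasSum ⇑(φ 1 * φ 2) A₁₂) (h₁₃ : HasSum ⇑(φ 1 * φ 3) A₁₃)
    (h : HasSum ⇑(φ 0 * φ 3 * (φ 1 * φ 2)) C) (hC : C ≠ 0) :
    HasSum (fun f : equalProducts M => ∏ i, φ i (f.1 i)) (A₀₂ * A₁₃ * (A₀₃ * A₁₂ / C)) := by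
  rw [← (Equiv.ofBijective _ bijective_mul_coprimePair_equalProducts).hasSum_iff]
  convert hasSum_mul_prod (hasSum_mul_prod h₀₂ h₁₃) (hasSum_coprimePair h₀₃ h₁₂ h hC) using 2 with x
  simp only [Fin.prod_univ_four, Equiv.coe_ofBijective, Function.comp_apply, Matrix.cons_val,
    map_mul, MonoidHom.mul_apply]
  ring

end CoprimePairs

section MonicPolynomials

variable {F : Type*} [Field F]

/-- The multiplicative monoid of monic polynomials coprime to `P`. -/
def monicCoprimeTo (P : F[X]) : Submonoid F[X] where
  carrier := {f | f.Monic ∧ IsCoprime P f}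
  one_mem' := ⟨monic_one, isCoprime_one_right⟩
  mul_mem' hf hg := ⟨hf.1.mul hg.1, hf.2.mul_right hg.2⟩

variable {P : F[X]}

lemma mem_monicCoprimeTo_of_mul {f g : F[X]} (hf : f.Monic) (hfg : f * g ∈ monicCoprimeTo P) :
    f ∈ monicCoprimeTo P ∧ g ∈ monicCoprimeTo P :=
  ⟨⟨hf, hfg.2.of_mul_right_left⟩, ⟨hf.of_mul_monic_left hfg.1, hfg.2.of_mul_right_right⟩⟩

lemma monicCoprimeTo_coe_dvd_coe {f g : monicCoprimeTo P} : (f : F[X]) ∣ g ↔ f ∣ g := by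
  refine ⟨?_, fun ⟨c, hc⟩ => ⟨c, congrArg Subtype.val hc⟩⟩
  rintro ⟨c, hc⟩
  exact ⟨⟨c, (mem_monicCoprimeTo_of_mul f.2.1 (hc ▸ g.2)).2⟩, Subtype.ext hc⟩

lemma exists_monic_mul_eq_and_isCoprime {f : F[X]} (g : F[X]) (hf : f ≠ 0) :
    ∃ d a b : F[X], d.Monic ∧ f = d * a ∧ g = d * b ∧ IsCoprime a b := by
  classical
  obtain ⟨a, b, ha, hb, hab⟩ := extract_gcd f g
  refine ⟨gcd f g, a, b, ?_, ha, hb, (gcd_isUnit_iff_isRelPrime.1 hab).isCoprime⟩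
  rw [← normalize_gcd]
  exact monic_normalize fun h => hf ((gcd_eq_zero_iff f g).1 h).1

lemma monicCoprimeTo_exists_mul_eq_and_isCoprime (f g : monicCoprimeTo P) :
    ∃ d a b : monicCoprimeTo P, f = d * a ∧ g = d * b ∧ IsCoprime (a : F[X]) b := by
  obtain ⟨d, a, b, hd, hf, hg, hab⟩ := exists_monic_mul_eq_and_isCoprime (g : F[X]) f.2.1.ne_zero
  obtain ⟨hdP, haP⟩ := mem_monicCoprimeTo_of_mul hd (hf ▸ f.2)
  obtain ⟨-, hbP⟩ := mem_monicCoprimeTo_of_mul hd (hg ▸ g.2)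
  exact ⟨⟨d, hdP⟩, ⟨a, haP⟩, ⟨b, hbP⟩, Subtype.ext hf, Subtype.ext hg, hab⟩

instance : IsCancelMul (monicCoprimeTo P) :=
  { mul_left_cancel := fun f _ _ h =>
      Subtype.ext (mul_left_cancel₀ f.2.1.ne_zero (congrArg Subtype.val h))
    mul_right_cancel := fun f _ _ h =>
      Subtype.ext (mul_right_cancel₀ f.2.1.ne_zero (congrArg Subtype.val h)) }

lemma monicCoprimeTo_eq_one_of_isUnit_coe {f : monicCoprimeTo P} (hf : IsUnit (f : F[X])) :
    f = 1 :=
  Subtype.ext (f.2.1.eq_one_of_isUnit hf)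

instance : Subsingleton (monicCoprimeTo P)ˣ :=
  subsingleton_of_forall_eq 1 fun u =>
    Units.ext (monicCoprimeTo_eq_one_of_isUnit_coe (u.isUnit.map (monicCoprimeTo P).subtype))

instance : HasReducedPairs (monicCoprimeTo P) where
  exists_reduced_pair f g := by
    obtain ⟨d, a, b, hf, hg, hab⟩ := monicCoprimeTo_exists_mul_eq_and_isCoprime f g
    refine ⟨d, a, b, hf, hg, fun c hca hcb => ?_⟩
    rw [monicCoprimeTo_eq_one_of_isUnit_coe (hab.isUnit_of_dvd'
      (monicCoprimeTo_coe_dvd_coe.2 hca) (monicCoprimeTo_coe_dvd_coe.2 hcb))]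
    exact isUnit_one

instance : DecompositionMonoid (monicCoprimeTo P) where
  primal k f g hk := by
    obtain ⟨d, a, b, rfl, rfl, hab⟩ := monicCoprimeTo_exists_mul_eq_and_isCoprime k f
    have hdvd : a ∣ b * g := by
      obtain ⟨c, hc⟩ := hk
      exact ⟨c, mul_left_cancel (a := d) (by simpa only [mul_assoc] using hc)⟩
    refine ⟨d, a, dvd_mul_right d b, monicCoprimeTo_coe_dvd_coe.1 ?_, rfl⟩
    exact hab.dvd_of_dvd_mul_left (monicCoprimeTo_coe_dvd_coe.2 hdvd)

lemma le_of_pow_mul_eq_pow_mul_of_isCoprime {R : Type*} [CommSemiring R] [IsCancelMulZero R]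
    {p f g : R} (hp0 : p ≠ 0) (hp : ¬IsUnit p) (hg : IsCoprime p g) {m n : ℕ}
    (h : p ^ m * f = p ^ n * g) : m ≤ n :=
  (pow_dvd_pow_iff hp0 hp).1 (hg.pow_left.dvd_of_dvd_mul_right ⟨f, h.symm⟩)

lemma monicCoprimeTo_eq_of_pow_mul_eq_pow_mul (hP : Irreducible P) {m n : ℕ}
    {f g : monicCoprimeTo P} (h : P ^ m * (f : F[X]) = P ^ n * g) : m = n ∧ f = g := by
  have hmn : m = n := le_antisymm
    (le_of_pow_mul_eq_pow_mul_of_isCoprime hP.ne_zero hP.not_isUnit g.2.2 h)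
    (le_of_pow_mul_eq_pow_mul_of_isCoprime hP.ne_zero hP.not_isUnit f.2.2 h.symm)
  subst hmn
  exact ⟨rfl, Subtype.ext (mul_left_cancel₀ (pow_ne_zero m hP.ne_zero) h)⟩

lemma exists_monicCoprimeTo_eq_pow_mul (hP : P.Monic) (hirr : Irreducible P) {f : F[X]}
    (hf : f.Monic) : ∃ (n : ℕ) (g : monicCoprimeTo P), f = P ^ n * g := by
  obtain ⟨n, g, hg, rfl⟩ := WfDvdMonoid.max_power_factor hf.ne_zero hirr
  exact ⟨n, ⟨g, (hP.pow n).of_mul_monic_left hf, hirr.coprime_iff_not_dvd.2 hg⟩, rfl⟩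

lemma bijective_pow_mul_monicCoprimeTo (hP : P.Monic) (hirr : Irreducible P) :
    Function.Bijective fun x : ℕ × monicCoprimeTo P =>
      (⟨P ^ x.1 * x.2, (hP.pow x.1).mul x.2.2.1⟩ : {f : F[X] // f.Monic}) := by
  constructor
  · intro x y h
    exact Prod.ext_iff.2 (monicCoprimeTo_eq_of_pow_mul_eq_pow_mul hirr (congrArg Subtype.val h))
  · rintro ⟨f, hf⟩
    obtain ⟨n, g, rfl⟩ := exists_monicCoprimeTo_eq_pow_mul hP hirr hf
    exact ⟨(n, g), rfl⟩

lemma natDegree_pow_mul_monicCoprimeTo (hP : P.Monic) (n : ℕ) (g : monicCoprimeTo P) :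
    (P ^ n * (g : F[X])).natDegree = n * P.natDegree + (g : F[X]).natDegree := by
  rw [(hP.pow n).natDegree_mul g.2.1, hP.natDegree_pow]

end MonicPolynomials

section DegreeSums

variable {F : Type*} [Field F]

/-- The completely multiplicative function `f ↦ u ^ deg f`. -/
def powNatDegree {R : Type*} [CommMonoid R] (P : F[X]) (u : R) : monicCoprimeTo P →* R where
  toFun f := u ^ (f : F[X]).natDegree
  map_one' := by simp
  map_mul' f g := by simp [f.2.1.natDegree_mul g.2.1, pow_add]

lemma powNatDegree_mul {R : Type*} [CommMonoid R] (P : F[X]) (u v : R) :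
    powNatDegree P (u * v) = powNatDegree P u * powNatDegree P v :=
  MonoidHom.ext fun _ => mul_pow _ _ _

/-- Monic polynomials of degree `n` correspond to their `n` lower coefficients. -/
def monicNatDegreeEquiv (F : Type*) [Field F] (n : ℕ) :
    {f : {f : F[X] // f.Monic} // f.1.natDegree = n} ≃ (Fin n → F) :=
  (Equiv.subtypeSubtypeEquivSubtypeInter (fun f : F[X] => f.Monic) fun f => f.natDegree = n).trans
    ((monicEquivDegreeLT n).trans (degreeLTEquiv F n).toEquiv)

variable [Fintype F] {𝕜 : Type*} [RCLike 𝕜]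

lemma hasSum_pow_natDegree_monic_natDegree_eq (u : 𝕜) (n : ℕ) :
    HasSum (fun f : {f : {f : F[X] // f.Monic} // f.1.natDegree = n} => u ^ f.1.1.natDegree)
      ((Fintype.card F * u) ^ n) := by
  have hdeg (c : Fin n → F) : ((monicNatDegreeEquiv F n).symm c).1.1.natDegree = n :=
    ((monicNatDegreeEquiv F n).symm c).2
  rw [← (monicNatDegreeEquiv F n).symm.hasSum_iff]
  simpa [Function.comp_def, hdeg, mul_pow] using hasSum_fintype fun _ : Fin n → F => u ^ n

lemma hasSum_pow_natDegree_monic {u : 𝕜} (hu : ‖(Fintype.card F : 𝕜) * u‖ < 1) :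
    HasSum (fun f : {f : F[X] // f.Monic} => u ^ f.1.natDegree)
      (1 - Fintype.card F * u)⁻¹ := by
  rw [← (Equiv.sigmaFiberEquiv fun f : {f : F[X] // f.Monic} => f.1.natDegree).hasSum_iff]
  refine (hasSum_geometric_of_norm_lt_one hu).sigma_of_hasSum
    (hasSum_pow_natDegree_monic_natDegree_eq u) (.of_norm ?_)
  have hnorm := hasSum_pow_natDegree_monic_natDegree_eq (F := F) ‖u‖
  simp only [Function.comp_apply, norm_pow, Equiv.sigmaFiberEquiv_apply]
  refine (summable_sigma_of_nonneg fun _ => by positivity).2 ⟨fun n => (hnorm n).summable, ?_⟩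
  simp only [(hnorm _).tsum_eq]
  exact summable_geometric_of_lt_one (by positivity) (by simpa using hu)

lemma hasSum_powNatDegree {P : F[X]} (hP : P.Monic) (hirr : Irreducible P) {u : 𝕜}
    (hu : ‖(Fintype.card F : 𝕜) * u‖ < 1) :
    HasSum (powNatDegree P u) ((1 - u ^ P.natDegree) / (1 - Fintype.card F * u)) := by
  have hmonic := hasSum_pow_natDegree_monic hu
  have hcoprime : Summable (powNatDegree P u) := hmonic.summable.comp_injective
    (i := fun f : monicCoprimeTo P => (⟨f, f.2.1⟩ : {f : F[X] // f.Monic}))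
    fun f g h => Subtype.ext (Subtype.mk.inj h)
  have hlt : ‖u ^ P.natDegree‖ < 1 := by
    rw [norm_pow]
    exact pow_lt_one₀ (norm_nonneg u) (norm_lt_one_of_norm_natCast_mul_lt_one Fintype.card_pos hu)
      hirr.natDegree_pos.ne'
  have hfactored : HasSum (fun x : ℕ × monicCoprimeTo P =>
      (u ^ P.natDegree) ^ x.1 * powNatDegree P u x.2) (1 - Fintype.card F * u)⁻¹ := by
    rw [← (Equiv.ofBijective _ (bijective_pow_mul_monicCoprimeTo hP hirr)).hasSum_iff] at hmonic
    convert hmonic using 2 with x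
    simp [powNatDegree, natDegree_pow_mul_monicCoprimeTo hP, pow_add, pow_mul']
  have hgeom := hasSum_geometric_of_norm_lt_one hlt
  have hprod := hasSum_mul_prod hgeom hcoprime.hasSum
  rw [div_eq_mul_inv, hfactored.unique hprod,
    mul_inv_cancel_left₀ (isUnit_one_sub_of_norm_lt_one hlt).ne_zero]
  exact hcoprime.hasSum

end DegreeSums

section DiagonalQuadruples

variable {F : Type} [Field F]

lemma X_pow_mul_mem_quadSet_iff (n : Fin 4 → ℕ) (g : Fin 4 → monicCoprimeTo (X : F[X])) :
    (fun i => X ^ n i * (g i : F[X])) ∈ QuadSet F ↔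
      g ∈ equalProducts (monicCoprimeTo (X : F[X])) := by
  have hmonic (i : Fin 4) : (X ^ n i * (g i : F[X])).Monic := (monic_X_pow _).mul (g i).2.1
  have hsplit (a : ℕ) (i j : Fin 4) : X ^ a * (X ^ n i * (g i : F[X]) * (X ^ n j * (g j : F[X]))) =
      X ^ (a + n i + n j) * ((g i * g j : monicCoprimeTo (X : F[X])) : F[X]) := by
    push_cast
    ring
  constructor
  · rintro ⟨-, a, b, h⟩
    exact (monicCoprimeTo_eq_of_pow_mul_eq_pow_mul irreducible_X
      ((hsplit a 0 1).symm.trans (h.trans (hsplit b 2 3)))).2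
  · intro (h : g 0 * g 1 = g 2 * g 3)
    refine ⟨hmonic, n 2 + n 3, n 0 + n 1, ?_⟩
    rw [hsplit, hsplit, h]
    ring

lemma bijective_X_pow_mul_quadSet :
    Function.Bijective fun x : (Fin 4 → ℕ) × equalProducts (monicCoprimeTo (X : F[X])) =>
      (⟨_, (X_pow_mul_mem_quadSet_iff x.1 x.2.1).2 x.2.2⟩ : QuadSet F) := by
  constructor
  · rintro ⟨n, g⟩ ⟨m, h⟩ heq
    have hval (i : Fin 4) := monicCoprimeTo_eq_of_pow_mul_eq_pow_mul irreducible_X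
      (congrFun (congrArg Subtype.val heq) i)
    exact Prod.ext (funext fun i => (hval i).1) (Subtype.ext (funext fun i => (hval i).2))
  · rintro ⟨f, hf⟩
    choose n g hfg using fun i => exists_monicCoprimeTo_eq_pow_mul monic_X irreducible_X (hf.1 i)
    obtain rfl : f = fun i => X ^ n i * (g i : F[X]) := funext hfg
    exact ⟨(n, ⟨g, (X_pow_mul_mem_quadSet_iff n g).1 hf⟩), rfl⟩

variable [Fintype F]

lemma hasSum_quadSet {𝕜 : Type*} [RCLike 𝕜] {x : Fin 4 → 𝕜} (hx : ∀ i, ‖x i‖ < 1)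
    (h₀₂ : ‖(Fintype.card F : 𝕜) * (x 0 * x 2)‖ < 1)
    (h₀₃ : ‖(Fintype.card F : 𝕜) * (x 0 * x 3)‖ < 1)
    (h₁₂ : ‖(Fintype.card F : 𝕜) * (x 1 * x 2)‖ < 1)
    (h₁₃ : ‖(Fintype.card F : 𝕜) * (x 1 * x 3)‖ < 1) :
    HasSum (fun f : QuadSet F => ∏ i, x i ^ (f.1 i).natDegree)
      ((1 - Fintype.card F * (x 0 * x 3 * (x 1 * x 2))) / (1 - x 0 * x 3 * (x 1 * x 2)) *
        (∏ i, (1 - x i))⁻¹ *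
        ((1 - x 0 * x 2) / (1 - Fintype.card F * (x 0 * x 2)) *
          ((1 - x 0 * x 3) / (1 - Fintype.card F * (x 0 * x 3))) *
          ((1 - x 1 * x 2) / (1 - Fintype.card F * (x 1 * x 2))) *
          ((1 - x 1 * x 3) / (1 - Fintype.card F * (x 1 * x 3))))) := by
  have hL {u : 𝕜} (hu : ‖(Fintype.card F : 𝕜) * u‖ < 1) :
      HasSum (powNatDegree (X : F[X]) u) ((1 - u) / (1 - Fintype.card F * u)) := by
    simpa using hasSum_powNatDegree monic_X irreducible_X hu
  have h : ‖(Fintype.card F : 𝕜) * (x 0 * x 3 * (x 1 * x 2))‖ < 1 := by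
    rw [← mul_assoc, norm_mul]
    exact mul_lt_one_of_nonneg_of_lt_one_left (norm_nonneg _) h₀₃
      (norm_lt_one_of_norm_natCast_mul_lt_one Fintype.card_pos h₁₂).le
  have hne := div_ne_zero (isUnit_one_sub_of_norm_lt_one
    (norm_lt_one_of_norm_natCast_mul_lt_one Fintype.card_pos h)).ne_zero
    (isUnit_one_sub_of_norm_lt_one h).ne_zero
  have hdiag := hasSum_equalProducts (φ := fun i => powNatDegree (X : F[X]) (x i))
    (by simpa only [powNatDegree_mul] using hL h₀₂) (by simpa only [powNatDegree_mul] using hL h₀₃)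
    (by simpa only [powNatDegree_mul] using hL h₁₂) (by simpa only [powNatDegree_mul] using hL h₁₃)
    (by simpa only [powNatDegree_mul] using hL h) hne
  have hgeom (i : Fin 4) := hasSum_geometric_of_norm_lt_one (hx i)
  rw [← (Equiv.ofBijective _ bijective_X_pow_mul_quadSet).hasSum_iff]
  have hprod := hasSum_mul_prod (hasSum_prod_pi_fin hgeom) hdiag
  convert hprod using 1
  · ext y
    simp [powNatDegree, natDegree_pow_mul_monicCoprimeTo monic_X, pow_add, Finset.prod_mul_distrib]
  · rw [div_div_eq_mul_div, Finset.prod_inv_distrib]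
    ring

end DiagonalQuadruples

section ComplexPowers

variable {c : ℂ}

lemma mul_cpow_eq_cpow_one_add (hc : c ≠ 0) (s : ℂ) : c * c ^ s = c ^ (1 + s) := by
  rw [Complex.cpow_add _ _ hc, Complex.cpow_one]

lemma cpow_neg_half_sub_mul_cpow_neg_half_add (hc : c ≠ 0) (s t : ℂ) :
    c ^ (-(1 / 2) - s) * c ^ (-(1 / 2) + t) = c ^ (-1 - s + t) := by
  rw [← Complex.cpow_add _ _ hc]
  ring_nf

lemma mul_cpow_neg_one_sub_add (hc : c ≠ 0) (s t : ℂ) : c * c ^ (-1 - s + t) = c ^ (-s + t) := by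
  rw [mul_cpow_eq_cpow_one_add hc]
  ring_nf

lemma cpow_neg_one_sub_add_mul_cpow_neg_one_sub_add (hc : c ≠ 0) (s s' t t' : ℂ) :
    c ^ (-1 - s + t') * c ^ (-1 - s' + t) = c ^ (-2 - s - s' + t + t') := by
  rw [← Complex.cpow_add _ _ hc]
  ring_nf

lemma mul_cpow_neg_two_sub_sub_add_add (hc : c ≠ 0) (s s' t t' : ℂ) :
    c * c ^ (-2 - s - s' + t + t') = c ^ (-1 - s - s' + t + t') := by
  rw [mul_cpow_eq_cpow_one_add hc]
  ring_nf

lemma norm_natCast_cpow_lt_one {n : ℕ} (hn : 1 < n) {s : ℂ} (hs : s.re < 0) :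
    ‖(n : ℂ) ^ s‖ < 1 := by
  rw [Complex.norm_natCast_cpow_of_pos (zero_lt_one.trans hn)]
  exact Real.rpow_lt_one_of_one_lt_of_neg (mod_cast hn) hs

end ComplexPowers

section QuadTerm

variable {F : Type} [Field F] [Fintype F]

/-- The weights `q^{-1/2-α₀}`, `q^{-1/2-α₁}`, `q^{-1/2+α₂}`, `q^{-1/2+α₃}` with which the degrees of
the four polynomials enter `quadTerm`. -/
def quadWeight (F : Type*) [Fintype F] (α : Fin 4 → ℂ) (i : Fin 4) : ℂ :=
  (Fintype.card F : ℂ) ^ (![-(1 / 2) - α 0, -(1 / 2) - α 1, -(1 / 2) + α 2, -(1 / 2) + α 3] i)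

lemma quadTerm_eq_prod (α : Fin 4 → ℂ) (f : Fin 4 → F[X]) :
    quadTerm F α f = ∏ i, quadWeight F α i ^ (f i).natDegree := by
  have hq : (Fintype.card F : ℂ) ≠ 0 := Nat.cast_ne_zero.2 Fintype.card_ne_zero
  simp only [quadTerm, quadWeight, Fin.prod_univ_four, ← Complex.cpow_mul_nat,
    ← Complex.cpow_add _ _ hq, Matrix.cons_val]
  congr 1
  ring

end QuadTerm

theorem statement14_general (F : Type) [Field F] [Fintype F] (α : Fin 4 → ℂ)
    (h0 : -(1 / 2) < (α 0).re) (h1 : -(1 / 2) < (α 1).re)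
    (h2 : (α 2).re < 1 / 2) (h3 : (α 3).re < 1 / 2)
    (h02 : (α 2).re < (α 0).re) (h03 : (α 3).re < (α 0).re)
    (h12 : (α 2).re < (α 1).re) (h13 : (α 3).re < (α 1).re) :
    Summable (fun f : QuadSet F => ‖quadTerm F α (f : Fin 4 → Polynomial F)‖) ∧
    HasSum (fun f : QuadSet F => quadTerm F α (f : Fin 4 → Polynomial F))
      (((1 - (Fintype.card F : ℂ) ^ (-1 - α 0 - α 1 + α 2 + α 3)) /
          (1 - (Fintype.card F : ℂ) ^ (-2 - α 0 - α 1 + α 2 + α 3))) *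
        ((1 - (Fintype.card F : ℂ) ^ (-(1 / 2 : ℂ) - α 0)) *
          (1 - (Fintype.card F : ℂ) ^ (-(1 / 2 : ℂ) - α 1)) *
          (1 - (Fintype.card F : ℂ) ^ (-(1 / 2 : ℂ) + α 2)) *
          (1 - (Fintype.card F : ℂ) ^ (-(1 / 2 : ℂ) + α 3)))⁻¹ *
        (((1 - (Fintype.card F : ℂ) ^ (-1 - α 0 + α 2)) /
            (1 - (Fintype.card F : ℂ) ^ (-α 0 + α 2))) *
          ((1 - (Fintype.card F : ℂ) ^ (-1 - α 0 + α 3)) /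
            (1 - (Fintype.card F : ℂ) ^ (-α 0 + α 3))) *
          ((1 - (Fintype.card F : ℂ) ^ (-1 - α 1 + α 2)) /
            (1 - (Fintype.card F : ℂ) ^ (-α 1 + α 2))) *
          ((1 - (Fintype.card F : ℂ) ^ (-1 - α 1 + α 3)) /
            (1 - (Fintype.card F : ℂ) ^ (-α 1 + α 3))))) := by
  have hq : (Fintype.card F : ℂ) ≠ 0 := Nat.cast_ne_zero.2 Fintype.card_ne_zero
  have hpair := cpow_neg_half_sub_mul_cpow_neg_half_add hq
  have hlt {s t : ℂ} (h : t.re < s.re) :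
      ‖(Fintype.card F : ℂ) * (Fintype.card F ^ (-(1 / 2) - s) * Fintype.card F ^ (-(1 / 2) + t))‖
        < 1 := by
    rw [hpair, mul_cpow_neg_one_sub_add hq]
    exact norm_natCast_cpow_lt_one Fintype.one_lt_card (by simpa using h)
  have hweight (i : Fin 4) : ‖quadWeight F α i‖ < 1 := by
    refine norm_natCast_cpow_lt_one Fintype.one_lt_card ?_
    fin_cases i <;> norm_num <;> linarith
  have hsum := hasSum_quadSet (F := F) hweight (hlt h02) (hlt h03) (hlt h12) (hlt h13)
  simp only [← quadTerm_eq_prod] at hsum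
  refine ⟨hsum.summable.norm, ?_⟩
  simpa only [quadWeight, Matrix.cons_val, Fin.prod_univ_four, hpair,
    cpow_neg_one_sub_add_mul_cpow_neg_one_sub_add hq, mul_cpow_neg_one_sub_add hq,
    mul_cpow_neg_two_sub_sub_add_add hq] using hsum

/-- the diagonal sum of the fourth moment converges absolutely in the
region `Re α₁, Re α₂ > 1/2`, `Re α₃, Re α₄ < -1/2`, and is given by an explicit
rational function of the `q^{α_i}`. -/
theorem statement14 (F : Type) [Field F] [Fintype F] (α : Fin 4 → ℂ)
    (h1 : 1 / 2 < (α 0).re) (h2 : 1 / 2 < (α 1).re)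
    (h3 : (α 2).re < -(1 / 2)) (h4 : (α 3).re < -(1 / 2)) :
    Summable (fun f : QuadSet F => ‖quadTerm F α (f : Fin 4 → Polynomial F)‖) ∧
    HasSum (fun f : QuadSet F => quadTerm F α (f : Fin 4 → Polynomial F))
      (((1 - (Fintype.card F : ℂ) ^ (-1 - α 0 - α 1 + α 2 + α 3)) /
          (1 - (Fintype.card F : ℂ) ^ (-2 - α 0 - α 1 + α 2 + α 3))) *
        ((1 - (Fintype.card F : ℂ) ^ (-(1 / 2 : ℂ) - α 0)) *
          (1 - (Fintype.card F : ℂ) ^ (-(1 / 2 : ℂ) - α 1)) *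
          (1 - (Fintype.card F : ℂ) ^ (-(1 / 2 : ℂ) + α 2)) *
          (1 - (Fintype.card F : ℂ) ^ (-(1 / 2 : ℂ) + α 3)))⁻¹ *
        (((1 - (Fintype.card F : ℂ) ^ (-1 - α 0 + α 2)) /
            (1 - (Fintype.card F : ℂ) ^ (-α 0 + α 2))) *
          ((1 - (Fintype.card F : ℂ) ^ (-1 - α 0 + α 3)) /
            (1 - (Fintype.card F : ℂ) ^ (-α 0 + α 3))) *
          ((1 - (Fintype.card F : ℂ) ^ (-1 - α 1 + α 2)) /
            (1 - (Fintype.card F : ℂ) ^ (-α 1 + α 2))) *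
          ((1 - (Fintype.card F : ℂ) ^ (-1 - α 1 + α 3)) /
            (1 - (Fintype.card F : ℂ) ^ (-α 1 + α 3))))) :=
  statement14_general F α (by linarith) (by linarith) (by linarith) (by linarith) (by linarith)
    (by linarith) (by linarith) (by linarith)

end
end
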